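/- arXiv:2109.04944 — 5 statements merged into one kernel-verified Lean document; each statement's English description precedes it below -/
import Mathlib

section
/- For every ε > 0 there exist δ = δ(ε) > 0 and n₀ = n₀(ε), where 1/δ and n₀ are bounded by a polynomial in 1/ε (i.e., there is an absolute constant C > 0 with δ = ε^C / C and n₀ = C·ε^{-C}), such that the following holds. Let H be a 3-uniform hypergraph on n ≥ n₀ vertices which contains fewer than δ·n⁴ induced copies of D₂. Then there is a 3-uniform hypergraph H' on the same vertex set that is induced D₂-free and whose edge set differs from that of H in at most ε·n³ triples. -/
open Finset

/-- The number of induced copies of `D₂` (4 vertices spanning exactly 2 edges) in the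
3-uniform hypergraph with edge set `E`. -/
def inducedD2Count {V : Type} [Fintype V] [DecidableEq V] (E : Finset (Finset V)) : ℕ :=
  (((Finset.univ : Finset V).powersetCard 4).filter
    (fun S => (E.filter (fun e => e ⊆ S)).card = 2)).card

/-- A 3-uniform hypergraph is induced `D₂`-free if no 4 vertices span exactly 2 edges. -/
def InducedD2Free {V : Type} [Fintype V] [DecidableEq V] (E : Finset (Finset V)) : Prop :=
  ∀ S : Finset V, S.card = 4 → (E.filter (fun e => e ⊆ S)).card ≠ 2

/-!
In an induced `D₂`-free hypergraph the link of every vertex is a `P₄`-free graph, and a descent in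
its decomposition into components and co-components finds either a sparse link or a cut of the
vertices, defined by four of them, with no crossing edges, in the hypergraph or in its complement.
If `H` has few induced copies of `D₂`, then a random sample of polynomial size is `D₂`-free. Since
a cut is defined by four points of the sample, a Chernoff bound and a union bound over their
positions show that the cuts of the sample represent cuts of `H`; so `H` or its complement is
sparse or has a sparse cut. Deleting the crossing edges and recursing on both sides costs at most
`3ηpq(p + q)` for sides of sizes `p` and `q`, which telescopes because
`p³ + q³ + 3pq(p + q) = (p + q)³`.
-/

open scoped BigOperators

universe u

/-! ### Cuts of P₄-free graphs -/

section Cograph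

variable {S : Type*} {G : SimpleGraph S}

/-- `G` has no induced path on four vertices. -/
def P4Free (G : SimpleGraph S) : Prop :=
  ∀ a b c d, G.Adj a b → G.Adj b c → G.Adj c d → ¬ G.Adj a c → ¬ G.Adj b d → G.Adj a d

theorem P4Free.compl (hG : P4Free G) : P4Free Gᶜ := by
  intro a b c d hab hbc hcd hac hbd
  by_contra had
  have hac' : a ≠ c := by rintro rfl; exact had hcd
  have hbd' : b ≠ d := by rintro rfl; exact had hab
  have had' : a ≠ d := by rintro rfl; exact hac hcd.symm
  simp only [SimpleGraph.compl_adj, not_and, not_not] at *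
  exact hbc.2 (hG b d a c (hbd hbd') (had had').symm (hac hac') (fun h => hab.2 h.symm)
    (fun h => hcd.2 h.symm))

/-- The inner side of the cut of `G` defined by the vertices `x₀`, `x₁`, `y₀`. -/
def InnerSide (G : SimpleGraph S) (x₀ x₁ y₀ u : S) : Prop :=
  (G.Adj x₀ u ∨ G.Adj x₁ u) ∧ ¬ (G.Adj x₀ u ∧ G.Adj y₀ u)

/-- The outer side of the cut of `G` defined by the vertices `x₀`, `x₁`. -/
def OuterSide (G : SimpleGraph S) (x₀ x₁ u : S) : Prop :=
  ¬ (G.Adj x₀ u ∨ G.Adj x₁ u)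

open scoped Classical in
/-- A cut of `G` with at least `b` vertices inside, at least `a` outside and fewer than `a` on
neither side. It is described by three vertices so that the number of possible cuts of a random
sample is polynomial in the size of the sample. -/
structure IsCut [Fintype S] (G : SimpleGraph S) (a b : ℝ) (x₀ x₁ y₀ : S) : Prop where
  le_card_inner : b ≤ #{u | InnerSide G x₀ x₁ y₀ u}
  le_card_outer : a ≤ #{u | OuterSide G x₀ x₁ u}
  card_rest_lt : #{u | ¬ InnerSide G x₀ x₁ y₀ u ∧ ¬ OuterSide G x₀ x₁ u} < a
  not_adj : ∀ x y, InnerSide G x₀ x₁ y₀ x → OuterSide G x₀ x₁ y → ¬ G.Adj x y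
  adj_or_exists_adj : ∀ x x', InnerSide G x₀ x₁ y₀ x → InnerSide G x₀ x₁ y₀ x' → x ≠ x' →
    G.Adj x x' ∨ ∃ w, InnerSide G x₀ x₁ y₀ w ∧ G.Adj x w ∧ G.Adj x' w

variable [DecidableEq S] {W A C : Finset S}

/-- `A` is a part of `W` with no edge of `G` to the rest of `W`: a union of connected components
of the subgraph induced by `W`. -/
def SeparatedIn (G : SimpleGraph S) (W A : Finset S) : Prop :=
  A ⊆ W ∧ ∀ a ∈ A, ∀ b ∈ W \ A, ¬ G.Adj a b

/-- The subgraph of `G` induced by `W` is disconnected. -/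
def Splits (G : SimpleGraph S) (W : Finset S) : Prop :=
  ∃ A, SeparatedIn G W A ∧ A.Nonempty ∧ (W \ A).Nonempty

theorem SeparatedIn.refl (G : SimpleGraph S) (W : Finset S) : SeparatedIn G W W :=
  ⟨Subset.refl W, fun _ _ b hb => by simp at hb⟩

theorem SeparatedIn.sdiff (hA : SeparatedIn G W A) : SeparatedIn G W (W \ A) := by
  refine ⟨sdiff_subset, fun a ha b hb hab => ?_⟩
  rw [Finset.sdiff_sdiff_eq_self hA.1] at hb
  exact hA.2 b hb a ha hab.symm

theorem SeparatedIn.trans (hC : SeparatedIn G W C) (hA : SeparatedIn G C A) :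
    SeparatedIn G W A := by
  refine ⟨hA.1.trans hC.1, fun a ha b hb => ?_⟩
  by_cases hbC : b ∈ C
  · exact hA.2 a ha b (mem_sdiff.2 ⟨hbC, (mem_sdiff.1 hb).2⟩)
  · exact hC.2 a (hA.1 ha) b (mem_sdiff.2 ⟨(mem_sdiff.1 hb).1, hbC⟩)

theorem SeparatedIn.adj_of_compl {x y : S} (hA : SeparatedIn Gᶜ W A) (hx : x ∈ A)
    (hy : y ∈ W \ A) : G.Adj x y := by
  have hne : x ≠ y := ne_of_mem_of_not_mem hx (mem_sdiff.1 hy).2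
  simpa [hne] using hA.2 x hx y hy

theorem exists_component (G : SimpleGraph S) {w : S} (hw : w ∈ W) :
    ∃ C, SeparatedIn G W C ∧ w ∈ C ∧ ¬ Splits G C := by
  classical
  obtain ⟨C, hC, hmin⟩ := exists_min_image {C ∈ W.powerset | SeparatedIn G W C ∧ w ∈ C} card
    ⟨W, by simp [SeparatedIn.refl, hw]⟩
  simp only [mem_filter, mem_powerset] at hC hmin
  have not_smaller : ∀ A, SeparatedIn G C A → w ∈ A → ¬ (C \ A).Nonempty := by
    intro A hA hwA hne
    have hlt : #A < #C := card_lt_card ⟨hA.1, Finset.sdiff_nonempty.1 hne⟩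
    have hsep := hC.2.1.trans hA
    exact hlt.not_ge (hmin A ⟨hsep.1, hsep, hwA⟩)
  refine ⟨C, hC.2.1, hC.2.2, ?_⟩
  rintro ⟨A, hA, hA_ne, hCA_ne⟩
  by_cases hwA : w ∈ A
  · exact not_smaller A hA hwA hCA_ne
  · exact not_smaller (C \ A) hA.sdiff (mem_sdiff.2 ⟨hC.2.2, hwA⟩)
      (by rwa [Finset.sdiff_sdiff_eq_self hA.1])

theorem SeparatedIn.sdiff_nonempty (hW : Splits G W) (hC : SeparatedIn G W C)
    (hsplit : ¬ Splits G C) : (W \ C).Nonempty := by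
  rw [Finset.sdiff_nonempty]
  intro h
  exact hsplit (by rwa [hC.1.antisymm h])

theorem SeparatedIn.splits_insert {u : S} (hu : u ∉ W) (hA : SeparatedIn G W A)
    (hA_ne : A.Nonempty) (h : ∀ a ∈ A, ¬ G.Adj u a) : Splits G (insert u W) := by
  have huA : u ∉ A := fun huA => hu (hA.1 huA)
  refine ⟨A, ⟨hA.1.trans (subset_insert _ _), fun a ha b hb hab => ?_⟩, hA_ne,
    ⟨u, by simp [huA]⟩⟩
  obtain ⟨rfl | hbW, hbA⟩ := by simpa only [mem_sdiff, mem_insert] using hb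
  · exact h a ha hab.symm
  · exact hA.2 a ha b (mem_sdiff.2 ⟨hbW, hbA⟩) hab

/-- The only way to reconnect `W` through a new vertex `u` that is not adjacent to all of `W` is to
have a neighbour of `u` both inside and outside the component of a non-neighbour of `u`, and then
that component contains the first edge of an induced path of length three through `u`. -/
theorem P4Free.splits_insert (hG : P4Free G) (hW : Splits G W) {u : S} (hu : u ∉ W) :
    Splits G (insert u W) ∨ Splits Gᶜ (insert u W) := by
  classical
  by_cases hall : ∀ w ∈ W, G.Adj u w
  · obtain ⟨A, hA, ⟨a, ha⟩, -⟩ := hW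
    exact .inr ((SeparatedIn.refl Gᶜ W).splits_insert hu ⟨a, hA.1 ha⟩ (by simp_all))
  push Not at hall
  obtain ⟨w, hw, huw⟩ := hall
  left
  obtain ⟨C, hC, hwC, hCsplit⟩ := exists_component G hw
  by_cases hin : ∀ c ∈ C, ¬ G.Adj u c
  · exact hC.splits_insert hu ⟨w, hwC⟩ hin
  by_cases hout : ∀ d ∈ W \ C, ¬ G.Adj u d
  · exact hC.sdiff.splits_insert hu (hC.sdiff_nonempty hW hCsplit) hout
  push Not at hin hout
  obtain ⟨c, hc, huc⟩ := hin
  obtain ⟨d, hd, hud⟩ := hout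
  refine absurd ⟨{x ∈ C | G.Adj u x}, ⟨filter_subset _ _, fun x hx y hy hxy => ?_⟩,
    ⟨c, by simp [hc, huc]⟩, ⟨w, by simp [hwC, huw]⟩⟩ hCsplit
  simp only [mem_filter, mem_sdiff, not_and] at hx hy
  exact hC.2 y hy.1 d hd (hG y x u d hxy.symm hx.2.symm hud (fun h => hy.2 hy.1 h.symm)
    (hC.2 x hx.1 d hd))

/-- Seinsche's theorem. -/
theorem P4Free.splits_or_splits_compl (hG : P4Free G) (hW : 2 ≤ #W) :
    Splits G W ∨ Splits Gᶜ W := by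
  induction W using Finset.induction_on with
  | empty => simp at hW
  | insert u W hu ih =>
    obtain hW1 | hW2 := Nat.lt_or_ge #W 2
    · obtain ⟨w, rfl⟩ : ∃ w, W = {w} := card_eq_one.1 (by
        rw [card_insert_of_notMem hu] at hW; lia)
      by_cases huw : G.Adj u w
      · exact .inr ((SeparatedIn.refl _ _).splits_insert hu (by simp) (by simp [huw]))
      · exact .inl ((SeparatedIn.refl _ _).splits_insert hu (by simp) (by simpa using huw))
    · rcases ih hW2 with h | h
      · exact hG.splits_insert h hu
      · simpa only [compl_compl, or_comm] using hG.compl.splits_insert h hu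

open scoped Classical in
/-- The vertices of `G` that are adjacent to every vertex of `W`. -/
noncomputable def completeTo [Fintype S] (G : SimpleGraph S) (W : Finset S) : Finset S :=
  {u | ∀ w ∈ W, G.Adj u w}

variable [Fintype S]

theorem mem_completeTo {u : S} : u ∈ completeTo G W ↔ ∀ w ∈ W, G.Adj u w := by simp [completeTo]

theorem not_adj_of_mem_completeTo_compl {x y : S} (hy : y ∈ completeTo Gᶜ W) (hx : x ∈ W) :
    ¬ G.Adj x y := fun h => ((G.compl_adj y x).1 (mem_completeTo.1 hy x hx)).2 h.symm

/-- Every vertex outside `W` is adjacent to all of `W` or to none of it. -/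
def IsModule (G : SimpleGraph S) (W : Finset S) : Prop :=
  ∀ u ∉ W, u ∈ completeTo G W ∨ u ∈ completeTo Gᶜ W

theorem IsModule.compl (hW : IsModule G W) : IsModule Gᶜ W := fun u hu => by
  simpa only [compl_compl] using (hW u hu).symm

theorem completeTo_anti (h : C ⊆ W) : completeTo G W ⊆ completeTo G C := fun _ hu =>
  mem_completeTo.2 fun w hw => mem_completeTo.1 hu w (h hw)

theorem SeparatedIn.sdiff_subset_completeTo_compl (hC : SeparatedIn G W C) :
    W \ C ⊆ completeTo Gᶜ C := fun _ hu => mem_completeTo.2 fun w hw =>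
  (G.compl_adj _ w).2 ⟨(ne_of_mem_of_not_mem hw (mem_sdiff.1 hu).2).symm,
    fun h => hC.2 w hw _ hu h.symm⟩

theorem IsModule.of_separatedIn (hW : IsModule G W) (hC : SeparatedIn G W C) :
    IsModule G C := by
  intro u hu
  by_cases huW : u ∈ W
  · exact .inr (hC.sdiff_subset_completeTo_compl (mem_sdiff.2 ⟨huW, hu⟩))
  · exact (hW u huW).imp (fun h => completeTo_anti hC.1 h) (fun h => completeTo_anti hC.1 h)

theorem IsModule.completeTo_subset (hW : IsModule G W) (hC : SeparatedIn G W C)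
    (hne : C.Nonempty) : completeTo G C ⊆ completeTo G W := by
  obtain ⟨c, hc⟩ := hne
  intro u hu
  have huc := mem_completeTo.1 hu c hc
  have not_mem_compl : ∀ {D}, c ∈ D → u ∉ completeTo Gᶜ D := fun hcD h =>
    not_adj_of_mem_completeTo_compl h hcD huc.symm
  by_cases huW : u ∈ W
  · have huC : u ∉ C := fun huC => G.loopless.irrefl u (mem_completeTo.1 hu u huC)
    exact absurd (hC.sdiff_subset_completeTo_compl (mem_sdiff.2 ⟨huW, huC⟩)) (not_mem_compl hc)
  · exact (hW u huW).resolve_right (not_mem_compl (hC.1 hc))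

variable {a b : ℝ}

/-- Two vertices on different sides of a splitting of `Gᶜ` on `W` see, between them, all of `W`. -/
theorem IsModule.exists_isCut (hW : IsModule G W) (hsplit : Splits Gᶜ W) {y₀ : S}
    (hy₀ : y₀ ∈ completeTo Gᶜ W) (hrest : ∀ t ∈ completeTo G W, G.Adj t y₀) (hb : b ≤ #W)
    (ha : a ≤ #(completeTo Gᶜ W)) (hT : #(completeTo G W) < a) :
    ∃ x₀ x₁, IsCut G a b x₀ x₁ y₀ := by
  obtain ⟨A, hA, ⟨x₀, hx₀⟩, ⟨x₁, hx₁⟩⟩ := hsplit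
  have hx₀W := hA.1 hx₀
  have hx₁W := (mem_sdiff.1 hx₁).1
  have adj_of_mem_W : ∀ u ∈ W, G.Adj x₀ u ∨ G.Adj x₁ u := fun u hu => by
    by_cases huA : u ∈ A
    · exact .inr (hA.adj_of_compl huA hx₁).symm
    · exact .inl (hA.adj_of_compl hx₀ (mem_sdiff.2 ⟨hu, huA⟩))
  have not_adj {x y : S} (hx : x ∈ W) (hy : y ∈ completeTo Gᶜ W) : ¬ G.Adj x y :=
    not_adj_of_mem_completeTo_compl hy hx
  have inner_iff : ∀ u, InnerSide G x₀ x₁ y₀ u ↔ u ∈ W := fun u => by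
    refine ⟨fun ⟨hx, hxy⟩ => by_contra fun hu => ?_,
      fun hu => ⟨adj_of_mem_W u hu, fun h => not_adj hu hy₀ h.2.symm⟩⟩
    rcases hW u hu with h | h
    · exact hxy ⟨(mem_completeTo.1 h x₀ hx₀W).symm, (hrest u h).symm⟩
    · exact hx.elim (not_adj hx₀W h) (not_adj hx₁W h)
  have outer_iff : ∀ u, OuterSide G x₀ x₁ u ↔ u ∈ completeTo Gᶜ W := fun u => by
    refine ⟨fun hu => ?_, fun hu h => h.elim (not_adj hx₀W hu) (not_adj hx₁W hu)⟩
    have huW : u ∉ W := fun h => hu (adj_of_mem_W u h)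
    exact (hW u huW).resolve_left fun h => hu (.inl (mem_completeTo.1 h x₀ hx₀W).symm)
  refine ⟨x₀, x₁, ?_, ?_, ?_, ?_, ?_⟩
  · simpa [inner_iff] using hb
  · simpa [outer_iff] using ha
  · refine lt_of_le_of_lt (Nat.cast_le.2 (card_le_card fun u hu => ?_)) hT
    simp only [inner_iff, outer_iff, mem_filter, mem_univ, true_and] at hu
    exact (hW u hu.1).resolve_right hu.2
  · exact fun x y hx hy => not_adj ((inner_iff x).1 hx) ((outer_iff y).1 hy)
  · intro x x' hx hx' _
    rw [inner_iff] at hx hx'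
    by_cases hxA : x ∈ A <;> by_cases hxA' : x' ∈ A
    · exact .inr ⟨x₁, (inner_iff x₁).2 hx₁W, hA.adj_of_compl hxA hx₁, hA.adj_of_compl hxA' hx₁⟩
    · exact .inl (hA.adj_of_compl hxA (mem_sdiff.2 ⟨hx', hxA'⟩))
    · exact .inl (hA.adj_of_compl hxA' (mem_sdiff.2 ⟨hx, hxA⟩)).symm
    · exact .inr ⟨x₀, (inner_iff x₀).2 hx₀W, (hA.adj_of_compl hx₀ (mem_sdiff.2 ⟨hx, hxA⟩)).symm,
        (hA.adj_of_compl hx₀ (mem_sdiff.2 ⟨hx', hxA'⟩)).symm⟩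

open scoped Classical in
theorem IsModule.degree_le (hW : IsModule G W)
    (hcomp : ∀ C, SeparatedIn G W C → ¬ Splits G C → #C < b) {w : S} (hw : w ∈ W) :
    (#{u | G.Adj w u} : ℝ) ≤ b + #(completeTo G W ∪ completeTo Gᶜ W) := by
  obtain ⟨C, hC, hwC, hCsplit⟩ := exists_component G hw
  have hsub : ({u | G.Adj w u} : Finset S) ⊆ C ∪ (completeTo G W ∪ completeTo Gᶜ W) := by
    intro u hu
    by_cases huW : u ∈ W
    · exact mem_union_left _ (by_contra fun huC =>
        hC.2 w hwC u (mem_sdiff.2 ⟨huW, huC⟩) (mem_filter.1 hu).2)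
    · exact mem_union_right _ (mem_union.2 (hW u huW))
  have := (card_le_card hsub).trans (card_union_le _ _)
  rify at this
  linarith [hcomp C hC hCsplit]

open scoped Classical in
theorem IsModule.sum_degree_le (hW : IsModule G W)
    (hcomp : ∀ C, SeparatedIn G W C → ¬ Splits G C → #C < b)
    (hT : #(completeTo G W) < a) (hY : #(completeTo Gᶜ W) < a) :
    ∑ u, (#{w | G.Adj u w} : ℝ) ≤ Fintype.card S * (b + 4 * a) := by
  have hcover : (univ : Finset S) = W ∪ (completeTo G W ∪ completeTo Gᶜ W) := by
    refine (eq_univ_of_forall fun u => ?_).symm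
    by_cases hu : u ∈ W
    · exact mem_union_left _ hu
    · exact mem_union_right _ (mem_union.2 (hW u hu))
  have hout : (#(completeTo G W ∪ completeTo Gᶜ W) : ℝ) ≤ 2 * a := by
    have := card_union_le (completeTo G W) (completeTo Gᶜ W)
    rify at this
    linarith
  have hdeg : ∀ w ∈ W, (#{u | G.Adj w u} : ℝ) ≤ b + 2 * a := fun w hw =>
    (hW.degree_le hcomp hw).trans (by gcongr)
  have hb : 0 ≤ b := by
    by_contra hb
    linarith [hcomp ∅ ⟨by simp, by simp⟩ (by simp [Splits, SeparatedIn]),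
      Nat.cast_nonneg (α := ℝ) #(∅ : Finset S)]
  have hWcard : (#W : ℝ) ≤ Fintype.card S := Nat.cast_le.2 (card_le_univ W)
  calc ∑ u, (#{w | G.Adj u w} : ℝ)
      ≤ ∑ u ∈ W, (#{w | G.Adj u w} : ℝ) +
          ∑ u ∈ completeTo G W ∪ completeTo Gᶜ W, (#{w | G.Adj u w} : ℝ) := by
        rw [← sum_union_inter, ← hcover]
        exact le_add_of_nonneg_right (sum_nonneg fun _ _ => Nat.cast_nonneg _)
    _ ≤ #W * (b + 2 * a) + #(completeTo G W ∪ completeTo Gᶜ W) * Fintype.card S := by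
        simp only [← nsmul_eq_mul]
        exact add_le_add (sum_le_card_nsmul _ _ _ hdeg)
          (sum_le_card_nsmul _ _ _ fun u _ => Nat.cast_le.2 (card_le_univ _))
    _ ≤ Fintype.card S * (b + 2 * a) + 2 * a * Fintype.card S :=
        add_le_add (mul_le_mul_of_nonneg_right hWcard (by linarith))
          (mul_le_mul_of_nonneg_right hout (by positivity))
    _ = Fintype.card S * (b + 4 * a) := by ring

open scoped Classical in
/-- The alternative of the descent: the graph is sparse, or it has a large cut. -/
def SparseOrCut (G : SimpleGraph S) (a b : ℝ) : Prop :=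
  ∑ u, (#{w | G.Adj u w} : ℝ) ≤ Fintype.card S * (b + 4 * a) ∨ ∃ x₀ x₁ y₀, IsCut G a b x₀ x₁ y₀

theorem P4Free.sparseOrCut_of_splits (hG : P4Free G) (hb : 2 ≤ b) (hW : IsModule G W)
    (hT : #(completeTo G W) < a) (hY : #(completeTo Gᶜ W) < a) (hsplit : Splits G W)
    (ih : ∀ C, #C < #W → 2 ≤ #C → IsModule G C → #(completeTo G C) < a →
      #(completeTo Gᶜ C) < a → SparseOrCut G a b ∨ SparseOrCut Gᶜ a b) :
    SparseOrCut G a b ∨ SparseOrCut Gᶜ a b := by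
  by_cases hcomp : ∀ C, SeparatedIn G W C → ¬ Splits G C → #C < b
  · exact .inl (.inl (hW.sum_degree_le hcomp hT hY))
  push Not at hcomp
  obtain ⟨C, hC, hCsplit, hbC⟩ := hcomp
  have hC_two : 2 ≤ #C := Nat.cast_le.1 (hb.trans hbC)
  obtain ⟨y₀, hy₀⟩ := hC.sdiff_nonempty hsplit hCsplit
  have hCmod := hW.of_separatedIn hC
  have hTC := hW.completeTo_subset hC (card_pos.1 (by lia))
  have hT' : #(completeTo G C) < a := hT.trans_le' (Nat.cast_le.2 (card_le_card hTC))
  by_cases hY' : #(completeTo Gᶜ C) < a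
  · exact ih C (card_lt_card ⟨hC.1, Finset.sdiff_nonempty.1 ⟨y₀, hy₀⟩⟩) hC_two hCmod hT' hY'
  · obtain ⟨x₀, x₁, hcut⟩ := hCmod.exists_isCut
      ((hG.splits_or_splits_compl hC_two).resolve_left hCsplit)
      (hC.sdiff_subset_completeTo_compl hy₀)
      (fun t ht => mem_completeTo.1 (hTC ht) y₀ (mem_sdiff.1 hy₀).1) hbC (not_lt.1 hY') hT'
    exact .inl (.inr ⟨x₀, x₁, y₀, hcut⟩)

theorem P4Free.sparseOrCut_of_isModule (hb : 2 ≤ b) (hG : P4Free G) (hW : IsModule G W)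
    (hW_two : 2 ≤ #W) (hT : #(completeTo G W) < a) (hY : #(completeTo Gᶜ W) < a) :
    SparseOrCut G a b ∨ SparseOrCut Gᶜ a b := by
  induction h : #W using Nat.strong_induction_on generalizing G W with
  | h k ih =>
    subst h
    rcases hG.splits_or_splits_compl hW_two with hsplit | hsplit
    · exact hG.sparseOrCut_of_splits hb hW hT hY hsplit fun C hlt hC hCmod hT' hY' =>
        ih _ hlt hG hCmod hC hT' hY' rfl
    · have := hG.compl.sparseOrCut_of_splits hb hW.compl hY (by rwa [compl_compl]) hsplit
        fun C hlt hC hCmod hT' hY' => ih _ hlt hG.compl hCmod hC hT' hY' rfl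
      simpa only [compl_compl, or_comm] using this

end Cograph

theorem P4Free.sparseOrCut {S : Type*} [Fintype S] {G : SimpleGraph S} {a b : ℝ}
    (hG : P4Free G) (ha : 0 < a) (hb : 2 ≤ b) (hS : 2 ≤ Fintype.card S) :
    SparseOrCut G a b ∨ SparseOrCut Gᶜ a b := by
  classical
  have hempty : ∀ H : SimpleGraph S, completeTo H univ = ∅ := fun H =>
    eq_empty_of_forall_notMem fun u hu => H.loopless.irrefl u (mem_completeTo.1 hu u (mem_univ u))
  exact hG.sparseOrCut_of_isModule hb (W := univ) (fun u hu => absurd (mem_univ u) hu) hS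
    (by simpa [hempty]) (by simpa [hempty])

/-! ### Densities and independence -/

section Density

variable {α β ι κ V : Type*} [Fintype α] [Fintype β] [Fintype ι] [Fintype κ] [Fintype V]

open scoped Classical in
/-- The proportion of elements of a finite type with property `P`. It is `0` on an empty type. -/
noncomputable def density (P : α → Prop) : ℝ := 𝔼 a, if P a then 1 else 0

open scoped Classical in
theorem density_eq_card_div (P : α → Prop) : density P = #{a | P a} / Fintype.card α := by
  rw [density, Fintype.expect_eq_sum_div_card, sum_boole]

open scoped Classical in
theorem card_filter_eq_density_mul (P : α → Prop) :
    (#{a | P a} : ℝ) = density P * Fintype.card α := by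
  rcases isEmpty_or_nonempty α with hα | hα
  · simp
  · rw [density_eq_card_div, div_mul_cancel₀ _ (by positivity)]

theorem density_nonneg (P : α → Prop) : 0 ≤ density P :=
  expect_nonneg fun _ _ => by positivity

theorem density_mono {P Q : α → Prop} (h : ∀ a, P a → Q a) : density P ≤ density Q := by
  refine expect_le_expect fun a _ => ?_
  have := h a
  split_ifs <;> simp_all

theorem density_or_le (P Q : α → Prop) :
    density (fun a => P a ∨ Q a) ≤ density P + density Q := by
  rw [density, density, density, ← expect_add_distrib]
  refine expect_le_expect fun a _ => ?_
  split_ifs <;> simp_all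

theorem density_not [Nonempty α] (P : α → Prop) : density (fun a => ¬ P a) = 1 - density P := by
  rw [eq_sub_iff_add_eq, density, density, ← expect_add_distrib,
    ← Fintype.expect_const (ι := α) (1 : ℝ)]
  refine expect_congr rfl fun a _ => ?_
  split_ifs <;> simp_all

theorem density_le_one (P : α → Prop) : density P ≤ 1 := by
  rw [density_eq_card_div]
  exact div_le_one_of_le₀ (Nat.cast_le.2 (card_le_univ _)) (by positivity)

theorem density_eq_zero_iff {P : α → Prop} : density P = 0 ↔ ∀ a, ¬ P a := by
  rw [density, expect_eq_zero_iff_of_nonneg fun _ _ => by positivity]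
  simp

theorem exists_of_density_pos {P : α → Prop} (h : 0 < density P) : ∃ a, P a := by
  by_contra! hP
  exact h.ne' (density_eq_zero_iff.2 hP)

theorem density_exists_le (P : β → α → Prop) {c : ℝ} (h : ∀ b, density (P b) ≤ c) :
    density (fun a => ∃ b, P b a) ≤ Fintype.card β * c := by
  classical
  calc density (fun a => ∃ b, P b a) ≤ 𝔼 a, ∑ b, if P b a then 1 else 0 := by
        refine expect_le_expect fun a _ => ?_
        split_ifs with ha
        · obtain ⟨b, hb⟩ := ha
          exact (if_pos hb).symm.trans_le
            (single_le_sum (f := fun b => if P b a then (1 : ℝ) else 0)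
              (fun _ _ => by positivity) (mem_univ b))
        · exact sum_nonneg fun _ _ => by positivity
    _ = ∑ b, density (P b) := expect_sum_comm _ _ _
    _ ≤ Fintype.card β * c := by
        simpa [nsmul_eq_mul] using sum_le_card_nsmul univ _ c fun b _ => h b

theorem expect_pi_subtype_prod [DecidableEq κ] (p : κ → Prop) [DecidablePred p]
    [Fintype {k // p k}] [Fintype {k // ¬ p k}] (F : (κ → V) → ℝ) :
    𝔼 f, F f = 𝔼 g, 𝔼 h, F ((Equiv.piEquivPiSubtypeProd p fun _ => V).symm (g, h)) := by
  rw [← expect_product' univ univ fun g h => F ((Equiv.piEquivPiSubtypeProd p _).symm (g, h)),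
    univ_product_univ]
  exact Fintype.expect_equiv (Equiv.piEquivPiSubtypeProd p fun _ => V) _ _ fun f => by
    rw [Prod.mk.eta, Equiv.symm_apply_apply]

theorem expect_comp_injective [Nonempty V] [DecidableEq ι] [DecidableEq κ] {e : ι → κ}
    (he : e.Injective) (F : (ι → V) → ℝ) : 𝔼 f : κ → V, F (f ∘ e) = 𝔼 g, F g := by
  classical
  rw [expect_pi_subtype_prod (· ∈ Set.range e)]
  have comp_symm : ∀ g h,
      (Equiv.piEquivPiSubtypeProd (· ∈ Set.range e) fun _ => V).symm (g, h) ∘ e =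
        fun i => g ⟨e i, i, rfl⟩ := fun g h => by ext i; simp
  simp only [comp_symm, expect_const univ_nonempty (_ : ℝ)]
  exact Fintype.expect_equiv ((Equiv.ofInjective e he).symm.arrowCongr (Equiv.refl V)) _ F
    fun g => rfl

theorem density_comp_injective [Nonempty V] [DecidableEq ι] [DecidableEq κ] {e : ι → κ}
    (he : e.Injective) (P : (ι → V) → Prop) :
    density (fun f : κ → V => P (f ∘ e)) = density P := by
  classical
  exact expect_comp_injective he fun g => if P g then 1 else 0

theorem expect_apply [Nonempty V] [DecidableEq κ] (k : κ) (F : V → ℝ) :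
    𝔼 f : κ → V, F (f k) = 𝔼 v, F v :=
  (expect_comp_injective (Function.injective_of_subsingleton fun _ : Unit => k)
    fun g : Unit → V => F (g ())).trans
    (Fintype.expect_equiv (Equiv.funUnique Unit V) _ _ fun _ => rfl)

theorem density_apply [Nonempty V] [DecidableEq κ] (k : κ) (P : V → Prop) :
    density (fun f : κ → V => P (f k)) = density P := by
  classical
  exact expect_apply k fun v => if P v then 1 else 0

theorem expect_cons {n : ℕ} (F : (Fin (n + 1) → V) → ℝ) :
    𝔼 w, F w = 𝔼 v, 𝔼 w : Fin n → V, F (Fin.cons v w) := by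
  rw [← expect_product' univ univ fun v w => F (Fin.cons v w), univ_product_univ]
  exact (Fintype.expect_equiv (Fin.consEquiv fun _ => V) _ _ fun _ => rfl).symm

theorem density_cons {n : ℕ} (P : (Fin (n + 1) → V) → Prop) :
    density P = 𝔼 v, density fun w : Fin n → V => P (Fin.cons v w) :=
  expect_cons _

theorem density_and [DecidableEq ι] [DecidableEq κ] (P : (ι → V) → Prop) (Q : (κ → V) → Prop) :
    density (fun f : ι ⊕ κ → V => P (f ∘ Sum.inl) ∧ Q (f ∘ Sum.inr)) = density P * density Q := by
  classical
  calc density (fun f : ι ⊕ κ → V => P (f ∘ Sum.inl) ∧ Q (f ∘ Sum.inr))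
      = density (fun x : (ι → V) × (κ → V) => P x.1 ∧ Q x.2) :=
        Fintype.expect_equiv (Equiv.sumArrowEquivProdArrow ι κ V) _ _ fun _ => rfl
    _ = 𝔼 g, 𝔼 h, (if P g then 1 else 0) * (if Q h then 1 else 0) := by
        rw [density, ← univ_product_univ, expect_product]
        refine expect_congr rfl fun g _ => expect_congr rfl fun h _ => ?_
        split_ifs <;> simp_all
    _ = density P * density Q := by
        rw [density, density, Fintype.expect_mul_expect]

theorem density_apply_eq_apply [Nonempty V] [DecidableEq ι] {i j : ι} (hij : i ≠ j) :
    density (fun f : ι → V => f i = f j) = 1 / Fintype.card V := by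
  classical
  have he : (![i, j] : Fin 2 → ι).Injective := by
    simpa [Function.Injective, Fin.forall_fin_two, eq_comm] using hij
  calc density (fun f : ι → V => f i = f j)
      = density (fun g : Fin 2 → V => g 0 = g 1) :=
        density_comp_injective he fun g : Fin 2 → V => g 0 = g 1
    _ = 𝔼 v : V, density (fun g : Fin 1 → V => v = g 0) := density_cons _
    _ = 1 / Fintype.card V := by
        simp_rw [fun v => density_apply (0 : Fin 1) fun u : V => v = u, density_eq_card_div]
        simp [filter_eq]

theorem density_not_injective_le [Nonempty V] [DecidableEq ι] :
    density (fun f : ι → V => ¬ f.Injective) ≤ Fintype.card ι ^ 2 / Fintype.card V := by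
  calc density (fun f : ι → V => ¬ f.Injective)
      ≤ density (fun f : ι → V => ∃ x : ι × ι, x.1 ≠ x.2 ∧ f x.1 = f x.2) :=
        density_mono fun f hf => by
          simpa [Function.Injective, and_comm] using hf
    _ ≤ Fintype.card (ι × ι) * (1 / Fintype.card V) := density_exists_le _ fun x => by
        by_cases hx : x.1 = x.2
        · simp [hx, density_eq_zero_iff.2]
        · simpa [hx] using (density_apply_eq_apply hx).le
    _ = Fintype.card ι ^ 2 / Fintype.card V := by
        rw [Fintype.card_prod]
        push_cast
        ring

theorem density_apply_and_apply [Nonempty V] [DecidableEq κ] {i j : κ} (hij : i ≠ j)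
    (P Q : V → Prop) :
    density (fun f : κ → V => P (f i) ∧ Q (f j)) = density P * density Q := by
  have he : (Sum.elim (fun _ : Unit => i) fun _ : Unit => j).Injective := by
    simpa [Function.Injective] using ⟨hij, hij.symm⟩
  calc density (fun f : κ → V => P (f i) ∧ Q (f j))
      = density (fun f : Unit ⊕ Unit → V => P (f (.inl ())) ∧ Q (f (.inr ()))) :=
        density_comp_injective he fun f : Unit ⊕ Unit → V => P (f (.inl ())) ∧ Q (f (.inr ()))
    _ = density P * density Q := by
        rw [← density_apply () P, ← density_apply () Q]
        exact density_and (fun f : Unit → V => P (f ())) fun f : Unit → V => Q (f ())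

theorem sq_expect_density_le (P : α → β → Prop) :
    (𝔼 a, density (P a)) ^ 2 ≤ 𝔼 a, 𝔼 a', density fun b => P a b ∧ P a' b := by
  classical
  rcases isEmpty_or_nonempty β with hβ | hβ
  · simp [density]
  calc (𝔼 a, density (P a)) ^ 2 = (𝔼 b, (𝔼 a, if P a b then (1 : ℝ) else 0) * 1) ^ 2 := by
        simp only [density, mul_one, expect_comm (s := (univ : Finset α)) (t := (univ : Finset β))]
    _ ≤ 𝔼 b, (𝔼 a, if P a b then (1 : ℝ) else 0) ^ 2 := by
        simpa using expect_mul_sq_le_sq_mul_sq univ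
          (fun b => 𝔼 a, if P a b then (1 : ℝ) else 0) fun _ => 1
    _ = 𝔼 a, 𝔼 a', density fun b => P a b ∧ P a' b := by
        simp only [sq, Fintype.expect_mul_expect, density]
        rw [expect_comm]
        refine expect_congr rfl fun a _ => ?_
        rw [expect_comm]
        refine expect_congr rfl fun a' _ => expect_congr rfl fun b _ => ?_
        split_ifs <;> simp_all

theorem le_density_of_two_mul_le_expect {X : α → ℝ} {c : ℝ} (hX : ∀ a, X a ≤ 1) (hc : 0 ≤ c)
    (h : 2 * c ≤ 𝔼 a, X a) : c ≤ density fun a => c ≤ X a := by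
  have : 𝔼 a, X a ≤ 𝔼 a, ((if c ≤ X a then 1 else 0) + c) := expect_le_expect fun a _ => by
    split_ifs with ha <;> linarith [hX a]
  rcases isEmpty_or_nonempty α with hα | hα
  · rw [univ_eq_empty, expect_empty] at h
    linarith [density_nonneg fun a => c ≤ X a]
  · rw [expect_add_distrib, Fintype.expect_const] at this
    unfold density
    convert (by linarith : c ≤ 𝔼 a, if c ≤ X a then (1 : ℝ) else 0)

end Density

section Chernoff

variable {ι κ Ω Θ : Type*} [Fintype ι] [Fintype κ] [Fintype Ω]

theorem expect_exp_mul_le [Nonempty Ω] {ψ : Ω → ℝ} {t : ℝ} (hψ : ∀ ω, |ψ ω| ≤ 2)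
    (ht : 0 ≤ t) (hmean : 𝔼 ω, ψ ω ≤ -t) :
    𝔼 ω, Real.exp (t / 8 * ψ ω) ≤ Real.exp (-(t ^ 2 / 16)) := by
  have ht_two : t ≤ 2 := by
    linarith [le_expect (f := ψ) univ_nonempty fun ω _ => neg_le_of_abs_le (hψ ω)]
  have exp_le : ∀ ω, Real.exp (t / 8 * ψ ω) ≤ t / 8 * ψ ω + (1 + t ^ 2 / 16) := fun ω => by
    have hx : |t / 8 * ψ ω| ≤ t / 4 := by
      rw [abs_mul, abs_of_nonneg (by positivity)]
      linarith [mul_le_mul_of_nonneg_left (hψ ω) (show 0 ≤ t / 8 by positivity)]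
    have hsq : (t / 8 * ψ ω) ^ 2 ≤ (t / 4) ^ 2 := sq_le_sq' (neg_le_of_abs_le hx) (le_of_abs_le hx)
    linarith [le_of_abs_le (Real.abs_exp_sub_one_sub_id_le (hx.trans (by linarith)))]
  calc 𝔼 ω, Real.exp (t / 8 * ψ ω) ≤ t / 8 * 𝔼 ω, ψ ω + (1 + t ^ 2 / 16) := by
        rw [mul_expect, ← Fintype.expect_const (ι := Ω) (1 + t ^ 2 / 16), ← expect_add_distrib]
        simpa only [Fintype.expect_const] using expect_le_expect fun ω _ => exp_le ω
    _ ≤ -(t ^ 2 / 16) + 1 := by nlinarith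
    _ ≤ Real.exp (-(t ^ 2 / 16)) := Real.add_one_le_exp _

theorem expect_prod_apply [DecidableEq κ] (F : Ω → ℝ) :
    𝔼 h : κ → Ω, ∏ i, F (h i) = (𝔼 ω, F ω) ^ Fintype.card κ := by
  simp_rw [Fintype.expect_eq_sum_div_card, div_pow, ← card_univ (α := κ), ← prod_const,
    prod_univ_sum, Fintype.piFinset_univ]
  simp

theorem density_sum_nonneg_le [Nonempty Ω] [DecidableEq κ] {ψ : Ω → ℝ} {t : ℝ}
    (hψ : ∀ ω, |ψ ω| ≤ 2) (ht : 0 ≤ t) (hmean : 𝔼 ω, ψ ω ≤ -t) :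
    density (fun h : κ → Ω => 0 ≤ ∑ i, ψ (h i)) ≤
      Real.exp (-(t ^ 2 / 16)) ^ Fintype.card κ := by
  calc density (fun h : κ → Ω => 0 ≤ ∑ i, ψ (h i))
      ≤ 𝔼 h : κ → Ω, ∏ i, Real.exp (t / 8 * ψ (h i)) := by
        refine expect_le_expect fun h _ => ?_
        rw [← Real.exp_sum, ← mul_sum]
        split_ifs with hsum
        · exact Real.one_le_exp (mul_nonneg (by positivity) hsum)
        · exact (Real.exp_pos _).le
    _ = (𝔼 ω, Real.exp (t / 8 * ψ ω)) ^ Fintype.card κ :=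
        expect_prod_apply fun ω => Real.exp (t / 8 * ψ ω)
    _ ≤ Real.exp (-(t ^ 2 / 16)) ^ Fintype.card κ :=
        pow_le_pow_left₀ (expect_nonneg fun _ _ => (Real.exp_pos _).le)
          (expect_exp_mul_le hψ ht hmean) _

theorem sum_sub_sub_nonneg_of_expect_add_lt [Nonempty ι] [DecidableEq ι] {f : ι → ℝ}
    (hf : ∀ i, 0 ≤ f i) {J : Finset ι} {μ t : ℝ} (hμ : μ ≤ 1) (ht : 0 ≤ t)
    (hJ : 2 * #J ≤ t * (Fintype.card ι - #J)) (h : 𝔼 i, f i + t < μ) :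
    0 ≤ ∑ i : {i // i ∉ J}, (μ - f i - t / 2) := by
  have hcard : Fintype.card {i // i ∉ J} = Fintype.card ι - #J := by simp
  have hJcard : #J ≤ Fintype.card ι := card_le_univ J
  have hJμ : #J * (μ - t / 2) ≤ #J := mul_le_of_le_one_right (Nat.cast_nonneg _) (by linarith)
  have sum_le : ∑ i : {i // i ∉ J}, f i ≤ ∑ i, f i := by
    rw [← Fintype.sum_subtype_add_sum_subtype (· ∉ J)]
    exact le_add_of_nonneg_right (sum_nonneg fun i _ => hf i)
  rw [Fintype.expect_eq_sum_div_card, ← lt_sub_iff_add_lt, div_lt_iff₀ (by positivity)] at h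
  rw [sum_sub_distrib, sum_sub_distrib, sum_const, sum_const, card_univ, hcard, nsmul_eq_mul,
    nsmul_eq_mul, Nat.cast_sub hJcard]
  nlinarith

/-- A Chernoff bound that survives letting the test `φ (q F)` depend on the few sample points in
`J`: once these are revealed, the others are still independent. -/
theorem density_expect_add_lt_le [Nonempty Ω] [Nonempty ι] [DecidableEq ι] {φ : Θ → Ω → ℝ}
    (hφ₀ : ∀ q ω, 0 ≤ φ q ω) (hφ₁ : ∀ q ω, φ q ω ≤ 1) {q : (ι → Ω) → Θ} {J : Finset ι}
    (hq : DependsOn q (J : Set ι)) {t : ℝ} (ht : 0 ≤ t) (ht₁ : t ≤ 1)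
    (hJ : 2 * #J ≤ t * (Fintype.card ι - #J)) :
    density (fun F : ι → Ω => 𝔼 i, φ (q F) (F i) + t < 𝔼 ω, φ (q F) ω) ≤
      Real.exp (-((t / 2) ^ 2 / 16)) ^ (Fintype.card ι - #J) := by
  obtain ⟨ω₀⟩ := ‹Nonempty Ω›
  let glue := (Equiv.piEquivPiSubtypeProd (· ∈ J) fun _ => Ω).symm
  have glue_apply : ∀ g h (i : {i // i ∉ J}), glue (g, h) i = h i := fun g h i => by
    simp [glue, i.2]
  have revealed : ∀ g, density (fun h => 𝔼 i, φ (q (glue (g, h))) (glue (g, h) i) + t <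
      𝔼 ω, φ (q (glue (g, h))) ω) ≤ Real.exp (-((t / 2) ^ 2 / 16)) ^ (Fintype.card ι - #J) := by
    intro g
    set θ := q (glue (g, fun _ => ω₀))
    have hqθ : ∀ h, q (glue (g, h)) = θ := fun h => hq fun i hi => by simp [glue, mem_coe.1 hi]
    have hμ₀ : 0 ≤ 𝔼 ω, φ θ ω := expect_nonneg fun ω _ => hφ₀ θ ω
    have hμ₁ : 𝔼 ω, φ θ ω ≤ 1 := expect_le univ_nonempty fun ω _ => hφ₁ θ ω
    rw [show Fintype.card ι - #J = Fintype.card {i // i ∉ J} by simp]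
    refine (density_mono fun h hh => ?_).trans
      (density_sum_nonneg_le (ψ := fun ω => (𝔼 ω', φ θ ω') - φ θ ω - t / 2)
        (fun ω => abs_le.2 ⟨?_, ?_⟩) (by positivity) ?_)
    · rw [hqθ] at hh
      simpa only [glue_apply] using
        sum_sub_sub_nonneg_of_expect_add_lt (fun i => hφ₀ θ _) hμ₁ ht hJ hh
    · linarith [hφ₁ θ ω]
    · linarith [hφ₀ θ ω]
    · rw [expect_sub_distrib, expect_sub_distrib, Fintype.expect_const, Fintype.expect_const]
      linarith
  classical
  rw [density, expect_pi_subtype_prod (· ∈ J)]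
  exact expect_le univ_nonempty fun g _ => revealed g

theorem density_curry {β V : Type*} [Fintype β] [Fintype V] [DecidableEq ι] [DecidableEq β]
    (P : (ι → β → V) → Prop) :
    density (fun f : ι × β → V => P (Function.curry f)) = density P := by
  classical
  exact Fintype.expect_equiv (Equiv.curry ι β V) _ _ fun f => rfl

/-- Every test defined by at most `card ρ` points of a random sample is accurate on it: the average
is over disjoint blocks of the sample, and the union bound over the positions `e` of the defining
points. -/
theorem density_exists_expect_add_lt_le {β ρ V : Type*} [Fintype β] [Fintype ρ]
    [Fintype V] [Nonempty V] [Nonempty ι] [DecidableEq ι] [DecidableEq β] [DecidableEq ρ]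
    {φ : (ρ → V) → (β → V) → ℝ} (hφ₀ : ∀ q ω, 0 ≤ φ q ω) (hφ₁ : ∀ q ω, φ q ω ≤ 1)
    {t : ℝ} (ht : 0 ≤ t) (ht₁ : t ≤ 1)
    (hρ : 2 * Fintype.card ρ ≤ t * (Fintype.card ι - Fintype.card ρ)) :
    density (fun f : ι × β → V => ∃ e : ρ → ι × β,
        𝔼 i, φ (f ∘ e) (fun k => f (i, k)) + t < 𝔼 ω, φ (f ∘ e) ω) ≤
      Fintype.card (ρ → ι × β) *
        Real.exp (-((t / 2) ^ 2 / 16)) ^ (Fintype.card ι - Fintype.card ρ) := by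
  refine density_exists_le _ fun e => ?_
  set J : Finset ι := univ.image fun k => (e k).1
  have hJ : #J ≤ Fintype.card ρ := card_image_le
  have hJ' : (#J : ℝ) ≤ Fintype.card ρ := Nat.cast_le.2 hJ
  have hq : DependsOn (fun F : ι → β → V => Function.uncurry F ∘ e) (J : Set ι) :=
    fun F F' hF => funext fun k => by
      simp [Function.uncurry, hF (e k).1 (mem_coe.2 (mem_image_of_mem _ (mem_univ k)))]
  calc density (fun f : ι × β → V =>
        𝔼 i, φ (f ∘ e) (fun k => f (i, k)) + t < 𝔼 ω, φ (f ∘ e) ω)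
      = density (fun F : ι → β → V =>
          𝔼 i, φ (Function.uncurry F ∘ e) (F i) + t < 𝔼 ω, φ (Function.uncurry F ∘ e) ω) :=
        density_curry fun F : ι → β → V =>
          𝔼 i, φ (Function.uncurry F ∘ e) (F i) + t < 𝔼 ω, φ (Function.uncurry F ∘ e) ω
    _ ≤ Real.exp (-((t / 2) ^ 2 / 16)) ^ (Fintype.card ι - #J) :=
        density_expect_add_lt_le hφ₀ hφ₁ hq ht ht₁ (by nlinarith)
    _ ≤ Real.exp (-((t / 2) ^ 2 / 16)) ^ (Fintype.card ι - Fintype.card ρ) :=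
        pow_le_pow_of_le_one (Real.exp_pos _).le
          (Real.exp_le_one_iff.2 (neg_nonpos.2 (by positivity))) (Nat.sub_le_sub_left hJ _)

end Chernoff

/-! ### Hypergraphs and their cuts -/

/-- A 3-uniform hypergraph on `V`, given by a symmetric relation on triples of distinct vertices.
Unlike a set of 3-element sets it can be restricted, complemented and glued without transporting
sets. -/
structure TripleSystem (V : Type*) where
  Edge : V → V → V → Prop
  swap₁₂ : ∀ {a b c}, Edge a b c → Edge b a c
  swap₂₃ : ∀ {a b c}, Edge a b c → Edge a c b
  ne₁₂ : ∀ {a b c}, Edge a b c → a ≠ b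

namespace TripleSystem

variable {S V : Type*} {K : TripleSystem V}

theorem rotate {a b c : V} (h : K.Edge a b c) : K.Edge b c a := K.swap₂₃ (K.swap₁₂ h)

theorem ne₁₃ {a b c : V} (h : K.Edge a b c) : a ≠ c := K.ne₁₂ (K.swap₂₃ h)

theorem ne₂₃ {a b c : V} (h : K.Edge a b c) : b ≠ c := K.ne₁₃ (K.swap₁₂ h)

/-- The hypergraph of the triples of distinct vertices that are not edges. -/
def compl (K : TripleSystem V) : TripleSystem V where
  Edge a b c := a ≠ b ∧ a ≠ c ∧ b ≠ c ∧ ¬ K.Edge a b c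
  swap₁₂ h := ⟨h.1.symm, h.2.2.1, h.2.1, fun h' => h.2.2.2 (K.swap₁₂ h')⟩
  swap₂₃ h := ⟨h.2.1, h.1, h.2.2.1.symm, fun h' => h.2.2.2 (K.swap₂₃ h')⟩
  ne₁₂ h := h.1

theorem compl_edge {a b c : V} :
    K.compl.Edge a b c ↔ a ≠ b ∧ a ≠ c ∧ b ≠ c ∧ ¬ K.Edge a b c := Iff.rfl

theorem compl_compl (K : TripleSystem V) : K.compl.compl = K := by
  cases K with
  | mk Edge swap₁₂ swap₂₃ ne₁₂ =>
    simp only [compl, mk.injEq]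
    ext a b c
    have h₁₂ := @ne₁₂ a b c
    have h₁₃ := @ne₁₂ a c b
    have h₂₃ := @ne₁₂ b c a
    grind

/-- The pull-back of a hypergraph along a map `f`; for injective `f` this is the sub-hypergraph
induced by the image of `f`. -/
def comap (f : S → V) (K : TripleSystem V) : TripleSystem S where
  Edge a b c := K.Edge (f a) (f b) (f c)
  swap₁₂ h := K.swap₁₂ h
  swap₂₃ h := K.swap₂₃ h
  ne₁₂ h := fun hab => K.ne₁₂ h (congrArg f hab)

theorem comap_compl {f : S → V} (hf : f.Injective) : K.compl.comap f = (K.comap f).compl := by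
  simp [comap, compl, hf.ne_iff]

/-- The vertices `a`, `b`, `c`, `d` induce a copy of `D₂` whose edges meet in `a`, `b`. -/
def IsD2 (K : TripleSystem V) (a b c d : V) : Prop :=
  K.Edge a b c ∧ K.Edge a b d ∧ c ≠ d ∧ ¬ K.Edge a c d ∧ ¬ K.Edge b c d

/-- No four vertices induce a copy of `D₂`. -/
def D2Free (K : TripleSystem V) : Prop := ∀ a b c d, ¬ K.IsD2 a b c d

theorem IsD2.compl {a b c d : V} (h : K.IsD2 a b c d) : K.compl.IsD2 c d a b := by
  obtain ⟨habc, habd, hcd, hacd, hbcd⟩ := h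
  exact ⟨⟨hcd, (ne₁₃ habc).symm, (ne₁₃ habd).symm, fun h => hacd (rotate (rotate h))⟩,
    ⟨hcd, (ne₂₃ habc).symm, (ne₂₃ habd).symm, fun h => hbcd (rotate (rotate h))⟩, K.ne₁₂ habc,
    fun h => h.2.2.2 (rotate (rotate habc)), fun h => h.2.2.2 (rotate (rotate habd))⟩

theorem isD2_compl {a b c d : V} : K.compl.IsD2 a b c d ↔ K.IsD2 c d a b :=
  ⟨fun h => by simpa only [compl_compl] using h.compl, fun h => h.compl⟩

theorem D2Free.compl (hK : K.D2Free) : K.compl.D2Free := fun a b c d h =>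
  hK c d a b (isD2_compl.1 h)

/-- The link of `v`, a graph on the other vertices. -/
def link (K : TripleSystem V) (v : V) : SimpleGraph {u // u ≠ v} where
  Adj a b := K.Edge v a b
  symm := ⟨fun _ _ h => K.swap₂₃ h⟩
  loopless := ⟨fun _ h => ne₂₃ h rfl⟩

theorem link_compl (K : TripleSystem V) (v : V) : K.compl.link v = (K.link v)ᶜ := by
  ext a b
  simp [link, compl_edge, a.2.symm, b.2.symm, Subtype.ext_iff]

theorem D2Free.p4Free_link (hK : K.D2Free) (v : V) : P4Free (K.link v) := by
  rintro ⟨a, ha⟩ ⟨b, hb⟩ ⟨c, hc⟩ ⟨d, hd⟩ (hab : K.Edge v a b) (hbc : K.Edge v b c)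
    (hcd : K.Edge v c d) (hac : ¬ K.Edge v a c) (hbd : ¬ K.Edge v b d)
  by_contra (had : ¬ K.Edge v a d)
  have ne_ac : a ≠ c := by rintro rfl; exact had hcd
  have ne_bd : b ≠ d := by rintro rfl; exact had hab
  have habc : K.Edge a b c := by_contra fun h =>
    hK v b a c ⟨K.swap₂₃ hab, hbc, ne_ac, hac, fun h' => h (K.swap₁₂ h')⟩
  have hbcd : K.Edge b c d := by_contra fun h =>
    hK v c b d ⟨K.swap₂₃ hbc, hcd, ne_bd, hbd, fun h' => h (K.swap₁₂ h')⟩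
  have habd : ¬ K.Edge a b d := fun h =>
    hK a b v d ⟨rotate hab, h, ne₁₃ hcd, fun h' => had (K.swap₁₂ h'), fun h' => hbd (K.swap₁₂ h')⟩
  have hacd : ¬ K.Edge a c d := fun h =>
    hK c d v a ⟨rotate hcd, rotate h, K.ne₁₂ hab, fun h' => hac (K.swap₂₃ (K.swap₁₂ h')),
      fun h' => had (K.swap₂₃ (K.swap₁₂ h'))⟩
  exact hK b c a d ⟨rotate habc, hbcd, fun h => hac (h ▸ K.swap₂₃ hcd),
    fun h => habd (K.swap₁₂ h), fun h => hacd (K.swap₁₂ h)⟩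

/-- The edge density of the link of `v`. -/
noncomputable def linkDensity [Fintype V] (K : TripleSystem V) (v : V) : ℝ :=
  density fun w : Fin 2 → V => K.Edge v (w 0) (w 1)

/-- The inner side of the cut defined by `p`; with `v = p 0` it is the set `InnerSide` for the
vertices `p 1`, `p 2`, `p 3` of the link of `v`. -/
def Inner (K : TripleSystem V) (p : Fin 4 → V) (u : V) : Prop :=
  (K.Edge (p 0) (p 1) u ∨ K.Edge (p 0) (p 2) u) ∧
    ¬ (K.Edge (p 0) (p 1) u ∧ K.Edge (p 0) (p 3) u)

/-- The outer side of the cut defined by `p`. -/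
def Outer (K : TripleSystem V) (p : Fin 4 → V) (u : V) : Prop :=
  u ≠ p 0 ∧ ¬ (K.Edge (p 0) (p 1) u ∨ K.Edge (p 0) (p 2) u)

/-- `w 0`, `w 1`, `w 2` form an edge with exactly two vertices inside. This is a property of
quadruples, like `InnerOuterOuterPair`, so that one sampling lemma covers both. -/
def InnerInnerOuter (K : TripleSystem V) (p w : Fin 4 → V) : Prop :=
  K.Inner p (w 0) ∧ K.Inner p (w 1) ∧ K.Outer p (w 2) ∧ K.Edge (w 0) (w 1) (w 2)

/-- `w 2`, `w 3` are outside and form an edge with each of the inner vertices `w 0`, `w 1`. -/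
def InnerOuterOuterPair (K : TripleSystem V) (p w : Fin 4 → V) : Prop :=
  w 0 ≠ w 1 ∧ K.Inner p (w 0) ∧ K.Inner p (w 1) ∧ K.Outer p (w 2) ∧ K.Outer p (w 3) ∧
    K.Edge (w 0) (w 2) (w 3) ∧ K.Edge (w 1) (w 2) (w 3)

/-- The cut defined by `p` leaves out a proportion `ρ` of the vertices, has at least a proportion
`ξ` inside and `υ` outside, and the two configurations that are responsible for crossing edges have
density at most `γ`. -/
structure ApproxCut [Fintype V] (K : TripleSystem V) (p : Fin 4 → V) (ρ ξ υ γ : ℝ) : Prop where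
  rest_le : density (fun u => ¬ K.Inner p u ∧ ¬ K.Outer p u) ≤ ρ
  le_inner : ξ ≤ density (K.Inner p)
  le_outer : υ ≤ density (K.Outer p)
  innerInnerOuter_le : density (K.InnerInnerOuter p) ≤ γ
  innerOuterOuterPair_le : density (K.InnerOuterOuterPair p) ≤ γ

section Subtype

variable [Fintype V] [DecidableEq V] {v : V} {P : V → Prop}
  [DecidablePred fun u : {u // u ≠ v} => P u] {c : ℝ}

theorem le_density_of_le_card_filter_ne (h : c * Fintype.card V ≤ #{u : {u // u ≠ v} | P u}) :
    c ≤ density P := by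
  classical
  rw [density_eq_card_div, le_div_iff₀ (Nat.cast_pos.2 (Fintype.card_pos_iff.2 ⟨v⟩))]
  exact h.trans (Nat.cast_le.2
    (card_le_card_of_injOn Subtype.val (fun u => by simp) Subtype.val_injective.injOn))

theorem density_le_of_card_filter_ne_lt (h : #{u : {u // u ≠ v} | P u} < c * Fintype.card V)
    (hc : 1 ≤ c * Fintype.card V) : density P ≤ 2 * c := by
  classical
  have card_le : #{u | P u} ≤ #{u : {u // u ≠ v} | P u} + 1 := by
    rw [← card_map (Function.Embedding.subtype _), ← card_singleton v]
    refine (card_le_card fun u hu => ?_).trans (card_union_le _ _)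
    by_cases huv : u = v <;> simp_all
  rify at card_le
  rw [density_eq_card_div, div_le_iff₀ (Nat.cast_pos.2 (Fintype.card_pos_iff.2 ⟨v⟩))]
  linarith

end Subtype

section ExactCut

variable {v : V} {x₀ x₁ y₀ : {u // u ≠ v}}

theorem inner_iff_innerSide {u : {u // u ≠ v}} :
    K.Inner ![v, x₀, x₁, y₀] u ↔ InnerSide (K.link v) x₀ x₁ y₀ u := Iff.rfl

theorem outer_iff_outerSide {u : {u // u ≠ v}} :
    K.Outer ![v, x₀, x₁, y₀] u ↔ OuterSide (K.link v) x₀ x₁ u :=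
  and_iff_right u.2

theorem Inner.ne {p : Fin 4 → V} {u : V} (h : K.Inner p u) : u ≠ p 0 :=
  h.1.elim (fun h => (ne₁₃ h).symm) (fun h => (ne₁₃ h).symm)

variable [Fintype V] {a b : ℝ}

theorem D2Free.not_innerInnerOuter [DecidableEq V] (hK : K.D2Free)
    (h : IsCut (K.link v) a b x₀ x₁ y₀) (w : Fin 4 → V) :
    ¬ K.InnerInnerOuter ![v, x₀, x₁, y₀] w := by
  have not_edge : ∀ {x y}, K.Inner ![v, x₀, x₁, y₀] x → K.Outer ![v, x₀, x₁, y₀] y →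
      ¬ K.Edge v x y := fun {x y} hx hy =>
    h.not_adj ⟨x, hx.ne⟩ ⟨y, hy.1⟩ hx (outer_iff_outerSide.1 hy)
  have not_edge_of_link : ∀ {x x' y}, K.Inner ![v, x₀, x₁, y₀] x →
      K.Inner ![v, x₀, x₁, y₀] x' → K.Outer ![v, x₀, x₁, y₀] y → K.Edge v x x' →
      ¬ K.Edge x x' y := fun hx hx' hy hv hxy =>
    hK _ _ _ _ ⟨rotate hv, hxy, hy.1.symm, fun h => not_edge hx hy (K.swap₁₂ h),
      fun h => not_edge hx' hy (K.swap₁₂ h)⟩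
  rintro ⟨hx, hx', hy, hedge⟩
  rcases h.adj_or_exists_adj ⟨_, hx.ne⟩ ⟨_, hx'.ne⟩ hx hx'
      (fun heq => K.ne₁₂ hedge (congrArg Subtype.val heq)) with hv | ⟨⟨z, _⟩, hz, hxz, hx'z⟩
  · exact not_edge_of_link hx hx' hy hv hedge
  · have hlink : ¬ K.Edge v (w 0) (w 1) := fun hv => not_edge_of_link hx hx' hy hv hedge
    have hxx'z : K.Edge (w 0) (w 1) z := by_contra fun hne =>
      hK v z (w 0) (w 1) ⟨K.swap₂₃ hxz, K.swap₂₃ hx'z, K.ne₁₂ hedge, hlink,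
        fun h => hne (rotate h)⟩
    exact hK (w 0) (w 1) z (w 2) ⟨hxx'z, hedge, fun hzy => not_edge hx hy (hzy ▸ hxz),
      not_edge_of_link hx hz hy hxz, not_edge_of_link hx' hz hy hx'z⟩

theorem D2Free.not_innerOuterOuterPair [DecidableEq V] (hK : K.D2Free)
    (h : IsCut (K.link v) a b x₀ x₁ y₀) (w : Fin 4 → V) :
    ¬ K.InnerOuterOuterPair ![v, x₀, x₁, y₀] w := by
  rintro ⟨hne, hx, hx', hy, hy', hedge, hedge'⟩
  exact hK (w 2) (w 3) (w 0) (w 1) ⟨rotate hedge, rotate hedge', hne,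
    fun he => hK.not_innerInnerOuter h ![w 0, w 1, w 2, w 2] ⟨hx, hx', hy, rotate he⟩,
    fun he => hK.not_innerInnerOuter h ![w 0, w 1, w 3, w 3] ⟨hx, hx', hy', rotate he⟩⟩

theorem D2Free.approxCut_of_isCut [DecidableEq V] (hK : K.D2Free) {α β : ℝ}
    (hα : 1 ≤ α * Fintype.card V)
    (h : IsCut (K.link v) (α * Fintype.card V) (β * Fintype.card V) x₀ x₁ y₀) :
    K.ApproxCut ![v, x₀, x₁, y₀] (2 * α) β α 0 := by
  classical
  have hrest := h.card_rest_lt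
  have hinner := h.le_card_inner
  have houter := h.le_card_outer
  simp only [← inner_iff_innerSide, ← outer_iff_outerSide (y₀ := y₀)] at hrest hinner houter
  exact ⟨density_le_of_card_filter_ne_lt hrest hα, le_density_of_le_card_filter_ne hinner,
    le_density_of_le_card_filter_ne houter, (density_eq_zero_iff.2 (hK.not_innerInnerOuter h)).le,
    (density_eq_zero_iff.2 (hK.not_innerOuterOuterPair h)).le⟩

theorem linkDensity_le_of_sum_degree_le [DecidableEq V] [∀ u, DecidablePred ((K.link v).Adj u)]
    {δ : ℝ} (hδ : 0 ≤ δ) (h : ∑ u, (#{w | (K.link v).Adj u w} : ℝ) ≤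
      Fintype.card {u // u ≠ v} * (δ * Fintype.card V)) : K.linkDensity v ≤ δ := by
  classical
  have hV : (0 : ℝ) < Fintype.card V := Nat.cast_pos.2 (Fintype.card_pos_iff.2 ⟨v⟩)
  have hcard : (Fintype.card {u // u ≠ v} : ℝ) ≤ Fintype.card V :=
    Nat.cast_le.2 (Fintype.card_subtype_le _)
  have card_le : #{w : Fin 2 → V | K.Edge v (w 0) (w 1)} ≤ ∑ u, #{w | (K.link v).Adj u w} := by
    rw [← card_sigma]
    refine card_le_card_of_surjOn (fun x => ![x.1, x.2]) fun w hw => ?_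
    have hw' : K.Edge v (w 0) (w 1) := by simpa using hw
    refine ⟨⟨⟨w 0, (K.ne₁₂ hw').symm⟩, ⟨w 1, (ne₁₃ hw').symm⟩⟩, ?_, ?_⟩
    · exact mem_coe.2 (mem_sigma.2 ⟨mem_univ _, mem_filter.2 ⟨mem_univ _, hw'⟩⟩)
    · ext i
      fin_cases i <;> rfl
  rify at card_le
  rw [linkDensity, density_eq_card_div, div_le_iff₀ (by simpa using pow_pos hV 2)]
  simp only [Fintype.card_fun, Fintype.card_fin, Nat.cast_pow]
  calc _ ≤ Fintype.card {u // u ≠ v} * (δ * Fintype.card V) := card_le.trans h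
    _ ≤ Fintype.card V * (δ * Fintype.card V) :=
        mul_le_mul_of_nonneg_right hcard (by positivity)
    _ = δ * Fintype.card V ^ 2 := by ring

theorem D2Free.exists_approxCut (hK : K.D2Free) {α β : ℝ} (hα : 1 ≤ α * Fintype.card V)
    (hβ : 2 ≤ β * Fintype.card V) (hv : β + 4 * α < K.linkDensity v)
    (hv' : β + 4 * α < K.compl.linkDensity v) :
    ∃ p, K.ApproxCut p (2 * α) β α 0 ∨ K.compl.ApproxCut p (2 * α) β α 0 := by
  classical
  have hV : (0 : ℝ) < Fintype.card V := Nat.cast_pos.2 (Fintype.card_pos_iff.2 ⟨v⟩)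
  have hα_pos : 0 < α := pos_of_mul_pos_left (by linarith) hV.le
  have hβ_pos : 0 < β := pos_of_mul_pos_left (by linarith) hV.le
  have hV_three : 2 < Fintype.card V := by
    rify
    have : β < 1 := by linarith [hv.trans_le (density_le_one _)]
    nlinarith
  have hcard : 2 ≤ Fintype.card {u // u ≠ v} := by
    simp only [ne_eq, Fintype.card_subtype_compl, Fintype.card_unique]
    lia
  have hsum : β * Fintype.card V + 4 * (α * Fintype.card V) =
      (β + 4 * α) * Fintype.card V := by ring
  rcases (hK.p4Free_link v).sparseOrCut (zero_lt_one.trans_le hα) hβ hcard with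
    (h | ⟨x₀, x₁, y₀, h⟩) | (h | ⟨x₀, x₁, y₀, h⟩)
  · rw [hsum] at h
    exact absurd (linkDensity_le_of_sum_degree_le (by positivity) h) hv.not_ge
  · exact ⟨_, .inl (hK.approxCut_of_isCut hα h)⟩
  · rw [hsum] at h
    simp only [← link_compl] at h
    exact absurd (linkDensity_le_of_sum_degree_le (by positivity) h) hv'.not_ge
  · rw [← link_compl] at h
    exact ⟨_, .inr (hK.compl.approxCut_of_isCut hα h)⟩

end ExactCut

end TripleSystem

/-! ### Random samples -/

namespace TripleSystem

variable {S V : Type*} {K : TripleSystem V} {f : S → V}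

/-- `w 0`, `w 1`, `w 2` form an edge, and `w 0`, `w 1`, `w 3` a non-edge. -/
def IsMixed (K : TripleSystem V) (w : Fin 4 → V) : Prop :=
  K.Edge (w 0) (w 1) (w 2) ∧ K.compl.Edge (w 0) (w 1) (w 3)

theorem outer_comap (hf : f.Injective) (e : Fin 4 → S) :
    (K.comap f).Outer e = fun u => K.Outer (f ∘ e) (f u) :=
  funext fun _ => propext (and_congr hf.ne_iff.symm Iff.rfl)

theorem isMixed_comap (hf : f.Injective) :
    (K.comap f).IsMixed = fun w => K.IsMixed (f ∘ w) := by
  ext w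
  rw [IsMixed, ← comap_compl hf]
  rfl

theorem IsD2.injective {w : Fin 4 → V} (h : K.IsD2 (w 0) (w 1) (w 2) (w 3)) : w.Injective := by
  obtain ⟨h₀₁₂, h₀₁₃, h₂₃, -⟩ := h
  have := K.ne₁₂ h₀₁₂
  have := ne₁₃ h₀₁₂
  have := ne₂₃ h₀₁₂
  have := ne₁₃ h₀₁₃
  have := ne₂₃ h₀₁₃
  intro i j hij
  fin_cases i <;> fin_cases j <;> grind

end TripleSystem

section Sampling

variable {V : Type*} [Fintype V] [Nonempty V] {m : ℕ} {t : ℝ}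

/-- A bound for the probability that `m` random blocks of four vertices misjudge, by more than `t`,
one of the tests defined by four vertices of the sample. -/
noncomputable def sampleError (m : ℕ) (t : ℝ) : ℝ :=
  (m * 4) ^ 4 * Real.exp (-((t / 2) ^ 2 / 16)) ^ (m - 4)

theorem density_exists_blocks_add_lt_le {φ : (Fin 4 → V) → (Fin 4 → V) → ℝ}
    (hφ₀ : ∀ q ω, 0 ≤ φ q ω) (hφ₁ : ∀ q ω, φ q ω ≤ 1) (ht : 0 ≤ t) (ht₁ : t ≤ 1)
    (hm : 8 ≤ t * (m - 4)) :
    density (fun f : Fin m × Fin 4 → V => ∃ e : Fin 4 → Fin m × Fin 4,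
      𝔼 i, φ (f ∘ e) (fun k => f (i, k)) + t < 𝔼 ω, φ (f ∘ e) ω) ≤ sampleError m t := by
  have hm_pos : (0 : ℝ) < m := by nlinarith
  have : Nonempty (Fin m) := ⟨0, Nat.cast_pos.1 hm_pos⟩
  simpa [sampleError] using density_exists_expect_add_lt_le (ι := Fin m) hφ₀ hφ₁ ht ht₁
    (by norm_num; linarith)

theorem density_exists_density_add_lt_le (P : (Fin 4 → V) → V → Prop) (ht : 0 ≤ t) (ht₁ : t ≤ 1)
    (hm : 8 ≤ t * (m - 4)) :
    density (fun f : Fin m × Fin 4 → V => ∃ e : Fin 4 → Fin m × Fin 4,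
      density (fun k => P (f ∘ e) (f k)) + t < density (P (f ∘ e))) ≤ sampleError m t := by
  classical
  refine (density_mono fun f ⟨e, he⟩ => ⟨e, ?_⟩).trans (density_exists_blocks_add_lt_le
    (φ := fun q ω => density fun k => P q (ω k)) (fun _ _ => density_nonneg _)
    (fun _ _ => density_le_one _) ht ht₁ hm)
  convert he using 2
  · simp only [density]
    rw [← expect_product' univ univ fun i k => if P (f ∘ e) (f (i, k)) then (1 : ℝ) else 0]
    rfl
  · simp only [density]
    rw [expect_comm]
    simp_rw [fun k : Fin 4 => expect_apply k fun v => if P (f ∘ e) v then (1 : ℝ) else 0]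
    exact expect_const univ_nonempty _

theorem density_exists_forall_not_le (Q : (Fin 4 → V) → (Fin 4 → V) → Prop) (ht : 0 ≤ t)
    (ht₁ : t ≤ 1) (hm : 8 ≤ t * (m - 4)) :
    density (fun f : Fin m × Fin 4 → V => ∃ e : Fin 4 → Fin m × Fin 4,
      (∀ w : Fin 4 → Fin m × Fin 4, ¬ Q (f ∘ e) (f ∘ w)) ∧ t < density (Q (f ∘ e))) ≤
        sampleError m t := by
  classical
  refine (density_mono fun f ⟨e, hw, he⟩ => ⟨e, ?_⟩).trans (density_exists_blocks_add_lt_le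
    (φ := fun q ω => if Q q ω then 1 else 0) (fun _ _ => by positivity)
    (fun _ _ => by split_ifs <;> norm_num) ht ht₁ hm)
  have blocks : ∀ i, ¬ Q (f ∘ e) fun k => f (i, k) := fun i => hw fun k => (i, k)
  simp only [blocks, if_false, expect_const_zero, zero_add]
  simpa only [density] using he

namespace TripleSystem

variable {S : Type*} {K : TripleSystem V}

/-- A cut of the sub-hypergraph induced by `f` is, up to an error `t`, a cut of `K`. -/
def RepresentsCuts [Fintype S] (K : TripleSystem V) (f : S → V) (t : ℝ) : Prop :=
  ∀ e ρ ξ υ, (K.comap f).ApproxCut e ρ ξ υ 0 → K.ApproxCut (f ∘ e) (ρ + t) (ξ - t) (υ - t) t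

theorem density_not_representsCuts_le (K : TripleSystem V) (ht : 0 ≤ t) (ht₁ : t ≤ 1)
    (hm : 8 ≤ t * (m - 4)) :
    density (fun f : Fin m × Fin 4 → V => f.Injective ∧ ¬ K.RepresentsCuts f t) ≤
      5 * sampleError m t := by
  have rest := density_exists_density_add_lt_le (fun p u => ¬ K.Inner p u ∧ ¬ K.Outer p u) ht ht₁ hm
  have inner := density_exists_density_add_lt_le (fun p u => ¬ K.Inner p u) ht ht₁ hm
  have outer := density_exists_density_add_lt_le (fun p u => ¬ K.Outer p u) ht ht₁ hm
  have iio := density_exists_forall_not_le K.InnerInnerOuter ht ht₁ hm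
  have ioop := density_exists_forall_not_le K.InnerOuterOuterPair ht ht₁ hm
  have hm_pos : (0 : ℝ) < m := by nlinarith
  have : Nonempty (Fin m) := ⟨0, Nat.cast_pos.1 hm_pos⟩
  refine (density_mono fun f ⟨hf, hK⟩ => ?_).trans <| (density_or_le _ _).trans <|
    (add_le_add rest <| (density_or_le _ _).trans <| add_le_add inner <|
    (density_or_le _ _).trans <| add_le_add outer <| (density_or_le _ _).trans <|
    add_le_add iio ioop).trans_eq (by ring)
  contrapose! hK
  obtain ⟨hrest, hinner, houter, hiio, hioop⟩ := hK
  intro e ρ ξ υ h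
  have hξ := h.le_inner
  have hυ := h.le_outer
  have hρ := h.rest_le
  have hinner_e := hinner e
  have houter_e := houter e
  rw [outer_comap hf] at hρ hυ
  rw [density_not, density_not] at hinner_e houter_e
  refine ⟨(hrest e).trans (add_le_add_left hρ t), ?_, ?_, hiio e fun w hw => ?_,
    hioop e fun w hw => ?_⟩
  · linarith [show ξ ≤ density fun k => K.Inner (f ∘ e) (f k) from hξ]
  · linarith
  · exact density_eq_zero_iff.1 (h.innerInnerOuter_le.antisymm (density_nonneg _)) w
      ⟨hw.1, hw.2.1, (outer_comap hf e).ge _ hw.2.2.1, hw.2.2.2⟩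
  · obtain ⟨hne, hx, hx', hy, hy', hedge⟩ := hw
    exact density_eq_zero_iff.1 (h.innerOuterOuterPair_le.antisymm (density_nonneg _)) w
      ⟨fun h => hne (congrArg f h), hx, hx',
        (outer_comap hf e).ge _ hy, (outer_comap hf e).ge _ hy', hedge⟩

/-- The proportion of the quadruples of vertices that induce a copy of `D₂`. -/
noncomputable def d2Density (K : TripleSystem V) : ℝ :=
  density fun w : Fin 4 → V => K.IsD2 (w 0) (w 1) (w 2) (w 3)

theorem exists_le_linkDensity {c : ℝ} (h : c ≤ density K.IsMixed) :
    ∃ v, c ≤ K.linkDensity v ∧ c ≤ K.compl.linkDensity v := by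
  rw [density_cons] at h
  obtain ⟨v, -, hv⟩ := exists_le_of_le_expect (a := c) univ_nonempty h
  have h₁ : (![0, 1] : Fin 2 → Fin 3).Injective := by decide
  have h₂ : (![0, 2] : Fin 2 → Fin 3).Injective := by decide
  refine ⟨v, ?_, ?_⟩
  · rw [linkDensity, ← density_comp_injective h₁ fun w : Fin 2 → V => K.Edge v (w 0) (w 1)]
    exact hv.trans (density_mono fun w hw => hw.1)
  · rw [linkDensity, ← density_comp_injective h₂ fun w : Fin 2 → V => K.compl.Edge v (w 0) (w 1)]
    exact hv.trans (density_mono fun w hw => hw.2)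

/-- The proportion of the triples of vertices that form an edge. -/
noncomputable def edgeDensity (K : TripleSystem V) : ℝ :=
  density fun w : Fin 3 → V => K.Edge (w 0) (w 1) (w 2)

theorem density_isMixed_comp (K : TripleSystem V) {ι : Type*} [Fintype ι] [DecidableEq ι]
    {e : Fin 4 → ι} (he : e.Injective) :
    density (fun f : ι → V => K.IsMixed (f ∘ e)) = density K.IsMixed :=
  density_comp_injective he _

/-- Exchange the vertices of an edge one by one for those of a non-edge. Somewhere on the way an
edge turns into a non-edge, unless two of the vertices coincide. -/
theorem edgeDensity_mul_edgeDensity_compl_le (K : TripleSystem V) :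
    K.edgeDensity * K.compl.edgeDensity ≤ 3 * density K.IsMixed + 3 * (1 / Fintype.card V) := by
  have mixed : ∀ {e : Fin 4 → Fin 3 ⊕ Fin 3}, e.Injective →
      density (fun f : Fin 3 ⊕ Fin 3 → V => K.IsMixed (f ∘ e)) ≤ density K.IsMixed :=
    fun he => (K.density_isMixed_comp he).le
  have equal : ∀ {i j : Fin 3 ⊕ Fin 3}, i ≠ j →
      density (fun f : Fin 3 ⊕ Fin 3 → V => f i = f j) ≤ 1 / Fintype.card V :=
    fun hij => (density_apply_eq_apply hij).le
  have h₂ : (![.inl 0, .inl 1, .inl 2, .inr 2] : Fin 4 → Fin 3 ⊕ Fin 3).Injective := by decide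
  have h₁ : (![.inl 0, .inr 2, .inl 1, .inr 1] : Fin 4 → Fin 3 ⊕ Fin 3).Injective := by decide
  have h₀ : (![.inr 1, .inr 2, .inl 0, .inr 0] : Fin 4 → Fin 3 ⊕ Fin 3).Injective := by decide
  rw [edgeDensity, edgeDensity, ← density_and]
  refine (density_mono fun f hf => ?_).trans <| (density_or_le _ _).trans <|
    (add_le_add (mixed h₂) <| (density_or_le _ _).trans <| add_le_add (mixed h₁) <|
    (density_or_le _ _).trans <| add_le_add (mixed h₀) <| (density_or_le _ _).trans <|
    add_le_add (equal (i := .inl 0) (j := .inr 2) (by decide)) <| (density_or_le _ _).trans <|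
    add_le_add (equal (i := .inl 1) (j := .inr 2) (by decide))
      (equal (i := .inl 0) (j := .inr 1) (by decide))).trans_eq (by ring)
  obtain ⟨hx, hy⟩ : K.Edge (f (.inl 0)) (f (.inl 1)) (f (.inl 2)) ∧
    K.compl.Edge (f (.inr 0)) (f (.inr 1)) (f (.inr 2)) := hf
  by_contra! h
  obtain ⟨h₂, h₁, h₀, h₀₂, h₁₂, h₀₁⟩ := h
  have edge₂ : K.Edge (f (.inl 0)) (f (.inl 1)) (f (.inr 2)) := by_contra fun hn =>
    h₂ ⟨hx, K.ne₁₂ hx, h₀₂, h₁₂, hn⟩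
  have edge₁ : K.Edge (f (.inl 0)) (f (.inr 2)) (f (.inr 1)) := by_contra fun hn =>
    h₁ ⟨K.swap₂₃ edge₂, h₀₂, h₀₁, (ne₂₃ hy).symm, hn⟩
  exact h₀ ⟨rotate (K.swap₂₃ edge₁), rotate hy⟩

variable [Fintype S] [DecidableEq S]

theorem density_not_d2Free_comap_le (K : TripleSystem V) :
    density (fun f : S → V => f.Injective ∧ ¬ (K.comap f).D2Free) ≤
      Fintype.card S ^ 4 * K.d2Density := by
  calc density (fun f : S → V => f.Injective ∧ ¬ (K.comap f).D2Free)
      ≤ density (fun f : S → V => ∃ w : Fin 4 → S,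
          K.IsD2 (f (w 0)) (f (w 1)) (f (w 2)) (f (w 3))) := density_mono fun f ⟨hf, hK⟩ => by
        simp only [D2Free, not_forall, not_not] at hK
        obtain ⟨a, b, c, d, habc, habd, hcd, h⟩ := hK
        exact ⟨![a, b, c, d], habc, habd, hf.ne hcd, h⟩
    _ ≤ Fintype.card (Fin 4 → S) * K.d2Density := density_exists_le _ fun w => by
        by_cases hw : w.Injective
        · exact (density_comp_injective hw fun x : Fin 4 → V =>
            K.IsD2 (x 0) (x 1) (x 2) (x 3)).le
        · exact (density_eq_zero_iff.2 fun f h =>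
            hw (IsD2.injective (w := f ∘ w) h).of_comp).trans_le
            (density_nonneg _)
    _ = Fintype.card S ^ 4 * K.d2Density := by simp

theorem le_expect_density_isMixed_comp (K : TripleSystem V) (hS : 32 ≤ Fintype.card S) :
    density K.IsMixed / 2 ≤
      𝔼 f : S → V, density fun w : Fin 4 → S => K.IsMixed (f ∘ w) := by
  classical
  have hS' : (32 : ℝ) ≤ Fintype.card S := Nat.ofNat_le_cast.2 hS
  have : Nonempty S := Fintype.card_pos_iff.1 (by linarith)
  have half_le : (2 : ℝ)⁻¹ ≤ 𝔼 w : Fin 4 → S, if w.Injective then 1 else 0 := by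
    have hinj := density_not_injective_le (ι := Fin 4) (V := S)
    rw [density_not, Fintype.card_fin] at hinj
    have hsmall : (4 : ℝ) ^ 2 / Fintype.card S ≤ 1 / 2 := by
      rw [div_le_iff₀ (by positivity)]
      linarith
    have : 2⁻¹ ≤ density fun w : Fin 4 → S => w.Injective := by
      push_cast at hinj
      linarith
    rw [density] at this
    convert this
  calc density K.IsMixed / 2
      ≤ 𝔼 w : Fin 4 → S, density K.IsMixed * if w.Injective then 1 else 0 := by
        rw [← mul_expect, div_eq_mul_inv]
        exact mul_le_mul_of_nonneg_left half_le (density_nonneg _)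
    _ ≤ 𝔼 w : Fin 4 → S, density fun f : S → V => K.IsMixed (f ∘ w) :=
        expect_le_expect fun w _ => by
          split_ifs with hw
          · rw [mul_one, density_comp_injective hw]
          · rw [mul_zero]
            exact density_nonneg _
    _ = 𝔼 f : S → V, density fun w : Fin 4 → S => K.IsMixed (f ∘ w) := expect_comm _ _ _

theorem exists_good_sample {K : TripleSystem V} {c : ℝ} (ht : 0 ≤ t) (ht₁ : t ≤ 1)
    (hm : 8 ≤ t * (m - 4)) (hc : 0 ≤ c) (hmix : 4 * c ≤ density K.IsMixed)
    (hsmall : (m * 4) ^ 2 / Fintype.card V + (m * 4) ^ 4 * K.d2Density + 10 * sampleError m t < c) :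
    ∃ f : Fin m × Fin 4 → V, f.Injective ∧ (K.comap f).D2Free ∧ K.RepresentsCuts f t ∧
      K.compl.RepresentsCuts f t ∧ c ≤ density (K.comap f).IsMixed := by
  by_contra! hbad
  have hm_ge : 12 ≤ m := by
    rify
    nlinarith
  have hcard : 32 ≤ Fintype.card (Fin m × Fin 4) := by
    rw [Fintype.card_prod, Fintype.card_fin, Fintype.card_fin]
    lia
  have hgood := le_density_of_two_mul_le_expect (fun f => density_le_one _) hc
    ((by linarith : 2 * c ≤ density K.IsMixed / 2).trans (K.le_expect_density_isMixed_comp hcard))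
  have hinj := density_not_injective_le (ι := Fin m × Fin 4) (V := V)
  have hfree := K.density_not_d2Free_comap_le (S := Fin m × Fin 4)
  have hcut := K.density_not_representsCuts_le ht ht₁ hm
  have hcut' := K.compl.density_not_representsCuts_le ht ht₁ hm
  simp only [Fintype.card_prod, Fintype.card_fin, Nat.cast_mul, Nat.cast_ofNat] at hinj hfree
  refine hgood.not_gt <| lt_of_le_of_lt (density_mono fun f hf => ?_) <|
    lt_of_le_of_lt ((density_or_le _ _).trans <| add_le_add hinj <| (density_or_le _ _).trans <|
    add_le_add hfree <| (density_or_le _ _).trans <| add_le_add hcut hcut') (by linarith)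
  by_contra! h
  obtain ⟨hf_inj, hf_free, hf_cut, hf_cut'⟩ := h
  refine (hbad f hf_inj (hf_free hf_inj) (hf_cut hf_inj) (hf_cut' hf_inj)).not_ge ?_
  rwa [isMixed_comap hf_inj]

theorem exists_approxCut_of_mixed {K : TripleSystem V} {c α : ℝ} (ht : 0 ≤ t) (ht₁ : t ≤ 1)
    (hm : 8 ≤ t * (m - 4)) (hc : 0 < c) (hmix : 4 * c ≤ density K.IsMixed)
    (hsmall : (m * 4) ^ 2 / Fintype.card V + (m * 4) ^ 4 * K.d2Density + 10 * sampleError m t < c)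
    (hα : 1 ≤ α * (m * 4)) (hαc : 16 * α ≤ c) :
    ∃ p, K.ApproxCut p (2 * α + t) (c / 2 - t) (α - t) t ∨
      K.compl.ApproxCut p (2 * α + t) (c / 2 - t) (α - t) t := by
  obtain ⟨f, hf, hfree, hcut, hcut', hc_le⟩ := exists_good_sample ht ht₁ hm hc.le hmix hsmall
  have hm_pos : (0 : ℝ) < m := by nlinarith
  have : Nonempty (Fin m) := ⟨0, Nat.cast_pos.1 hm_pos⟩
  obtain ⟨v, hv, hv'⟩ := exists_le_linkDensity hc_le
  obtain ⟨p, hp | hp⟩ := hfree.exists_approxCut (v := v) (α := α) (β := c / 2)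
    (by simpa using hα) (by simp; nlinarith) (by linarith) (by linarith)
  · exact ⟨f ∘ p, .inl (hcut _ _ _ _ hp)⟩
  · rw [← comap_compl hf] at hp
    exact ⟨f ∘ p, .inr (hcut' _ _ _ _ hp)⟩

end TripleSystem

end Sampling

/-! ### Sparse cuts -/

namespace TripleSystem

section Crossing

variable {V : Type*} [Fintype V] {K : TripleSystem V}

/-- The vertices `w i` form an edge that meets both `Y` and its complement. -/
def IsCrossing (K : TripleSystem V) (Y : V → Prop) (w : Fin 3 → V) : Prop :=
  K.Edge (w 0) (w 1) (w 2) ∧ (∃ i, Y (w i)) ∧ ∃ i, ¬ Y (w i)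

variable [Nonempty V]

theorem density_isCrossing_le (K : TripleSystem V) (Y : V → Prop) :
    density (K.IsCrossing Y) ≤
      3 * (density (fun w : Fin 3 → V =>
          (¬ Y (w 0) ∧ ¬ Y (w 1)) ∧ Y (w 2) ∧ K.Edge (w 0) (w 1) (w 2)) +
        density fun w : Fin 3 → V =>
          ¬ Y (w 0) ∧ (Y (w 1) ∧ Y (w 2)) ∧ K.Edge (w 0) (w 1) (w 2)) := by
  let P (w : Fin 3 → V) : Prop := (¬ Y (w 0) ∧ ¬ Y (w 1)) ∧ Y (w 2) ∧ K.Edge (w 0) (w 1) (w 2)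
  let Q (w : Fin 3 → V) : Prop := ¬ Y (w 0) ∧ (Y (w 1) ∧ Y (w 2)) ∧ K.Edge (w 0) (w 1) (w 2)
  have exists_shift : ∀ w, K.IsCrossing Y w →
      ∃ s : Fin 3, P (fun i => w (i + s)) ∨ Q (fun i => w (i + s)) := by
    rintro w ⟨hedge, ⟨i, hi⟩, ⟨j, hj⟩⟩
    have hedge₁ := rotate hedge
    have hedge₂ := rotate hedge₁
    have some_mem : Y (w 0) ∨ Y (w 1) ∨ Y (w 2) := by
      fin_cases i <;> tauto
    have some_not_mem : ¬ Y (w 0) ∨ ¬ Y (w 1) ∨ ¬ Y (w 2) := by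
      fin_cases j <;> tauto
    suffices (P w ∨ Q w) ∨ (P ![w 1, w 2, w 0] ∨ Q ![w 1, w 2, w 0]) ∨
        (P ![w 2, w 0, w 1] ∨ Q ![w 2, w 0, w 1]) by
      rcases this with h | h | h
      exacts [⟨0, h⟩, ⟨1, h⟩, ⟨2, h⟩]
    simp only [P, Q, Matrix.cons_val, hedge, hedge₁, hedge₂, and_true]
    by_cases h₀ : Y (w 0) <;> by_cases h₁ : Y (w 1) <;> by_cases h₂ : Y (w 2) <;> simp_all
  calc density (K.IsCrossing Y)
      ≤ density (fun w : Fin 3 → V => ∃ s : Fin 3,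
          P (fun i => w (i + s)) ∨ Q (fun i => w (i + s))) := density_mono exists_shift
    _ ≤ Fintype.card (Fin 3) * (density P + density Q) := density_exists_le _ fun s =>
          (density_or_le _ _).trans <| add_le_add
            (density_comp_injective (add_left_injective s) P).le
            (density_comp_injective (add_left_injective s) Q).le
    _ = 3 * (density P + density Q) := by simp

variable {p : Fin 4 → V} {ρ ξ υ γ : ℝ}

theorem ApproxCut.density_two_not_outer_le (h : K.ApproxCut p ρ ξ υ γ) :
    density (fun w : Fin 3 → V => (¬ K.Outer p (w 0) ∧ ¬ K.Outer p (w 1)) ∧ K.Outer p (w 2) ∧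
      K.Edge (w 0) (w 1) (w 2)) ≤ γ + 2 * (ρ * density (K.Outer p)) := by
  have hcast : (![0, 1, 2] : Fin 3 → Fin 4).Injective := by decide
  have inner : density (fun w : Fin 3 → V => K.Inner p (w 0) ∧ K.Inner p (w 1) ∧
      K.Outer p (w 2) ∧ K.Edge (w 0) (w 1) (w 2)) ≤ γ := by
    rw [← density_comp_injective hcast]
    exact h.innerInnerOuter_le
  have rest : ∀ {i : Fin 3}, i ≠ 2 → density (fun w : Fin 3 → V =>
      (¬ K.Inner p (w i) ∧ ¬ K.Outer p (w i)) ∧ K.Outer p (w 2)) ≤ ρ * density (K.Outer p) :=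
    fun hi => (density_apply_and_apply hi (fun u => ¬ K.Inner p u ∧ ¬ K.Outer p u) _).trans_le
      (mul_le_mul_of_nonneg_right h.rest_le (density_nonneg _))
  refine (density_mono fun w hw => ?_).trans <| (density_or_le _ _).trans <|
    (add_le_add inner <| (density_or_le _ _).trans <| add_le_add
      (rest (i := 0) (by decide)) (rest (i := 1) (by decide))).trans_eq (by ring)
  tauto

theorem ApproxCut.density_two_outer_le (h : K.ApproxCut p ρ ξ υ γ) {κ : ℝ} (hκ : 0 ≤ κ)
    (hγκ : γ + 1 / Fintype.card V ≤ κ ^ 2) :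
    density (fun w : Fin 3 → V => ¬ K.Outer p (w 0) ∧ (K.Outer p (w 1) ∧ K.Outer p (w 2)) ∧
      K.Edge (w 0) (w 1) (w 2)) ≤ κ + ρ * density (K.Outer p) := by
  have inner : density (fun w : Fin 3 → V => K.Inner p (w 0) ∧ K.Outer p (w 1) ∧
      K.Outer p (w 2) ∧ K.Edge (w 0) (w 1) (w 2)) ≤ κ := by
    let P (x : V) (b : Fin 2 → V) : Prop :=
      K.Inner p x ∧ K.Outer p (b 0) ∧ K.Outer p (b 1) ∧ K.Edge x (b 0) (b 1)
    refine le_of_sq_le_sq ?_ hκ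
    calc density (fun w : Fin 3 → V => P (w 0) ![w 1, w 2]) ^ 2
        = (𝔼 x, density (P x)) ^ 2 := by
          rw [density_cons]
          rfl
      _ ≤ 𝔼 x, 𝔼 x', density fun b => P x b ∧ P x' b := sq_expect_density_le P
      _ = density (fun w : Fin 4 → V => P (w 0) ![w 2, w 3] ∧ P (w 1) ![w 2, w 3]) := by
          simp only [density_cons (n := 3), density_cons (n := 2)]
          rfl
      _ ≤ density (K.InnerOuterOuterPair p) + density (fun w : Fin 4 → V => w 0 = w 1) :=
          (density_mono fun w ⟨⟨hx, hy, hy', hedge⟩, hx', _, _, hedge'⟩ => or_iff_not_imp_right.2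
              fun hne => ⟨hne, hx, hx', hy, hy', hedge, hedge'⟩).trans
            (density_or_le _ _)
      _ ≤ γ + 1 / Fintype.card V :=
          add_le_add h.innerOuterOuterPair_le (density_apply_eq_apply zero_ne_one).le
      _ ≤ κ ^ 2 := hγκ
  have rest : density (fun w : Fin 3 → V =>
      (¬ K.Inner p (w 0) ∧ ¬ K.Outer p (w 0)) ∧ K.Outer p (w 1)) ≤ ρ * density (K.Outer p) :=
    (density_apply_and_apply zero_ne_one (fun u => ¬ K.Inner p u ∧ ¬ K.Outer p u) _).trans_le
      (mul_le_mul_of_nonneg_right h.rest_le (density_nonneg _))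
  refine (density_mono fun w hw => ?_).trans <| (density_or_le _ _).trans <|
    add_le_add inner rest
  tauto

theorem ApproxCut.density_isCrossing_le (h : K.ApproxCut p ρ ξ υ γ) (hξ : 0 ≤ ξ) {η κ : ℝ}
    (hη : 0 ≤ η) (hκ : 0 ≤ κ) (hγκ : γ + 1 / Fintype.card V ≤ κ ^ 2)
    (hpair : γ + κ ≤ η * ξ * υ / 2) (hrest : 3 * ρ ≤ η * ξ / 2) :
    density (K.IsCrossing (K.Outer p)) ≤
      3 * η * (density (fun u => ¬ K.Outer p u) * density (K.Outer p)) := by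
  have hinner : ξ ≤ density fun u => ¬ K.Outer p u :=
    h.le_inner.trans (density_mono fun u hu hu' => hu'.2 hu.1)
  have hcross := K.density_isCrossing_le (K.Outer p)
  have htwo := h.density_two_not_outer_le
  have hone := h.density_two_outer_le hκ hγκ
  have hy := density_nonneg (K.Outer p)
  have : η * ξ * υ ≤ η * ξ * density (K.Outer p) :=
    mul_le_mul_of_nonneg_left h.le_outer (by positivity)
  have : η * ξ * density (K.Outer p) ≤
      η * (density (fun u => ¬ K.Outer p u) * density (K.Outer p)) := by
    rw [← mul_assoc]
    gcongr
  have : 3 * ρ * density (K.Outer p) ≤ η * ξ / 2 * density (K.Outer p) :=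
    mul_le_mul_of_nonneg_right hrest hy
  linarith

end Crossing

end TripleSystem

section Parameters

theorem ten_mul_sampleError_le {t : ℝ} {m : ℕ} (ht : 0 < t) (hm : 8 ≤ m) (htm : 1 ≤ t ^ 12 * m) :
    10 * sampleError m t ≤ 2 ^ 54 * t ^ 2 := by
  have hm' : (8 : ℝ) ≤ m := Nat.ofNat_le_cast.2 hm
  set x : ℝ := m * t ^ 2 / 128 with hx_def
  have hx : 0 < x := by positivity
  have hx_le : x ≤ (m - 4 : ℕ) * ((t / 2) ^ 2 / 16) := by
    rw [Nat.cast_sub (by lia)]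
    push_cast
    nlinarith [sq_nonneg t]
  have exp_le : Real.exp (-((t / 2) ^ 2 / 16)) ^ (m - 4) ≤ 120 / x ^ 5 := by
    calc Real.exp (-((t / 2) ^ 2 / 16)) ^ (m - 4)
        = Real.exp (-((m - 4 : ℕ) * ((t / 2) ^ 2 / 16))) := by
          rw [← Real.exp_nat_mul, mul_neg]
      _ ≤ (Real.exp x)⁻¹ := by
          rw [← Real.exp_neg]
          exact Real.exp_le_exp.2 (neg_le_neg hx_le)
      _ ≤ (x ^ 5 / (Nat.factorial 5 : ℕ))⁻¹ :=
          inv_anti₀ (by positivity) (Real.pow_div_factorial_le_exp x hx.le 5)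
      _ = 120 / x ^ 5 := by
          rw [inv_div]
          norm_num [Nat.factorial]
  calc 10 * sampleError m t ≤ 10 * ((m * 4) ^ 4 * (120 / x ^ 5)) := by
        unfold sampleError
        gcongr
    _ = 1200 * 2 ^ 43 / (m * t ^ 10) := by
        rw [hx_def]
        field_simp
        norm_num
    _ ≤ 2 ^ 54 * t ^ 2 := by
        rw [div_le_iff₀ (by positivity)]
        nlinarith

theorem exists_sampleSize {t : ℝ} (ht : 0 < t) (ht_le : t ≤ 1 / 8) :
    ∃ m : ℕ, 8 ≤ t * (m - 4) ∧ (m * 4) ^ 4 * t ^ 53 ≤ t ∧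
      10 * sampleError m t ≤ 2 ^ 54 * t ^ 2 := by
  set m := ⌈(t ^ 12)⁻¹⌉₊
  have htm : 1 ≤ t ^ 12 * m := by
    rw [← inv_le_iff_one_le_mul₀' (by positivity)]
    exact Nat.le_ceil _
  have ht_pow : t ^ 11 ≤ (1 / 8) ^ 11 := by gcongr
  have hm_large : 64 ≤ t * m := by nlinarith [mul_pos ht (pow_pos ht 11)]
  have hm_gt : (512 : ℝ) ≤ m := by nlinarith
  have hm_le : t ^ 13 * (m * 4) ≤ 1 := by
    have hceil : (m : ℝ) ≤ (t ^ 12)⁻¹ + 1 := (Nat.ceil_lt_add_one (by positivity)).le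
    have ht_one : t ^ 13 ≤ t := pow_le_of_le_one ht.le (by linarith) (by norm_num)
    calc t ^ 13 * (m * 4) ≤ t ^ 13 * (((t ^ 12)⁻¹ + 1) * 4) := by gcongr
      _ = 4 * (t + t ^ 13) := by field_simp
      _ ≤ 1 := by linarith
  refine ⟨m, by linarith, ?_, ten_mul_sampleError_le ht (by rify; linarith) htm⟩
  calc (m * 4) ^ 4 * t ^ 53 = (t ^ 13 * (m * 4)) ^ 4 * t := by ring
    _ ≤ 1 ^ 4 * t := by gcongr
    _ = t := by ring

end Parameters

namespace TripleSystem

variable {V : Type*} [Fintype V] [Nonempty V] {K : TripleSystem V}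

theorem exists_approxCut_of_le {c α t : ℝ} (ht : 0 < t) (ht_le : t ≤ 1 / 8) (htα : t ≤ α)
    (hαc : 16 * α ≤ c) (htc : 2 * t + 2 ^ 54 * t ^ 2 < c) (hmix : 4 * c ≤ density K.IsMixed)
    (hV : 1 / Fintype.card V ≤ t ^ 53) (hd2 : K.d2Density ≤ t ^ 53) :
    ∃ p, K.ApproxCut p (2 * α + t) (c / 2 - t) (α - t) t ∨
      K.compl.ApproxCut p (2 * α + t) (c / 2 - t) (α - t) t := by
  obtain ⟨m, hm, hmt, herror⟩ := exists_sampleSize ht ht_le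
  have hm_one : (1 : ℝ) ≤ m * 4 := by nlinarith
  refine exists_approxCut_of_mixed ht.le (by linarith) hm (by nlinarith) hmix ?_ (by nlinarith) hαc
  calc (m * 4) ^ 2 / Fintype.card V + (m * 4) ^ 4 * K.d2Density + 10 * sampleError m t
      ≤ (m * 4) ^ 4 * t ^ 53 + (m * 4) ^ 4 * t ^ 53 + 2 ^ 54 * t ^ 2 := by
        rw [div_eq_mul_one_div]
        gcongr
        · norm_num
    _ ≤ 2 * t + 2 ^ 54 * t ^ 2 := by linarith
    _ < c := htc

/-- A partition of the vertices into two nonempty parts `Y`, `Yᶜ` that is crossed by few edges. -/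
def HasSparseCut (K : TripleSystem V) (η : ℝ) : Prop :=
  ∃ Y : V → Prop, (∃ u, Y u) ∧ (∃ u, ¬ Y u) ∧
    density (K.IsCrossing Y) ≤ 3 * η * (density (fun u => ¬ Y u) * density Y)

theorem ApproxCut.hasSparseCut {p : Fin 4 → V} {ρ ξ υ γ : ℝ} (h : K.ApproxCut p ρ ξ υ γ)
    (hξ : 0 < ξ) (hυ : 0 < υ) {η κ : ℝ} (hη : 0 ≤ η) (hκ : 0 ≤ κ)
    (hγκ : γ + 1 / Fintype.card V ≤ κ ^ 2) (hpair : γ + κ ≤ η * ξ * υ / 2)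
    (hrest : 3 * ρ ≤ η * ξ / 2) : K.HasSparseCut η := by
  obtain ⟨u, hu⟩ := exists_of_density_pos (hξ.trans_le h.le_inner)
  exact ⟨K.Outer p, exists_of_density_pos (hυ.trans_le h.le_outer), ⟨u, fun hu' => hu'.2 hu.1⟩,
    h.density_isCrossing_le hξ.le hη hκ hγκ hpair hrest⟩

theorem ApproxCut.hasSparseCut_of_le {p : Fin 4 → V} {c α t η κ : ℝ}
    (h : K.ApproxCut p (2 * α + t) (c / 2 - t) (α - t) t) (ht : 0 < t) (htc : t ≤ c / 4)
    (htα : t ≤ α / 2) (hη : 0 ≤ η) (hκ : 0 ≤ κ) (hγκ : t + 1 / Fintype.card V ≤ κ ^ 2)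
    (hpair : t + κ ≤ η * c * α / 16) (hrest : 3 * (2 * α + t) ≤ η * c / 8) :
    K.HasSparseCut η := by
  have hξ : c / 4 ≤ c / 2 - t := by linarith
  have hυ : α / 2 ≤ α - t := by linarith
  have hξ_pos : 0 < c / 2 - t := by linarith
  have hηξ : η * (c / 4) ≤ η * (c / 2 - t) := mul_le_mul_of_nonneg_left hξ hη
  have hηξυ : η * (c / 4) * (α / 2) ≤ η * (c / 2 - t) * (α - t) :=
    mul_le_mul hηξ hυ (by linarith) (by positivity)
  exact h.hasSparseCut hξ_pos (by linarith) hη hκ hγκ (by linarith) (by linarith)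

theorem le_density_isMixed {η : ℝ} (hη : 0 ≤ η) (hK : η ≤ K.edgeDensity)
    (hK' : η ≤ K.compl.edgeDensity) (hV : 1 / Fintype.card V ≤ η ^ 2 / 12) :
    η ^ 2 / 4 ≤ density K.IsMixed := by
  have hprod := K.edgeDensity_mul_edgeDensity_compl_le
  have : η * η ≤ K.edgeDensity * K.compl.edgeDensity := mul_le_mul hK hK' hη (hη.trans hK)
  linarith

theorem hasSparseCut_or_of_le_edgeDensity {η t : ℝ} (hη : 0 < η) (hη_le : η ≤ 1 / 2)
    (ht : t = η ^ 12 / 2 ^ 39) (hV : 1 / Fintype.card V ≤ t ^ 53) (hd2 : K.d2Density ≤ t ^ 53)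
    (hK : η ≤ K.edgeDensity) (hK' : η ≤ K.compl.edgeDensity) :
    K.HasSparseCut η ∨ K.compl.HasSparseCut η := by
  have ht_pos : 0 < t := ht ▸ by positivity
  have pow_le : ∀ i j : ℕ, η ^ (i + j) ≤ (1 / 2) ^ i * η ^ j := fun i j => by
    rw [pow_add]
    gcongr
  have h₂ : t ≤ η ^ 2 / 2 ^ 49 := by linarith [pow_le 10 2]
  have h₃ : t ≤ η ^ 3 / 2 ^ 48 := by linarith [pow_le 9 3]
  have h₆ : t ≤ η ^ 6 / 2 ^ 45 := by linarith [pow_le 6 6]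
  have h_sq : 2 ^ 54 * t ^ 2 ≤ η ^ 2 / 2 ^ 46 := by
    rw [ht]
    linarith [pow_le 22 2]
  have hη₂ : η ^ 2 ≤ 1 / 4 := by linarith [pow_le 2 0]
  have hVt : 1 / (Fintype.card V : ℝ) ≤ t :=
    hV.trans (pow_le_of_le_one ht_pos.le (by linarith) (by norm_num))
  have hmix := le_density_isMixed hη.le hK hK' (by linarith)
  set c := η ^ 2 / 16 with hc
  set α := η ^ 3 / 2 ^ 10 with hα
  have hαc : 16 * α ≤ c := by linarith [pow_le 1 2]
  have hηc : η * c = η ^ 3 / 16 := by ring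
  have hηcα : η * c * α = η ^ 6 / 2 ^ 14 := by ring
  have hsparse : ∀ {K' : TripleSystem V} {p}, K'.ApproxCut p (2 * α + t) (c / 2 - t) (α - t) t →
      K'.HasSparseCut η := fun h =>
    h.hasSparseCut_of_le (κ := η ^ 6 / 2 ^ 19) ht_pos (by linarith) (by linarith) hη.le
      (by positivity) (by linarith) (by linarith) (by linarith)
  obtain ⟨p, h⟩ := exists_approxCut_of_le ht_pos (by linarith) (by linarith) hαc
    (by linarith) (by linarith) hV hd2
  exact h.imp hsparse hsparse

/-- `K` has few edges, or can be cut into two parts crossed by few edges. -/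
def IsSparseOrCut (K : TripleSystem V) (η : ℝ) : Prop := K.edgeDensity ≤ η ∨ K.HasSparseCut η

theorem exists_isSparseOrCut_or_compl : ∃ N : ℕ, ∀ η : ℝ, 0 < η → η ≤ 1 / 2 →
    ∀ (V : Type u) [Fintype V] [Nonempty V] (K : TripleSystem V), 1 ≤ η ^ N * Fintype.card V →
      K.d2Density ≤ η ^ N → K.IsSparseOrCut η ∨ K.compl.IsSparseOrCut η := by
  refine ⟨51 * 53, fun η hη hη_le V _ _ K hV hd2 => ?_⟩
  have pow_le : η ^ (51 * 53) ≤ (η ^ 12 / 2 ^ 39) ^ 53 := by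
    rw [pow_mul]
    gcongr
    calc η ^ 51 = η ^ 12 * η ^ 39 := by ring
      _ ≤ η ^ 12 * (1 / 2) ^ 39 := by gcongr
      _ = η ^ 12 / 2 ^ 39 := by ring
  have hV' : 1 / (Fintype.card V : ℝ) ≤ η ^ (51 * 53) := by
    rwa [div_le_iff₀ (by positivity)]
  by_cases hK : K.edgeDensity ≤ η
  · exact .inl (.inl hK)
  by_cases hK' : K.compl.edgeDensity ≤ η
  · exact .inr (.inl hK')
  exact (hasSparseCut_or_of_le_edgeDensity hη hη_le rfl (hV'.trans pow_le) (hd2.trans pow_le)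
    (not_le.1 hK).le (not_le.1 hK').le).imp .inr .inr

end TripleSystem

/-! ### Recursion along sparse cuts -/

namespace TripleSystem

section EdgeDist

variable {V : Type u} {Y : V → Prop}

/-- The hypergraph without edges. -/
def empty (V : Type*) : TripleSystem V where
  Edge _ _ _ := False
  swap₁₂ h := h
  swap₂₃ h := h
  ne₁₂ h := h.elim

theorem d2Free_empty : (empty V).D2Free := fun _ _ _ _ h => h.1

/-- The disjoint union of hypergraphs on `Y` and on its complement, without crossing edges. -/
def glue (K₁ : TripleSystem {u // Y u}) (K₂ : TripleSystem {u // ¬ Y u}) : TripleSystem V where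
  Edge a b c := (∃ ha hb hc, K₁.Edge ⟨a, ha⟩ ⟨b, hb⟩ ⟨c, hc⟩) ∨
    ∃ ha hb hc, K₂.Edge ⟨a, ha⟩ ⟨b, hb⟩ ⟨c, hc⟩
  swap₁₂ := Or.imp (fun ⟨ha, hb, hc, h⟩ => ⟨hb, ha, hc, K₁.swap₁₂ h⟩)
    fun ⟨ha, hb, hc, h⟩ => ⟨hb, ha, hc, K₂.swap₁₂ h⟩
  swap₂₃ := Or.imp (fun ⟨ha, hb, hc, h⟩ => ⟨ha, hc, hb, K₁.swap₂₃ h⟩)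
    fun ⟨ha, hb, hc, h⟩ => ⟨ha, hc, hb, K₂.swap₂₃ h⟩
  ne₁₂ := Or.rec (fun ⟨_, _, _, h⟩ hab => K₁.ne₁₂ h (Subtype.ext hab))
    fun ⟨_, _, _, h⟩ hab => K₂.ne₁₂ h (Subtype.ext hab)

theorem D2Free.glue {K₁ : TripleSystem {u // Y u}} {K₂ : TripleSystem {u // ¬ Y u}}
    (h₁ : K₁.D2Free) (h₂ : K₂.D2Free) : (glue K₁ K₂).D2Free := by
  rintro a b c d ⟨⟨ha, hb, hc, habc⟩ | ⟨ha, hb, hc, habc⟩, ⟨ha', _, hd, habd⟩ | ⟨ha', _, hd, habd⟩,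
    hcd, hacd, hbcd⟩
  · exact h₁ ⟨a, ha⟩ ⟨b, hb⟩ ⟨c, hc⟩ ⟨d, hd⟩ ⟨habc, habd, fun h => hcd (congrArg Subtype.val h),
      fun h => hacd (.inl ⟨_, _, _, h⟩), fun h => hbcd (.inl ⟨_, _, _, h⟩)⟩
  · exact ha' ha
  · exact ha ha'
  · exact h₂ ⟨a, ha⟩ ⟨b, hb⟩ ⟨c, hc⟩ ⟨d, hd⟩ ⟨habc, habd, fun h => hcd (congrArg Subtype.val h),
      fun h => hacd (.inr ⟨_, _, _, h⟩), fun h => hbcd (.inr ⟨_, _, _, h⟩)⟩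

variable [Fintype V] {K : TripleSystem V}

open scoped Classical in
/-- The number of ordered triples that are edges of exactly one of `K` and `K'`. -/
noncomputable def edgeDist (K K' : TripleSystem V) : ℕ :=
  #{w : Fin 3 → V | ¬ (K.Edge (w 0) (w 1) (w 2) ↔ K'.Edge (w 0) (w 1) (w 2))}

theorem edgeDist_le (K K' : TripleSystem V) : edgeDist K K' ≤ Fintype.card V ^ 3 := by
  classical
  exact (card_le_univ _).trans_eq (by simp)

theorem edgeDist_empty (K : TripleSystem V) :
    (edgeDist K (empty V) : ℝ) = K.edgeDensity * Fintype.card V ^ 3 := by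
  classical
  rw [edgeDensity]
  simpa [edgeDist, empty] using
    card_filter_eq_density_mul fun w : Fin 3 → V => K.Edge (w 0) (w 1) (w 2)

theorem edgeDist_compl_le (K K' : TripleSystem V) : edgeDist K.compl K'.compl ≤ edgeDist K K' := by
  classical
  refine card_le_card (monotone_filter_right _ fun w _ h => ?_)
  simp only [compl_edge] at h
  tauto

theorem edgeDist_glue_le (K : TripleSystem V) (K₁ : TripleSystem {u // Y u})
    (K₂ : TripleSystem {u // ¬ Y u}) [Fintype {u // Y u}] [Fintype {u // ¬ Y u}] :
    (edgeDist K (glue K₁ K₂) : ℝ) ≤ edgeDist (K.comap Subtype.val) K₁ +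
      edgeDist (K.comap Subtype.val) K₂ + density (K.IsCrossing Y) * Fintype.card V ^ 3 := by
  classical
  have hcross := card_filter_eq_density_mul (K.IsCrossing Y)
  simp only [Fintype.card_fun, Fintype.card_fin, Nat.cast_pow] at hcross
  rw [← hcross]
  norm_cast
  let val₁ (w : Fin 3 → {u // Y u}) : Fin 3 → V := fun i => w i
  let val₂ (w : Fin 3 → {u // ¬ Y u}) : Fin 3 → V := fun i => w i
  refine (card_le_card fun w hw => ?_).trans <| (card_union_le _ _).trans <|
    Nat.add_le_add_right ((card_union_le _ _).trans <|
      add_le_add (card_image_le (f := val₁)) (card_image_le (f := val₂))) _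
  have hw : ¬ (K.Edge (w 0) (w 1) (w 2) ↔ (glue K₁ K₂).Edge (w 0) (w 1) (w 2)) :=
    (mem_filter.1 hw).2
  by_cases hY : ∀ i, Y (w i)
  · refine mem_union_left _ (mem_union_left _ (mem_image.2 ⟨fun i => ⟨w i, hY i⟩, ?_, rfl⟩))
    exact mem_filter.2 ⟨mem_univ _, by simpa [glue, comap, hY] using hw⟩
  by_cases hY' : ∀ i, ¬ Y (w i)
  · refine mem_union_left _ (mem_union_right _ (mem_image.2 ⟨fun i => ⟨w i, hY' i⟩, ?_, rfl⟩))
    exact mem_filter.2 ⟨mem_univ _, by simpa [glue, comap, hY'] using hw⟩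
  · refine mem_union_right _ (mem_filter.2 ⟨mem_univ _, ?_, not_forall_not.1 hY', not_forall.1 hY⟩)
    refine by_contra fun hK => hw (iff_of_false hK ?_)
    rintro (⟨h₀, h₁, h₂, -⟩ | ⟨h₀, h₁, h₂, -⟩)
    · exact hY fun i => by fin_cases i <;> assumption
    · exact hY' fun i => by fin_cases i <;> assumption

theorem d2Density_comap_mul_le {S : Type*} [Fintype S] {f : S → V} (hf : f.Injective) :
    (K.comap f).d2Density * Fintype.card S ^ 4 ≤ K.d2Density * Fintype.card V ^ 4 := by
  classical
  have hS := card_filter_eq_density_mul fun w : Fin 4 → S =>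
    (K.comap f).IsD2 (w 0) (w 1) (w 2) (w 3)
  have hV := card_filter_eq_density_mul fun w : Fin 4 → V => K.IsD2 (w 0) (w 1) (w 2) (w 3)
  simp only [Fintype.card_fun, Fintype.card_fin, Nat.cast_pow] at hS hV
  rw [d2Density, d2Density, ← hS, ← hV, Nat.cast_le]
  refine card_le_card_of_injOn (f ∘ ·) (fun w hw => ?_) hf.comp_left.injOn
  obtain ⟨habc, habd, hcd, h⟩ : (K.comap f).IsD2 (w 0) (w 1) (w 2) (w 3) := by simpa using hw
  exact mem_coe.2 (mem_filter.2 ⟨mem_univ _, habc, habd, hf.ne hcd, h⟩)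

end EdgeDist

section Recursion

variable {V : Type u} [Fintype V] {K : TripleSystem V} {η L b : ℝ}

/-- Changing at most `b` ordered triples makes `K` induced `D₂`-free. -/
def IsNearD2Free (K : TripleSystem V) (b : ℝ) : Prop := ∃ K', K'.D2Free ∧ edgeDist K K' ≤ b

theorem IsNearD2Free.mono {b' : ℝ} (h : K.IsNearD2Free b) (hb : b ≤ b') : K.IsNearD2Free b' :=
  h.imp fun _ => And.imp_right fun hdist => hdist.trans hb

theorem IsNearD2Free.of_compl (h : K.compl.IsNearD2Free b) : K.IsNearD2Free b := by
  obtain ⟨K', hK', hdist⟩ := h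
  refine ⟨K'.compl, hK'.compl, (Nat.cast_le.2 ?_).trans hdist⟩
  simpa only [compl_compl] using edgeDist_compl_le K.compl K'

theorem IsNearD2Free.compl (h : K.IsNearD2Free b) : K.compl.IsNearD2Free b :=
  .of_compl (by rwa [compl_compl])

theorem IsSparseOrCut.isNearD2Free [Nonempty V] (h : K.IsSparseOrCut η)
    (ih : ∀ Y : V → Prop, (∃ u, ¬ Y u) → ∀ [Fintype {u // Y u}],
      (K.comap (Subtype.val : {u // Y u} → V)).IsNearD2Free
        (η * Fintype.card {u // Y u} ^ 3 + L ^ 2 * Fintype.card {u // Y u})) :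
    K.IsNearD2Free (η * Fintype.card V ^ 3 + L ^ 2 * Fintype.card V) := by
  classical
  rcases h with hsparse | ⟨Y, ⟨y, hy⟩, ⟨z, hz⟩, hcross⟩
  · refine ⟨empty V, d2Free_empty, ?_⟩
    rw [edgeDist_empty]
    exact le_add_of_le_of_nonneg (by gcongr) (by positivity)
  obtain ⟨K₁, hK₁, hdist₁⟩ := ih Y ⟨z, hz⟩
  obtain ⟨K₂, hK₂, hdist₂⟩ := ih (fun u => ¬ Y u) ⟨y, not_not.2 hy⟩
  refine ⟨glue K₁ K₂, hK₁.glue hK₂, (edgeDist_glue_le K K₁ K₂).trans ?_⟩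
  have hsum : (Fintype.card V : ℝ) = Fintype.card {u // Y u} + Fintype.card {u // ¬ Y u} := by
    rw [← Nat.cast_add, ← Fintype.card_congr (Equiv.sumCompl Y), Fintype.card_sum]
  have card_eq : ∀ (P : V → Prop) [Fintype {u // P u}],
      (Fintype.card {u // P u} : ℝ) = density P * Fintype.card V :=
    fun P _ => by rw [← card_filter_eq_density_mul, Fintype.card_subtype]
  have hcross' : density (K.IsCrossing Y) * Fintype.card V ^ 3 ≤ 3 * η *
      Fintype.card {u // Y u} * Fintype.card {u // ¬ Y u} * Fintype.card V := by
    rw [card_eq Y, card_eq fun u => ¬ Y u]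
    calc _ ≤ _ := mul_le_mul_of_nonneg_right hcross (by positivity)
      _ = _ := by ring
  rw [hsum] at hcross' ⊢
  linarith

theorem isNearD2Free_of_card_le (h : Fintype.card V ≤ L) (hη : 0 ≤ η) (K : TripleSystem V) :
    K.IsNearD2Free (η * Fintype.card V ^ 3 + L ^ 2 * Fintype.card V) := by
  refine ⟨empty V, d2Free_empty, ?_⟩
  calc (edgeDist K (empty V) : ℝ) ≤ Fintype.card V ^ 3 := by exact_mod_cast edgeDist_le K _
    _ = Fintype.card V ^ 2 * Fintype.card V := by ring
    _ ≤ L ^ 2 * Fintype.card V := by gcongr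
    _ ≤ _ := le_add_of_nonneg_left (by positivity)

theorem isNearD2Free_of_forall_isSparseOrCut {V : Type u} [Fintype V] (hη : 0 ≤ η) (hL : 0 ≤ L)
    (K : TripleSystem V)
    (h : ∀ (S : Type u) [Fintype S] [Nonempty S] (f : S → V), f.Injective →
      L ≤ Fintype.card S → (K.comap f).IsSparseOrCut η ∨ (K.comap f).compl.IsSparseOrCut η) :
    K.IsNearD2Free (η * Fintype.card V ^ 3 + L ^ 2 * Fintype.card V) := by
  induction hn : Fintype.card V using Nat.strong_induction_on generalizing V with
  | h n ih =>
    subst hn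
    have ih : ∀ Y : V → Prop, (∃ u, ¬ Y u) → ∀ [Fintype {u // Y u}],
        (K.comap (Subtype.val : {u // Y u} → V)).IsNearD2Free
          (η * Fintype.card {u // Y u} ^ 3 + L ^ 2 * Fintype.card {u // Y u}) :=
      fun Y ⟨_, hu⟩ _ => ih _ (Fintype.card_subtype_lt hu) _
        (fun S _ _ f hf => h S (Subtype.val ∘ f) (Subtype.val_injective.comp hf)) rfl
    by_cases hV : (Fintype.card V : ℝ) ≤ L
    · exact isNearD2Free_of_card_le hV hη K
    have : Nonempty V := Fintype.card_pos_iff.1 (Nat.cast_pos.1 (hL.trans_lt (not_le.1 hV)))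
    rcases h V id Function.injective_id (not_le.1 hV).le with hK | hK
    · exact hK.isNearD2Free ih
    · refine .of_compl (IsSparseOrCut.isNearD2Free hK fun Y hY _ => ?_)
      rw [comap_compl Subtype.val_injective]
      exact (ih Y hY).compl

theorem exists_isNearD2Free : ∃ N : ℕ, ∀ η : ℝ, 0 < η → η ≤ 1 / 2 →
    ∀ (V : Type u) [Fintype V] (K : TripleSystem V) (L : ℝ), 1 ≤ η ^ N * L →
      K.d2Density * Fintype.card V ^ 4 ≤ η ^ N * L ^ 4 →
        K.IsNearD2Free (η * Fintype.card V ^ 3 + L ^ 2 * Fintype.card V) := by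
  obtain ⟨N, hN⟩ := exists_isSparseOrCut_or_compl.{u}
  refine ⟨N, fun η hη hη_le V _ K L hL hd2 => ?_⟩
  have hL_pos : 0 < L := pos_of_mul_pos_right (zero_lt_one.trans_le hL) (by positivity)
  refine isNearD2Free_of_forall_isSparseOrCut hη.le hL_pos.le K
    fun S _ _ f hf hS => hN η hη hη_le S _ (hL.trans (by gcongr)) ?_
  have hS_pos : (0 : ℝ) < Fintype.card S ^ 4 := by positivity
  refine le_of_mul_le_mul_right ?_ hS_pos
  calc (K.comap f).d2Density * Fintype.card S ^ 4 ≤ K.d2Density * Fintype.card V ^ 4 :=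
        d2Density_comap_mul_le hf
    _ ≤ η ^ N * L ^ 4 := hd2
    _ ≤ η ^ N * Fintype.card S ^ 4 := by gcongr

end Recursion

theorem exists_isNearD2Free_mul_card_pow :
    ∃ N : ℕ, ∀ ε : ℝ, 0 < ε → ε ≤ 1 → ∀ (V : Type u) [Fintype V] (K : TripleSystem V),
      1 ≤ (ε / 2) ^ (N + 1) * Fintype.card V → K.d2Density ≤ (ε / 2) ^ (N + 4) →
        K.IsNearD2Free (ε * Fintype.card V ^ 3) := by
  obtain ⟨N, hN⟩ := exists_isNearD2Free.{u}
  refine ⟨N, fun ε hε hε_le V _ K hV hd2 => ?_⟩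
  have hL : 1 ≤ (ε / 2) ^ N * (ε / 2 * Fintype.card V) := by rwa [← mul_assoc, ← pow_succ]
  refine (hN (ε / 2) (by positivity) (by linarith) V K _ hL ?_).mono ?_
  · calc K.d2Density * Fintype.card V ^ 4 ≤ (ε / 2) ^ (N + 4) * Fintype.card V ^ 4 := by gcongr
      _ = (ε / 2) ^ N * (ε / 2 * Fintype.card V) ^ 4 := by ring
  · calc ε / 2 * Fintype.card V ^ 3 + (ε / 2 * Fintype.card V) ^ 2 * Fintype.card V
          = (ε / 2 + ε / 2 * (ε / 2)) * (Fintype.card V : ℝ) ^ 3 := by ring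
      _ ≤ ε * Fintype.card V ^ 3 := by gcongr; nlinarith

end TripleSystem

/-! ### Sets of triples -/

namespace TripleSystem

section OfEdges

variable {V : Type*} [DecidableEq V] {E : Finset (Finset V)} {a b c d : V}

/-- The hypergraph whose edges are the 3-element members of `E`. -/
def ofEdges (E : Finset (Finset V)) : TripleSystem V where
  Edge a b c := #{a, b, c} = 3 ∧ {a, b, c} ∈ E
  swap₁₂ {a b c} := by simp only [insert_comm a b, imp_self]
  swap₂₃ {a b c} := by simp only [pair_comm b c, imp_self]
  ne₁₂ := by
    rintro a _ c h rfl
    have := card_le_two (a := a) (b := c)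
    grind

theorem IsD2.card_eq_four {K : TripleSystem V} (h : K.IsD2 a b c d) : #{a, b, c, d} = 4 := by
  obtain ⟨habc, habd, hcd, -⟩ := h
  exact Finset.card_eq_four.2 ⟨a, b, c, d, K.ne₁₂ habc, ne₁₃ habc, ne₁₃ habd, ne₂₃ habc,
    ne₂₃ habd, hcd, rfl⟩

theorem isD2_ofEdges_iff (h : #{a, b, c, d} = 4) :
    (ofEdges E).IsD2 a b c d ↔
      {x ∈ ({a, b, c, d} : Finset V) | ({a, b, c, d} : Finset V).erase x ∈ E} = {c, d} := by
  obtain ⟨hab, hac, had, hbc, hbd, hcd⟩ :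
      a ≠ b ∧ a ≠ c ∧ a ≠ d ∧ b ≠ c ∧ b ≠ d ∧ c ≠ d := by
    refine ⟨?_, ?_, ?_, ?_, ?_, ?_⟩ <;> rintro rfl <;> grind [card_le_three]
  have ha : ({a, b, c, d} : Finset V).erase a = {b, c, d} := by grind
  have hb : ({a, b, c, d} : Finset V).erase b = {a, c, d} := by grind
  have hc : ({a, b, c, d} : Finset V).erase c = {a, b, d} := by grind
  have hd : ({a, b, c, d} : Finset V).erase d = {a, b, c} := by grind
  have edge_iff {x y z : V} (hxy : x ≠ y) (hxz : x ≠ z) (hyz : y ≠ z) :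
      (ofEdges E).Edge x y z ↔ {x, y, z} ∈ E :=
    and_iff_right (card_eq_three.2 ⟨x, y, z, hxy, hxz, hyz, rfl⟩)
  rw [IsD2, edge_iff hab hac hbc, edge_iff hab had hbd, edge_iff hac had hcd,
    edge_iff hbc hbd hcd, Finset.ext_iff]
  simp only [mem_filter, mem_insert, mem_singleton]
  constructor
  · rintro ⟨habc, habd, -, hacd, hbcd⟩ x
    grind
  · intro h
    have hEa := h a
    have hEb := h b
    have hEc := h c
    have hEd := h d
    grind

theorem card_filter_subset_eq (hE : ∀ e ∈ E, #e = 3) {S : Finset V} (hS : #S = 4) :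
    #{e ∈ E | e ⊆ S} = #{x ∈ S | S.erase x ∈ E} := by
  symm
  refine card_bij (fun x _ => S.erase x) (fun x hx => ?_) (fun x hx y hy h => ?_) fun e he => ?_
  · exact mem_filter.2 ⟨(mem_filter.1 hx).2, erase_subset x S⟩
  · exact erase_injOn S (mem_filter.1 hx).1 (mem_filter.1 hy).1 h
  · obtain ⟨heE, heS⟩ := mem_filter.1 he
    obtain ⟨x, hx⟩ : ∃ x, S \ e = {x} := card_eq_one.1 <| by
      rw [card_sdiff_of_subset heS, hS, hE e heE]
    have hxe : S.erase x = e := by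
      rw [← sdiff_singleton_eq_erase, ← hx, Finset.sdiff_sdiff_eq_self heS]
    have hxS : x ∈ S := (mem_sdiff.1 (hx ▸ mem_singleton_self x)).1
    exact ⟨x, mem_filter.2 ⟨hxS, hxe ▸ heE⟩, hxe⟩

theorem Edge.of_insert_eq {x y z : V} {K : TripleSystem V} (h : K.Edge x y z)
    (habc : #{a, b, c} = 3) (he : ({x, y, z} : Finset V) = {a, b, c}) : K.Edge a b c := by
  have h₁ := @K.swap₁₂
  have h₂ := @K.swap₂₃
  have : a ≠ b := by rintro rfl; grind [card_le_two]
  have : a ≠ c := by rintro rfl; grind [card_le_two]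
  have : b ≠ c := by rintro rfl; grind [card_le_two]
  have ha : a = x ∨ a = y ∨ a = z := by simpa using he.ge (mem_insert_self a _)
  have hb : b = x ∨ b = y ∨ b = z := by simpa using he.ge (by simp : b ∈ _)
  have hc : c = x ∨ c = y ∨ c = z := by simpa using he.ge (by simp : c ∈ _)
  rcases ha with rfl | rfl | rfl <;> rcases hb with rfl | rfl | rfl <;>
    rcases hc with rfl | rfl | rfl <;> grind

variable [Fintype V]

open scoped Classical in
/-- The edges of `K` as a set of 3-element sets. -/
noncomputable def toEdges (K : TripleSystem V) : Finset (Finset V) :=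
  image (fun w : Fin 3 → V => {w 0, w 1, w 2}) {w | K.Edge (w 0) (w 1) (w 2)}

variable {K : TripleSystem V}

theorem mem_toEdges {e : Finset V} :
    e ∈ K.toEdges ↔ ∃ a b c, K.Edge a b c ∧ {a, b, c} = e := by
  classical
  constructor
  · intro h
    obtain ⟨w, hw, he⟩ := mem_image.1 h
    exact ⟨w 0, w 1, w 2, (mem_filter.1 hw).2, he⟩
  · rintro ⟨a, b, c, h, rfl⟩
    exact mem_image.2 ⟨![a, b, c], mem_filter.2 ⟨mem_univ _, h⟩, rfl⟩

theorem card_of_mem_toEdges {e : Finset V} (he : e ∈ K.toEdges) : #e = 3 := by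
  obtain ⟨a, b, c, h, rfl⟩ := mem_toEdges.1 he
  exact card_eq_three.2 ⟨a, b, c, K.ne₁₂ h, ne₁₃ h, ne₂₃ h, rfl⟩

theorem ofEdges_toEdges (K : TripleSystem V) : ofEdges K.toEdges = K := by
  have h {a b c : V} : (ofEdges K.toEdges).Edge a b c ↔ K.Edge a b c := by
    refine ⟨fun ⟨hcard, hmem⟩ => ?_, fun h => ?_⟩
    · obtain ⟨x, y, z, h, he⟩ := mem_toEdges.1 hmem
      exact Edge.of_insert_eq h hcard he
    · have hmem : {a, b, c} ∈ K.toEdges := mem_toEdges.2 ⟨a, b, c, h, rfl⟩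
      exact ⟨card_of_mem_toEdges hmem, hmem⟩
  cases K
  simp only [ofEdges, mk.injEq] at h ⊢
  ext a b c
  exact h

theorem card_symmDiff_toEdges_le (hE : ∀ e ∈ E, #e = 3) (K : TripleSystem V) :
    #((E \ K.toEdges) ∪ (K.toEdges \ E)) ≤ edgeDist (ofEdges E) K := by
  classical
  refine (card_le_card fun e he => ?_).trans
    (card_image_le (f := fun w : Fin 3 → V => ({w 0, w 1, w 2} : Finset V)))
  have hcard : #e = 3 := by
    rcases mem_union.1 he with he | he
    · exact hE e (mem_sdiff.1 he).1
    · exact card_of_mem_toEdges (mem_sdiff.1 he).1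
  obtain ⟨a, b, c, -, -, -, rfl⟩ := card_eq_three.1 hcard
  refine mem_image.2 ⟨![a, b, c], mem_filter.2 ⟨mem_univ _, fun h => ?_⟩, rfl⟩
  have hmem : {a, b, c} ∈ E ↔ {a, b, c} ∈ K.toEdges := by
    rw [← ofEdges_toEdges K] at h
    simpa [ofEdges, hcard] using h
  grind

end OfEdges

section Count

variable {V : Type} [Fintype V] [DecidableEq V] {E : Finset (Finset V)}

theorem D2Free.inducedD2Free (hE : ∀ e ∈ E, #e = 3) (h : (ofEdges E).D2Free) :
    InducedD2Free E := by
  intro S hS hcard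
  rw [card_filter_subset_eq hE hS] at hcard
  obtain ⟨c, d, hcd, hfilter⟩ := card_eq_two.1 hcard
  have hsub : {c, d} ⊆ S := hfilter ▸ filter_subset _ S
  obtain ⟨a, b, -, hab⟩ : ∃ a b, a ≠ b ∧ S \ {c, d} = {a, b} := card_eq_two.1 <| by
    rw [card_sdiff_of_subset hsub, hS, card_pair hcd]
  have hSeq : S = {a, b, c, d} := by
    rw [← sdiff_union_of_subset hsub, hab, insert_union, singleton_union]
  subst hSeq
  exact h a b c d ((isD2_ofEdges_iff hS).2 hfilter)

theorem d2Density_ofEdges_mul_le (hE : ∀ e ∈ E, #e = 3) :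
    (ofEdges E).d2Density * Fintype.card V ^ 4 ≤ 256 * inducedD2Count E := by
  classical
  have hcount := card_filter_eq_density_mul fun w : Fin 4 → V =>
    (ofEdges E).IsD2 (w 0) (w 1) (w 2) (w 3)
  simp only [Fintype.card_fun, Fintype.card_fin, Nat.cast_pow] at hcount
  rw [d2Density, ← hcount]
  norm_cast
  refine card_le_mul_card_image_of_maps_to
    (f := fun w : Fin 4 → V => ({w 0, w 1, w 2, w 3} : Finset V)) (fun w hw => ?_) 256
    fun S hS => ?_
  · have hD2 := (mem_filter.1 hw).2
    have hcard := hD2.card_eq_four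
    refine mem_filter.2 ⟨mem_powersetCard.2 ⟨subset_univ _, hcard⟩, ?_⟩
    rw [card_filter_subset_eq hE hcard, (isD2_ofEdges_iff hcard).1 hD2, card_pair hD2.2.2.1]
  · have hfibre : ∀ w : Fin 4 → V, {w 0, w 1, w 2, w 3} = S → w ∈ Fintype.piFinset fun _ => S := by
      rintro w rfl
      simp [Fintype.mem_piFinset, Fin.forall_fin_succ]
    calc _ ≤ #(Fintype.piFinset fun _ : Fin 4 => S) :=
          card_le_card fun w hw => hfibre w (mem_filter.1 hw).2
      _ = 256 := by
        rw [Fintype.card_piFinset_const, (mem_powersetCard.1 (mem_filter.1 hS).1).2]; rfl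

theorem IsNearD2Free.exists_inducedD2Free (hE : ∀ e ∈ E, #e = 3) {b : ℝ}
    (h : (ofEdges E).IsNearD2Free b) :
    ∃ E' : Finset (Finset V), (∀ e ∈ E', #e = 3) ∧ InducedD2Free E' ∧
      (#((E \ E') ∪ (E' \ E)) : ℝ) ≤ b := by
  obtain ⟨K, hK, hb⟩ := h
  refine ⟨K.toEdges, fun e => card_of_mem_toEdges, ?_, ?_⟩
  · exact D2Free.inducedD2Free (fun e => card_of_mem_toEdges) (by rwa [ofEdges_toEdges])
  · exact (Nat.cast_le.2 (card_symmDiff_toEdges_le hE K)).trans hb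

end Count

end TripleSystem

theorem rpow_two_pow_div_le {ε : ℝ} (hε : 0 < ε) (hε₁ : ε ≤ 1) (n m : ℕ) :
    ε ^ ((2 : ℝ) ^ (n + m)) / 2 ^ (n + m) ≤ (ε / 2) ^ n / 2 ^ m := by
  have hn : (n : ℝ) ≤ 2 ^ (n + m) := by
    exact_mod_cast (Nat.le_add_right n m).trans Nat.lt_two_pow_self.le
  calc ε ^ ((2 : ℝ) ^ (n + m)) / 2 ^ (n + m) ≤ ε ^ (n : ℝ) / 2 ^ (n + m) := by
        gcongr ?_ / _
        exact Real.rpow_le_rpow_of_exponent_ge hε hε₁ hn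
    _ = (ε / 2) ^ n / 2 ^ m := by rw [Real.rpow_natCast, div_pow, div_div, pow_add]

theorem one_le_rpow_div_mul {ε C x : ℝ} (hε : 0 < ε) (hC : 0 < C) (hx : C * ε ^ (-C) ≤ x) :
    1 ≤ ε ^ C / C * x := by
  have := Real.rpow_pos_of_pos hε C
  calc 1 = ε ^ C / C * (C * ε ^ (-C)) := by rw [Real.rpow_neg hε.le]; field_simp
    _ ≤ ε ^ C / C * x := by gcongr

/-- Polynomial induced removal lemma for `D₂`. -/
theorem induced_D2_removal :
    ∃ C : ℝ, C > 0 ∧ ∀ ε : ℝ, 0 < ε →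
      ∀ (V : Type) [Fintype V] [DecidableEq V] (E : Finset (Finset V)),
        (∀ e ∈ E, e.card = 3) →
        (Fintype.card V : ℝ) ≥ C * ε ^ (-C) →
        (inducedD2Count E : ℝ) < (ε ^ C / C) * (Fintype.card V : ℝ) ^ 4 →
        ∃ E' : Finset (Finset V), (∀ e ∈ E', e.card = 3) ∧ InducedD2Free E' ∧
          (((E \ E') ∪ (E' \ E)).card : ℝ) ≤ ε * (Fintype.card V : ℝ) ^ 3 := by
  obtain ⟨N, hN⟩ := TripleSystem.exists_isNearD2Free_mul_card_pow
  refine ⟨2 ^ (N + 4 + 8), by positivity, fun ε hε V _ _ E hE hn hcount => ?_⟩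
  suffices h : (TripleSystem.ofEdges E).IsNearD2Free (ε * Fintype.card V ^ 3) from
    h.exists_inducedD2Free hE
  obtain hε₁ | hε₁ := lt_or_ge 1 ε
  · refine (TripleSystem.isNearD2Free_of_card_le le_rfl le_rfl _).mono ?_
    nlinarith [pow_nonneg (Nat.cast_nonneg (α := ℝ) (Fintype.card V)) 3]
  have hδ := rpow_two_pow_div_le hε hε₁ (N + 4) 8
  have hone := one_le_rpow_div_mul hε (by positivity) hn
  have hV : (0 : ℝ) < Fintype.card V :=
    pos_of_mul_pos_right (zero_lt_one.trans_le hone) (by positivity)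
  refine hN ε hε hε₁ V _ (hone.trans ?_) (le_of_mul_le_mul_right ?_ (pow_pos hV 4))
  · gcongr
    exact (rpow_two_pow_div_le hε hε₁ (N + 1) 11).trans
      (div_le_self (by positivity) (by norm_num))
  · calc _ ≤ 256 * (inducedD2Count E : ℝ) := TripleSystem.d2Density_ofEdges_mul_le hE
      _ ≤ 256 * ((ε / 2) ^ (N + 4) / 2 ^ 8 * Fintype.card V ^ 4) := by
        gcongr; exact hcount.le.trans (by gcongr)
      _ = _ := by ring
end

section
/- There exists an absolute constant c > 0 such that every induced D₂-free 3-uniform hypergraph on n vertices contains a clique or an independent set of size at least n^c. -/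
/-!
Links of vertices are `P₄`-free graphs, and for a `P₄`-free graph the graph or its complement is
disconnected. Replacing the hypergraph by its complement if necessary, some vertex `v` has a
disconnected link. By `D₂`-freeness, `v` together with a component of its link contains every vertex
that forms an edge with two of its members, so each pair `v, a` lies in a proper closed set.
Conversely, a proper closed set through `v, a` disconnects the link of `a`, so in fact every pair of
vertices lies in a proper closed set.

With `α` and `ω` the independence and clique numbers, `|V| ≤ (α ω) ^ 4` now follows by induction.
If some proper closed set `L` has more than `α ^ 2` vertices, take a large independent set `S`
outside `L`. All but at most `|S| ^ 2` vertices of `L` form no edge with a pair in `S`, and a large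
independent set `S'` among these makes `S ∪ S'` independent; since `t ↦ t ^ 4` is superadditive with
enough room for the error `|S| ^ 2`, the two induction hypotheses add up. If there is no such `L`,
every pair lies in at most `α ^ 2` edges, and since a maximum independent set dominates `V`, already
`|V| ≤ α ^ 4`.
-/

open Finset

/-- `S` is a clique of the 3-uniform hypergraph `E`: every 3-subset of `S` is an edge. -/
def IsHClique {V : Type} [DecidableEq V] (E : Finset (Finset V)) (S : Finset V) : Prop :=
  ∀ t ⊆ S, t.card = 3 → t ∈ E

/-- `S` is an independent set of the 3-uniform hypergraph `E`. -/
def IsHIndep {V : Type} [DecidableEq V] (E : Finset (Finset V)) (S : Finset V) : Prop :=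
  ∀ t ⊆ S, t.card = 3 → t ∉ E

section Cograph

variable {V : Type*} {G : SimpleGraph V}

theorem exists_adj_of_mem_of_notMem (hG : G.Preconnected) {s : Set V} {a b : V} (ha : a ∈ s)
    (hb : b ∉ s) : ∃ x ∈ s, ∃ y ∉ s, G.Adj x y := by
  obtain ⟨p⟩ := hG a b
  obtain ⟨d, -, hfst, hsnd⟩ := p.exists_boundary_dart s ha hb
  exact ⟨d.fst, hfst, d.snd, hsnd, d.adj⟩

/-- `G` has no induced path on four vertices. Distinctness of `a, b, c, d` need not be demanded:
when some of them coincide, the conclusion follows from the hypotheses. -/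
def IsP4Free (G : SimpleGraph V) : Prop :=
  ∀ ⦃a b c d⦄, G.Adj a b → G.Adj b c → G.Adj c d → G.Adj a c ∨ G.Adj b d ∨ G.Adj a d

namespace IsP4Free

theorem adj_or_commonNeighbors_nonempty (hG : IsP4Free G) {a b : V} (hab : G.Reachable a b)
    (hne : a ≠ b) : G.Adj a b ∨ (G.commonNeighbors a b).Nonempty := by
  rw [SimpleGraph.reachable_iff_reflTransGen] at hab
  induction hab with
  | refl => exact absurd rfl hne
  | @tail x y _ hxy ih =>
    by_cases hax : a = x
    · exact .inl (hax ▸ hxy)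
    obtain hadj | ⟨d, had, hxd⟩ := ih hax
    · exact .inr ⟨x, hadj, hxy.symm⟩
    · obtain h | h | h := hG had hxd.symm hxy
      · exact .inr ⟨x, h, hxy.symm⟩
      · exact .inr ⟨d, had, h.symm⟩
      · exact .inl h

theorem adj_of_minimal_commonNeighbors (hG : IsP4Free G) {v w c x : V} (hvw : ¬ G.Adj v w)
    (hmin : ∀ x y, Gᶜ.Adj x y → ¬ G.commonNeighbors x y ⊂ G.commonNeighbors v w)
    (hc : c ∈ G.commonNeighbors v w) (hvx : ¬ G.Adj v x) : G.Adj c x := by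
  by_contra hcx
  have hne : v ≠ x := fun h => hcx (h ▸ hc.1.symm)
  obtain ⟨d, hd, hd'⟩ : ∃ d ∈ G.commonNeighbors v x, d ∉ G.commonNeighbors v w := by
    by_contra! hsub
    exact hmin v x ⟨hne, hvx⟩ ⟨hsub, fun h => hcx (h hc).2.symm⟩
  rw [SimpleGraph.mem_commonNeighbors] at hc hd hd'
  have hwd : ¬ G.Adj w d := fun h => hd' ⟨hd.1, h⟩
  have hcd : G.Adj c d := by
    obtain h | h | h := hG hc.2 hc.1.symm hd.1
    exacts [absurd h.symm hvw, h, absurd h hwd]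
  have hwx : G.Adj w x := by
    obtain h | h | h := hG hc.2 hcd hd.2.symm
    exacts [absurd h hwd, absurd h hcx, h]
  obtain h | h | h := hG hd.1 hd.2.symm hwx.symm
  exacts [hvx h, hwd h.symm, hvw h]

/-- If both were connected, take a nonadjacent pair `v, w` whose common neighbourhood is minimal:
every other vertex is then adjacent to all of this neighbourhood, so `Gᶜ` splits there. -/
theorem not_preconnected_or_compl [Finite V] [Nontrivial V] (hG : IsP4Free G) :
    ¬ G.Preconnected ∨ ¬ Gᶜ.Preconnected := by
  by_contra! hconn
  obtain ⟨hconn, hconn'⟩ := hconn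
  obtain ⟨u⟩ := ‹Nontrivial V›.to_nonempty
  obtain ⟨u', huu'⟩ := hconn'.exists_adj_of_nontrivial u
  obtain ⟨⟨v, w⟩, ⟨hne, hvw⟩, hmin⟩ := exists_minimalFor_of_wellFoundedLT
    (fun p : V × V => Gᶜ.Adj p.1 p.2) (fun p => G.commonNeighbors p.1 p.2) ⟨(u, u'), huu'⟩
  replace hmin : ∀ x y, Gᶜ.Adj x y → ¬ G.commonNeighbors x y ⊂ G.commonNeighbors v w :=
    fun x y hxy hlt => hlt.not_subset (hmin (j := (x, y)) hxy hlt.subset)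
  have hne' : (G.commonNeighbors v w).Nonempty :=
    (hG.adj_or_commonNeighbors_nonempty (hconn v w) hne).resolve_left hvw
  obtain ⟨c, hc, x, hx, hcx⟩ :=
    exists_adj_of_mem_of_notMem hconn' hne'.some_mem (G.notMem_commonNeighbors_left v w)
  apply ((G.compl_adj c x).1 hcx).2
  rw [SimpleGraph.mem_commonNeighbors, not_and_or] at hx
  obtain hvx | hwx := hx
  · exact hG.adj_of_minimal_commonNeighbors hvw hmin hc hvx
  · rw [G.commonNeighbors_symm v w] at hmin hc
    exact hG.adj_of_minimal_commonNeighbors (fun h => hvw h.symm) hmin hc hwx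

end IsP4Free

end Cograph

section D2Free

variable {V : Type*} {T : V → V → V → Prop}

/-- A 3-uniform hypergraph without induced `D₂`, given by the relation "`a, b, c` form an edge".
That `or_of_triples` requires only `a ≠ b` and `c ≠ d` is deliberate: this version holds both for
hypergraphs and for their complements, whose relation is true at triples with repeated entries. -/
structure IsD2Free (T : V → V → V → Prop) : Prop where
  swap_left : ∀ ⦃a b c⦄, T a b c → T b a c
  swap_right : ∀ ⦃a b c⦄, T a b c → T a c b
  or_of_triples : ∀ ⦃a b c d⦄, a ≠ b → c ≠ d → T a b c → T a b d → T a c d ∨ T b c d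

/-- `W` contains all `c` that form an edge with two vertices of `W`, i.e. `W` is a subspace for
the closure system generated by the edges. -/
def IsTripleClosed (T : V → V → V → Prop) (W : Set V) : Prop :=
  ∀ ⦃a b c⦄, a ∈ W → b ∈ W → a ≠ b → T a b c → c ∈ W

/-- No two vertices generate the whole vertex set under `IsTripleClosed`. -/
def PairsNonspanning (T : V → V → V → Prop) : Prop :=
  ∀ ⦃a b⦄, a ≠ b → ∃ W, IsTripleClosed T W ∧ W ≠ Set.univ ∧ a ∈ W ∧ b ∈ W

namespace IsD2Free

theorem rotate (h : IsD2Free T) {a b c : V} (habc : T a b c) : T b c a :=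
  h.swap_right (h.swap_left habc)

theorem compl (h : IsD2Free T) : IsD2Free Tᶜ where
  swap_left _ _ _ hn habc := hn (h.swap_left habc)
  swap_right _ _ _ hn habc := hn (h.swap_right habc)
  or_of_triples a b c d hab hcd habc habd := by
    by_contra hcon
    obtain ⟨hacd, hbcd⟩ : T a c d ∧ T b c d := by simpa using hcon
    obtain hcab | hdab := h.or_of_triples hcd hab (h.rotate hacd) (h.rotate hbcd)
    · exact habc (h.rotate hcab)
    · exact habd (h.rotate hdab)

theorem comap {W : Type*} (h : IsD2Free T) {f : W → V} (hf : f.Injective) :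
    IsD2Free fun a b c => T (f a) (f b) (f c) where
  swap_left _ _ _ habc := h.swap_left habc
  swap_right _ _ _ habc := h.swap_right habc
  or_of_triples _ _ _ _ hab hcd := h.or_of_triples (hf.ne hab) (hf.ne hcd)

/-- The link graph of `v`: the pairs that form an edge together with `v`. -/
def link (h : IsD2Free T) (v : V) : SimpleGraph {x // x ≠ v} where
  Adj a b := a ≠ b ∧ T v a b
  symm.symm _ _ hab := ⟨hab.1.symm, h.swap_right hab.2⟩
  loopless.irrefl _ ha := ha.1 rfl

theorem link_compl (h : IsD2Free T) (v : V) : h.compl.link v = (h.link v)ᶜ := by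
  ext a b
  simp only [link, SimpleGraph.compl_adj, Pi.compl_apply, compl_iff_not]
  tauto

theorem isP4Free_link (h : IsD2Free T) (v : V) : IsP4Free (h.link v) := by
  rintro a b c d hab hbc hcd
  by_contra! ⟨nac, nbd, nad⟩
  have hac : a ≠ c := by rintro rfl; exact nad hcd
  have hbd : b ≠ d := by rintro rfl; exact nad hab
  have had : a ≠ d := by rintro rfl; exact nac hcd.symm
  have nac' : ¬ T v a c := fun k => nac ⟨hac, k⟩
  have nbd' : ¬ T v b d := fun k => nbd ⟨hbd, k⟩
  have nad' : ¬ T v a d := fun k => nad ⟨had, k⟩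
  have hbac : T b a c :=
    (h.or_of_triples b.2.symm (Subtype.coe_ne_coe.2 hac) hab.symm.2 hbc.2).resolve_left nac'
  have hcbd : T c b d :=
    (h.or_of_triples c.2.symm (Subtype.coe_ne_coe.2 hbd) hbc.symm.2 hcd.2).resolve_left nbd'
  obtain hbad | hcad := h.or_of_triples (Subtype.coe_ne_coe.2 hbc.1) (Subtype.coe_ne_coe.2 had)
    (h.swap_right hbac) (h.swap_left hcbd)
  · obtain k | k := h.or_of_triples (Subtype.coe_ne_coe.2 hab.1) d.2.symm
      (h.rotate hab.2) (h.swap_left hbad)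
    exacts [nad' (h.swap_left k), nbd' (h.swap_left k)]
  · obtain k | k := h.or_of_triples (Subtype.coe_ne_coe.2 hcd.1) a.2.symm
      (h.rotate hcd.2) (h.swap_right hcad)
    exacts [nac' (h.rotate k), nad' (h.rotate k)]

theorem link_reachable_of_adj (h : IsD2Free T) {v : V} {x y z : {x // x ≠ v}}
    (hxy : (h.link v).Adj x y) (hxyz : T x y z) : (h.link v).Reachable x z := by
  by_cases hxz : x = z
  · exact hxz ▸ .rfl
  by_cases hyz : y = z
  · exact hyz ▸ hxy.reachable
  obtain hxz' | hyz' := h.or_of_triples (Subtype.coe_ne_coe.2 hxy.1) z.2.symm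
    (h.rotate hxy.2) hxyz
  · exact SimpleGraph.Adj.reachable ⟨hxz, h.swap_left hxz'⟩
  · exact hxy.reachable.trans (SimpleGraph.Adj.reachable ⟨hyz, h.swap_left hyz'⟩)

theorem link_reachable (h : IsD2Free T) {v : V} {x y z : {x // x ≠ v}} (hne : x ≠ y)
    (hxy : (h.link v).Reachable x y) (hxyz : T x y z) : (h.link v).Reachable x z := by
  obtain hadj | ⟨d, hxd, hyd⟩ := (h.isP4Free_link v).adj_or_commonNeighbors_nonempty hxy hne
  · exact h.link_reachable_of_adj hadj hxyz
  rw [SimpleGraph.mem_neighborSet] at hxd hyd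
  obtain hvxy | hdxy := h.or_of_triples d.2.symm (Subtype.coe_ne_coe.2 hne)
    (h.swap_right hxd.2) (h.swap_right hyd.2)
  · exact h.link_reachable_of_adj ⟨hne, hvxy⟩ hxyz
  by_cases hdz : d = z
  · exact hdz ▸ hxd.reachable
  obtain hxdz | hydz := h.or_of_triples (Subtype.coe_ne_coe.2 hne) (Subtype.coe_ne_coe.2 hdz)
    (h.rotate hdxy) hxyz
  · exact h.link_reachable_of_adj hxd hxdz
  · exact hxy.trans (h.link_reachable_of_adj hyd hydz)

theorem isTripleClosed_insert_supp (h : IsD2Free T) {v : V} (C : (h.link v).ConnectedComponent) :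
    IsTripleClosed T (insert v (Subtype.val '' C.supp)) := by
  intro x y z hx hy hxy hxyz
  by_cases hzv : z = v
  · exact .inl hzv
  suffices ∃ w ∈ C.supp, (h.link v).Reachable w ⟨z, hzv⟩ by
    obtain ⟨w, hw, hwz⟩ := this
    exact .inr ⟨⟨z, hzv⟩, (SimpleGraph.ConnectedComponent.sound hwz).symm.trans hw, rfl⟩
  have reachable_of_left : ∀ w : {x // x ≠ v}, T v w z → (h.link v).Reachable w ⟨z, hzv⟩ := by
    intro w hw
    by_cases hwz : w = ⟨z, hzv⟩
    · exact hwz ▸ .rfl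
    · exact SimpleGraph.Adj.reachable ⟨hwz, hw⟩
  obtain rfl | ⟨x, hxC, rfl⟩ := hx <;> obtain rfl | ⟨y, hyC, rfl⟩ := hy
  · exact absurd rfl hxy
  · exact ⟨y, hyC, reachable_of_left y hxyz⟩
  · exact ⟨x, hxC, reachable_of_left x (h.swap_left hxyz)⟩
  · exact ⟨x, hxC, h.link_reachable (Subtype.coe_ne_coe.1 hxy)
      (SimpleGraph.ConnectedComponent.exact (hxC.trans hyC.symm)) hxyz⟩

theorem exists_isTripleClosed_iff_not_preconnected_link (h : IsD2Free T) {v a : V} (hva : v ≠ a) :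
    (∃ W, IsTripleClosed T W ∧ W ≠ Set.univ ∧ v ∈ W ∧ a ∈ W) ↔ ¬ (h.link v).Preconnected := by
  constructor
  · rintro ⟨W, hW, hne, hv, ha⟩ hconn
    obtain ⟨b, hb⟩ := (Set.ne_univ_iff_exists_notMem W).1 hne
    have hbv : b ≠ v := by rintro rfl; exact hb hv
    obtain ⟨x, hx, y, hy, hxy⟩ := exists_adj_of_mem_of_notMem hconn
      (s := Subtype.val ⁻¹' W) (a := ⟨a, hva.symm⟩) (b := ⟨b, hbv⟩) ha hb
    exact hy (hW hv hx x.2.symm hxy.2)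
  · intro hconn
    refine ⟨_, h.isTripleClosed_insert_supp ((h.link v).connectedComponentMk ⟨a, hva.symm⟩), ?_,
      Set.mem_insert _ _, .inr ⟨⟨a, hva.symm⟩, rfl, rfl⟩⟩
    intro huniv
    refine hconn fun x y => ?_
    have hreach : ∀ z : {x // x ≠ v}, (h.link v).Reachable z ⟨a, hva.symm⟩ := by
      intro z
      obtain hz | ⟨z', hz', heq⟩ := huniv.ge (Set.mem_univ z.1)
      · exact absurd hz z.2
      · exact Subtype.ext heq ▸ SimpleGraph.ConnectedComponent.exact hz'
    exact (hreach x).trans (hreach y).symm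

theorem pairsNonspanning_of_not_preconnected_link (h : IsD2Free T) {v : V}
    (hv : ¬ (h.link v).Preconnected) : PairsNonspanning T := by
  intro a b hab
  obtain rfl | hva := eq_or_ne v a
  · exact (h.exists_isTripleClosed_iff_not_preconnected_link hab).2 hv
  obtain ⟨W, hW, hne, hvW, haW⟩ := (h.exists_isTripleClosed_iff_not_preconnected_link hva).2 hv
  rw [h.exists_isTripleClosed_iff_not_preconnected_link hab,
    ← h.exists_isTripleClosed_iff_not_preconnected_link hva.symm]
  exact ⟨W, hW, hne, haW, hvW⟩

theorem pairsNonspanning_or_compl [Fintype V] (h : IsD2Free T) (hV : 2 < Fintype.card V) :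
    PairsNonspanning T ∨ PairsNonspanning Tᶜ := by
  obtain ⟨v, a, b, hva, hvb, hab⟩ := Fintype.two_lt_card_iff.1 hV
  have : Nontrivial {x // x ≠ v} := ⟨⟨a, hva.symm⟩, ⟨b, hvb.symm⟩, by simpa using hab⟩
  refine (h.isP4Free_link v).not_preconnected_or_compl.imp
    h.pairsNonspanning_of_not_preconnected_link fun hv => ?_
  rw [← h.link_compl] at hv
  exact h.compl.pairsNonspanning_of_not_preconnected_link hv

end IsD2Free

end D2Free

section TripleIndep

variable {V : Type*} {T : V → V → V → Prop}

/-- Independence of `S` in the 3-uniform hypergraph with edge relation `T`; for `Tᶜ` in place of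
`T` it says that `S` is a clique. -/
def IsTripleIndep (T : V → V → V → Prop) (S : Finset V) : Prop :=
  ∀ ⦃a⦄, a ∈ S → ∀ ⦃b⦄, b ∈ S → ∀ ⦃c⦄, c ∈ S → a ≠ b → a ≠ c → b ≠ c → ¬ T a b c

theorem isTripleIndep_of_card_le_two {S : Finset V} (hS : #S ≤ 2) : IsTripleIndep T S :=
  fun a ha b hb c hc hab hac hbc =>
    absurd hS (two_lt_card.2 ⟨a, ha, b, hb, c, hc, hab, hac, hbc⟩).not_ge

theorem IsTripleIndep.map {W : Type*} {f : W ↪ V} {S : Finset W}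
    (hS : IsTripleIndep (fun a b c => T (f a) (f b) (f c)) S) : IsTripleIndep T (S.map f) := by
  simp only [IsTripleIndep, forall_mem_map, f.injective.ne_iff]
  exact hS

theorem IsTripleIndep.union [DecidableEq V] (h : IsD2Free T) {L : Set V} (hL : IsTripleClosed T L)
    {S S' : Finset V} (hS : IsTripleIndep T S) (hS' : IsTripleIndep T S')
    (hSL : ∀ x ∈ S, x ∉ L) (hS'L : ∀ y ∈ S', y ∈ L)
    (hpairs : ∀ a ∈ S, ∀ b ∈ S, a ≠ b → ∀ y ∈ S', ¬ T a b y) : IsTripleIndep T (S ∪ S') := by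
  have hpairs' : ∀ x ∈ S, ∀ y ∈ S', ∀ z ∈ S', y ≠ z → ¬ T y z x := fun x hx y hy z hz hyz hT =>
    hSL x hx (hL (hS'L y hy) (hS'L z hz) hyz hT)
  intro a ha b hb c hc hab hac hbc hT
  obtain ha | ha := mem_union.1 ha <;> obtain hb | hb := mem_union.1 hb <;>
    obtain hc | hc := mem_union.1 hc
  · exact hS ha hb hc hab hac hbc hT
  · exact hpairs a ha b hb hab c hc hT
  · exact hpairs a ha c hc hac b hb (h.swap_right hT)
  · exact hpairs' a ha b hb c hc hbc (h.rotate hT)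
  · exact hpairs b hb c hc hbc a ha (h.rotate hT)
  · exact hpairs' b hb a ha c hc hac (h.swap_right hT)
  · exact hpairs' c hc a ha b hb hab hT
  · exact hS' ha hb hc hab hac hbc hT

theorem IsTripleIndep.insert [DecidableEq V] (h : IsD2Free T) {S : Finset V}
    (hS : IsTripleIndep T S) {y : V} (hy : y ∉ S)
    (hpairs : ∀ a ∈ S, ∀ b ∈ S, a ≠ b → ¬ T a b y) : IsTripleIndep T (insert y S) := by
  have hclosed : IsTripleClosed T {y} := fun a b _ ha hb hab => absurd (ha.trans hb.symm) hab
  rw [insert_eq, union_comm]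
  exact hS.union h hclosed (isTripleIndep_of_card_le_two (by simp))
    (fun x hx hxy => hy (hxy ▸ hx)) (fun _ => mem_singleton.1)
    (fun a ha b hb hab z hz => mem_singleton.1 hz ▸ hpairs a ha b hb hab)

/-- Two vertices `y, z` of `L` cannot both form an edge with the pair `a, b` outside `L`: one of
`a, b` would form an edge with `y, z`. So each pair of `S` excludes at most one vertex. -/
theorem IsTripleClosed.exists_subset_avoiding_pairs (h : IsD2Free T) {L S : Finset V}
    (hL : IsTripleClosed T L) (hSL : Disjoint S L) :
    ∃ L' ⊆ L, #L ≤ #L' + #S ^ 2 ∧ ∀ a ∈ S, ∀ b ∈ S, a ≠ b → ∀ y ∈ L', ¬ T a b y := by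
  classical
  refine ⟨{y ∈ L | ∀ a ∈ S, ∀ b ∈ S, a ≠ b → ¬ T a b y}, filter_subset _ _, ?_,
    fun a ha b hb hab y hy => (mem_filter.1 hy).2 a ha b hb hab⟩
  rw [← card_filter_add_card_filter_not (s := L) fun y => ∀ a ∈ S, ∀ b ∈ S, a ≠ b → ¬ T a b y,
    sq, ← card_product]
  gcongr
  refine card_le_card_of_forall_subsingleton (fun y p => p.1 ≠ p.2 ∧ T p.1 p.2 y) ?_ ?_
  · intro y hy
    obtain ⟨-, a, ha, b, hb, hab, hy⟩ : y ∈ L ∧ ∃ a ∈ S, ∃ b ∈ S, a ≠ b ∧ T a b y := by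
      simpa using hy
    exact ⟨(a, b), mk_mem_product ha hb, hab, hy⟩
  · rintro ⟨a, b⟩ hab y ⟨hyL, hne, hy⟩ z ⟨hzL, -, hz⟩
    obtain ⟨ha, hb⟩ := mem_product.1 hab
    replace hyL := mem_of_mem_filter y hyL
    replace hzL := mem_of_mem_filter z hzL
    by_contra hyz
    obtain hayz | hbyz := h.or_of_triples hne hyz hy hz
    · exact disjoint_left.1 hSL ha (hL hyL hzL hyz (h.rotate hayz))
    · exact disjoint_left.1 hSL hb (hL hyL hzL hyz (h.rotate hbyz))

variable [Fintype V]

open scoped Classical in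
/-- The independence number of the 3-uniform hypergraph with edge relation `T`; for `Tᶜ` in place
of `T` it is the clique number. -/
noncomputable def tripleIndepNum (T : V → V → V → Prop) : ℕ :=
  sup {S : Finset V | IsTripleIndep T S} card

theorem IsTripleIndep.card_le_tripleIndepNum {S : Finset V} (hS : IsTripleIndep T S) :
    #S ≤ tripleIndepNum T := by
  classical
  exact le_sup (f := card) (mem_filter.2 ⟨mem_univ S, hS⟩)

theorem exists_isTripleIndep_card_eq (T : V → V → V → Prop) :
    ∃ S : Finset V, IsTripleIndep T S ∧ #S = tripleIndepNum T := by
  classical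
  have hempty : IsTripleIndep T ∅ := isTripleIndep_of_card_le_two (by simp)
  obtain ⟨S, hS, hcard⟩ := exists_mem_eq_sup {S : Finset V | IsTripleIndep T S}
    ⟨∅, mem_filter.2 ⟨mem_univ _, hempty⟩⟩ card
  exact ⟨S, (mem_filter.1 hS).2, hcard.symm⟩

theorem tripleIndepNum_comap_le {W : Type*} [Fintype W] (f : W ↪ V) :
    tripleIndepNum (fun a b c => T (f a) (f b) (f c)) ≤ tripleIndepNum T := by
  obtain ⟨S, hS, hcard⟩ := exists_isTripleIndep_card_eq fun a b c => T (f a) (f b) (f c)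
  rw [← hcard, ← S.card_map f]
  exact hS.map.card_le_tripleIndepNum

theorem tripleIndepNum_eq_card (hV : Fintype.card V ≤ 2) :
    tripleIndepNum T = Fintype.card V := by
  refine le_antisymm ?_ (isTripleIndep_of_card_le_two (S := univ) hV).card_le_tripleIndepNum
  obtain ⟨S, -, hcard⟩ := exists_isTripleIndep_card_eq T
  exact hcard ▸ card_le_univ S

theorem one_le_tripleIndepNum [Nonempty V] : 1 ≤ tripleIndepNum T := by
  obtain ⟨v⟩ := ‹Nonempty V›
  exact (isTripleIndep_of_card_le_two (S := {v}) (by simp)).card_le_tripleIndepNum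

open scoped Classical in
/-- Every vertex outside a maximum independent set forms an edge with two vertices inside. -/
theorem IsD2Free.card_le_of_codegree_le (h : IsD2Free T) {m : ℕ}
    (hm : ∀ a b, a ≠ b → #{c | T a b c} ≤ m) :
    Fintype.card V ≤
      tripleIndepNum T + (tripleIndepNum T * tripleIndepNum T - tripleIndepNum T) * m := by
  obtain ⟨S, hS, hcard⟩ := exists_isTripleIndep_card_eq T
  have hcover : Sᶜ ⊆ S.offDiag.biUnion fun p => {c | T p.1 p.2 c} := by
    intro y hy
    rw [mem_compl] at hy
    by_contra hcon
    have hpairs : ∀ a ∈ S, ∀ b ∈ S, a ≠ b → ¬ T a b y := fun a ha b hb hab hT =>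
      hcon (mem_biUnion.2 ⟨(a, b), mem_offDiag.2 ⟨ha, hb, hab⟩, mem_filter.2 ⟨mem_univ _, hT⟩⟩)
    have hle := (hS.insert h hy hpairs).card_le_tripleIndepNum
    rw [card_insert_of_notMem hy] at hle
    lia
  rw [← card_add_card_compl S, ← hcard, ← offDiag_card]
  gcongr
  exact (card_le_card hcover).trans
    (card_biUnion_le_card_mul _ _ _ fun p hp => hm _ _ (mem_offDiag.1 hp).2.2)

theorem IsD2Free.card_le_of_isTripleClosed (h : IsD2Free T) {b : ℕ} (hb : 1 ≤ b)
    (ih : ∀ A : Finset V, A ≠ univ → ∃ S ⊆ A, IsTripleIndep T S ∧ #A ≤ (#S * b) ^ 4)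
    {L : Finset V} (hL : IsTripleClosed T L) (hne : L ≠ univ) (hlt : tripleIndepNum T ^ 2 < #L) :
    Fintype.card V ≤ (tripleIndepNum T * b) ^ 4 := by
  classical
  have hLpos : L.Nonempty := card_pos.1 (by lia)
  obtain ⟨S, hSL, hS, hScard⟩ := ih Lᶜ (by simpa using hLpos.ne_empty)
  have hdisj : Disjoint S L := disjoint_compl_left.mono_left hSL
  obtain ⟨L', hL'L, hLcard, hpairs⟩ := hL.exists_subset_avoiding_pairs h hdisj
  obtain ⟨S', hS'L', hS', hS'card⟩ :=
    ih L' fun hL' => hne (univ_subset_iff.1 (hL' ▸ hL'L))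
  have hunion : IsTripleIndep T (S ∪ S') := hS.union h hL hS' (fun x hx => disjoint_left.1 hdisj hx)
    (fun y hy => hL'L (hS'L' hy)) fun a ha b hb hab y hy => hpairs a ha b hb hab y (hS'L' hy)
  have hsum : #S + #S' ≤ tripleIndepNum T := by
    rw [← card_union_of_disjoint (hdisj.mono_right (hS'L'.trans hL'L))]
    exact hunion.card_le_tripleIndepNum
  have hS'pos : 1 ≤ #S' := by
    by_contra! hS'0
    have hsq : #S ^ 2 ≤ tripleIndepNum T ^ 2 := by gcongr; lia
    rw [Nat.lt_one_iff.1 hS'0, zero_mul, zero_pow four_ne_zero] at hS'card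
    lia
  calc Fintype.card V = #Lᶜ + #L := by rw [add_comm, card_add_card_compl]
    _ ≤ (#S * b) ^ 4 + ((#S' * b) ^ 4 + (#S * b) ^ 2) := by
      have hsq : #S ^ 2 ≤ (#S * b) ^ 2 := by gcongr; exact Nat.le_mul_of_pos_right _ hb
      lia
    _ ≤ (#S * b + #S' * b) ^ 4 := by
      have hpos : 1 ≤ #S' * b := Nat.mul_pos hS'pos hb
      have hsq : (#S * b) ^ 2 ≤ (#S * b) ^ 2 * (#S' * b) ^ 2 :=
        Nat.le_mul_of_pos_right _ (pow_pos hpos 2)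
      nlinarith [Nat.zero_le ((#S * b) ^ 3 * (#S' * b)), Nat.zero_le ((#S * b) * (#S' * b) ^ 3)]
    _ ≤ (tripleIndepNum T * b) ^ 4 := by rw [← add_mul]; gcongr

theorem PairsNonspanning.card_le_pow (hT : PairsNonspanning T) (h : IsD2Free T) {b : ℕ}
    (hb : 1 ≤ b)
    (ih : ∀ A : Finset V, A ≠ univ → ∃ S ⊆ A, IsTripleIndep T S ∧ #A ≤ (#S * b) ^ 4) :
    Fintype.card V ≤ (tripleIndepNum T * b) ^ 4 := by
  classical
  by_cases hlarge : ∃ L : Finset V, IsTripleClosed T L ∧ L ≠ univ ∧ tripleIndepNum T ^ 2 < #L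
  · obtain ⟨L, hL, hne, hlt⟩ := hlarge
    exact h.card_le_of_isTripleClosed hb ih hL hne hlt
  push Not at hlarge
  have hcodeg : ∀ x y, x ≠ y → #{z | T x y z} ≤ tripleIndepNum T ^ 2 := by
    intro x y hxy
    obtain ⟨W, hW, hne, hx, hy⟩ := hT hxy
    lift W to Finset V using W.toFinite
    refine (card_le_card fun z hz => ?_).trans (hlarge W hW (by simpa using hne))
    exact hW hx hy hxy (mem_filter.1 hz).2
  have hle := h.card_le_of_codegree_le hcodeg
  set α := tripleIndepNum T
  calc Fintype.card V ≤ α + (α * α - α) * α ^ 2 := hle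
    _ ≤ α ^ 4 := by
      obtain hα | hα := α.eq_zero_or_pos
      · simp [hα]
      · have hα2 : α ≤ α * α ^ 2 := Nat.le_mul_of_pos_right _ (by positivity)
        have hα4 : α * α ^ 2 ≤ α ^ 4 := by rw [← pow_succ']; exact Nat.pow_le_pow_right hα (by lia)
        rw [Nat.sub_mul, show α * α * α ^ 2 = α ^ 4 by ring]
        lia
    _ ≤ (α * b) ^ 4 := by gcongr; exact Nat.le_mul_of_pos_right _ hb

theorem IsD2Free.card_le_tripleIndepNum_mul_pow (h : IsD2Free T) :
    Fintype.card V ≤ (tripleIndepNum T * tripleIndepNum Tᶜ) ^ 4 := by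
  induction hn : Fintype.card V using Nat.strong_induction_on generalizing V with
  | _ n ih =>
  subst hn
  obtain hV | hV := le_or_gt (Fintype.card V) 2
  · rw [tripleIndepNum_eq_card hV, tripleIndepNum_eq_card hV, ← sq, ← pow_mul]
    exact Nat.le_self_pow (by simp) _
  have : Nonempty V := Fintype.card_pos_iff.1 (by lia)
  have ih' : ∀ {T : V → V → V → Prop}, IsD2Free T → ∀ A : Finset V, A ≠ univ →
      ∃ S ⊆ A, IsTripleIndep T S ∧ #A ≤ (#S * tripleIndepNum Tᶜ) ^ 4 := by
    intro T hT A hA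
    obtain ⟨x, hx⟩ : ∃ x, x ∉ A := by simpa [eq_univ_iff_forall] using hA
    let f : A ↪ V := Function.Embedding.subtype _
    obtain ⟨S, hS, hcard⟩ := exists_isTripleIndep_card_eq fun a b c => T (f a) (f b) (f c)
    refine ⟨S.map f, map_subtype_subset S, hS.map, ?_⟩
    have hA' := ih _ ((Fintype.card_coe A).trans_lt (card_lt_univ_of_notMem hx))
      (hT.comap f.injective) rfl
    rw [Fintype.card_coe, ← hcard] at hA'
    rw [card_map]
    refine hA'.trans ?_
    gcongr
    exact tripleIndepNum_comap_le (T := Tᶜ) f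
  obtain hT | hT := h.pairsNonspanning_or_compl hV
  · exact hT.card_le_pow h one_le_tripleIndepNum (ih' h)
  · have hle := hT.card_le_pow h.compl one_le_tripleIndepNum (ih' h.compl)
    rwa [compl_compl, mul_comm] at hle

end TripleIndep

section Hypergraph

variable {V : Type} [DecidableEq V] {E : Finset (Finset V)}

theorem eq_of_subset_of_card_eq_three {a b c d : V} (h4 : #{a, b, c, d} = 4) {e : Finset V}
    (he : e ⊆ {a, b, c, d}) (hcard : #e = 3) :
    e = {a, b, c} ∨ e = {a, b, d} ∨ e = {a, c, d} ∨ e = {b, c, d} := by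
  have eq_triple : ∀ {x y z : V}, e ⊆ {x, y, z} → e = {x, y, z} := fun hsub =>
    eq_of_subset_of_card_le hsub (card_le_three.trans hcard.ge)
  obtain ⟨x, hx, hxe⟩ : ∃ x ∈ ({a, b, c, d} : Finset V), x ∉ e :=
    exists_mem_notMem_of_card_lt_card (by lia)
  simp only [mem_insert, mem_singleton] at hx
  obtain rfl | rfl | rfl | rfl := hx
  · exact .inr (.inr (.inr (eq_triple (by grind))))
  · exact .inr (.inr (.inl (eq_triple (by grind))))
  · exact .inr (.inl (eq_triple (by grind)))
  · exact .inl (eq_triple (by grind))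

theorem InducedD2Free.isD2Free [Fintype V] (hE : InducedD2Free E) (h3 : ∀ e ∈ E, #e = 3) :
    IsD2Free fun a b c : V => {a, b, c} ∈ E where
  swap_left a b c habc := by rwa [insert_comm]
  swap_right a b c habc := by rwa [pair_comm]
  or_of_triples a b c d hab hcd habc habd := by
    by_contra! ⟨hacd, hbcd⟩
    have notMem_pair : ∀ {x}, {a, b, x} ∈ E → x ∉ ({a, b} : Finset V) := by
      intro x habx hx
      have hle : #{a, b, x} ≤ 2 := (card_le_card (by grind)).trans (card_le_two (a := a) (b := b))
      exact absurd (h3 _ habx) (by lia)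
    have hc := notMem_pair habc
    have hd := notMem_pair habd
    have h4 : #{a, b, c, d} = 4 := by grind
    have hspan : E.filter (· ⊆ {a, b, c, d}) = {{a, b, c}, {a, b, d}} := by
      ext e
      rw [mem_filter, mem_insert, mem_singleton]
      constructor
      · rintro ⟨he, hsub⟩
        obtain rfl | rfl | rfl | rfl := eq_of_subset_of_card_eq_three h4 hsub (h3 e he)
        exacts [.inl rfl, .inr rfl, absurd he hacd, absurd he hbcd]
      · rintro (rfl | rfl)
        · exact ⟨habc, by grind⟩
        · exact ⟨habd, by grind⟩
    have hne : ({a, b, c} : Finset V) ≠ {a, b, d} :=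
      ne_of_mem_of_not_mem' (a := c) (by simp) (by grind)
    exact hE _ h4 (hspan ▸ card_pair hne)

theorem IsTripleIndep.isHIndep {S : Finset V}
    (hS : IsTripleIndep (fun a b c : V => {a, b, c} ∈ E) S) : IsHIndep E S := by
  intro t ht hcard
  obtain ⟨a, b, c, hab, hac, hbc, rfl⟩ := card_eq_three.1 hcard
  exact hS (ht (by simp)) (ht (by simp)) (ht (by simp)) hab hac hbc

theorem IsTripleIndep.isHClique {S : Finset V}
    (hS : IsTripleIndep (fun a b c : V => {a, b, c} ∈ E)ᶜ S) : IsHClique E S := by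
  intro t ht hcard
  obtain ⟨a, b, c, hab, hac, hbc, rfl⟩ := card_eq_three.1 hcard
  exact not_not.1 (hS (ht (by simp)) (ht (by simp)) (ht (by simp)) hab hac hbc)

end Hypergraph

/-- Polynomial Erdős–Hajnal theorem for induced `D₂`-free 3-uniform hypergraphs. -/
theorem EH_for_D2_free :
    ∃ c : ℝ, c > 0 ∧ ∀ (V : Type) [Fintype V] [DecidableEq V] (E : Finset (Finset V)),
      (∀ e ∈ E, e.card = 3) →
      InducedD2Free E →
      ∃ S : Finset V, (S.card : ℝ) ≥ (Fintype.card V : ℝ) ^ c ∧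
        (IsHClique E S ∨ IsHIndep E S) := by
  refine ⟨(8 : ℕ)⁻¹, by positivity, fun V _ _ E h3 hE => ?_⟩
  obtain ⟨S, hS, hScard⟩ := exists_isTripleIndep_card_eq fun a b c : V => {a, b, c} ∈ E
  obtain ⟨K, hK, hKcard⟩ := exists_isTripleIndep_card_eq (fun a b c : V => {a, b, c} ∈ E)ᶜ
  have hle : Fintype.card V ≤ (#S * #K) ^ 4 := by
    rw [hScard, hKcard]
    exact (hE.isD2Free h3).card_le_tripleIndepNum_mul_pow
  have rpow_le_of_le : ∀ {m : ℕ}, Fintype.card V ≤ (m * m) ^ 4 →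
      (Fintype.card V : ℝ) ^ ((8 : ℕ) : ℝ)⁻¹ ≤ m := by
    intro m hm
    rw [← sq, ← pow_mul] at hm
    calc (Fintype.card V : ℝ) ^ ((8 : ℕ) : ℝ)⁻¹ ≤ ((m : ℝ) ^ 8) ^ ((8 : ℕ) : ℝ)⁻¹ := by
          gcongr; exact_mod_cast hm
      _ = m := Real.pow_rpow_inv_natCast (by positivity) (by norm_num)
  obtain hSK | hKS := le_total #S #K
  · exact ⟨K, rpow_le_of_le (hle.trans (by gcongr)), .inl hK.isHClique⟩
  · exact ⟨S, rpow_le_of_le (hle.trans (by gcongr)), .inr hS.isHIndep⟩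
end

section
/- Let G be a graph, let k ≥ 3, and let H be the k-uniform hypergraph on V(G) whose edges are exactly the k-element subsets of V(G) that induce a clique in G. If F is a k-uniform hypergraph on k+1 vertices and some k+1 vertices of H induce a copy of F (i.e., span exactly the edge set of F), then the number of edges of F is 0, 1, 2, or k+1. -/
open Finset

/-!
A graph on `k + 1` vertices is either complete, and then all `k + 1` sets of `k` vertices are
cliques, or it has two distinct non-adjacent vertices. No clique contains both of them, so each
clique of size `k` is the complement of one of the two.
-/

section CliqueCounts

variable {V W : Type*} {G : SimpleGraph V}

theorem isClique_comap_iff_of_injOn {f : W → V} {s : Set W} (hf : s.InjOn f) :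
    (G.comap f).IsClique s ↔ G.IsClique (f '' s) :=
  hf.pairwise_image.symm

variable [Fintype V] [DecidableEq V]

theorem card_cliqueFinset_top (k : ℕ) :
    #((⊤ : SimpleGraph V).cliqueFinset k) = (Fintype.card V).choose k := by
  have h_all : (⊤ : SimpleGraph V).cliqueFinset k = powersetCard k univ := by
    ext s
    simp [SimpleGraph.isNClique_iff]
  rw [h_all, card_powersetCard, card_univ]

variable [DecidableRel G.Adj]

theorem cliqueFinset_subset_of_not_adj {a b : V} (hab : a ≠ b) (h_adj : ¬G.Adj a b) (k : ℕ) :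
    G.cliqueFinset k ⊆ powersetCard k (univ.erase a) ∪ powersetCard k (univ.erase b) := by
  intro s hs
  obtain ⟨h_clique, h_card⟩ := SimpleGraph.mem_cliqueFinset_iff.mp hs
  have h_avoid : a ∉ s ∨ b ∉ s := by
    by_contra! h_mem
    exact h_adj (h_clique h_mem.1 h_mem.2 hab)
  simpa [mem_powersetCard, subset_erase, h_card] using h_avoid

theorem card_cliqueFinset_le_of_ne_top (hG : G ≠ ⊤) (k : ℕ) :
    #(G.cliqueFinset k) ≤ 2 * (Fintype.card V - 1).choose k := by
  obtain ⟨a, b, hab, h_adj⟩ := SimpleGraph.ne_top_iff_exists_not_adj.mp hG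
  calc
    #(G.cliqueFinset k)
      ≤ #(powersetCard k (univ.erase a) ∪ powersetCard k (univ.erase b)) :=
        card_le_card (cliqueFinset_subset_of_not_adj hab h_adj k)
    _ ≤ #(powersetCard k (univ.erase a)) + #(powersetCard k (univ.erase b)) := card_union_le _ _
    _ = 2 * (Fintype.card V - 1).choose k := by
      simp only [card_powersetCard, card_erase_of_mem (mem_univ _), card_univ, two_mul]

end CliqueCounts

/-- If `H` is the `k`-uniform hypergraph of `k`-cliques of a graph `G`, and some `k+1`
vertices of `H` induce a copy of a `k`-uniform hypergraph `F` on `k+1` vertices, then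
`F` has `0`, `1`, `2` or `k+1` edges. -/
theorem cliques_hypergraph_induced_counts
    {V : Type} [DecidableEq V] (G : SimpleGraph V) (k : ℕ) (hk : 3 ≤ k)
    (W : Type) [Fintype W] [DecidableEq W] (F : Finset (Finset W))
    (hF : ∀ e ∈ F, e.card = k)
    (hW : Fintype.card W = k + 1)
    (hcopy : ∃ f : W ↪ V, ∀ t : Finset W, t.card = k →
      (t ∈ F ↔ G.IsClique (↑(t.map f) : Set V))) :
    F.card = 0 ∨ F.card = 1 ∨ F.card = 2 ∨ F.card = k + 1 := by
  classical
  obtain ⟨f, hf⟩ := hcopy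
  have hF_cliques : F = (G.comap f).cliqueFinset k := by
    ext t
    rw [SimpleGraph.mem_cliqueFinset_iff, SimpleGraph.isNClique_iff,
      isClique_comap_iff_of_injOn f.injective.injOn, ← coe_map]
    exact ⟨fun ht => ⟨(hf t (hF t ht)).mp ht, hF t ht⟩, fun ht => (hf t ht.2).mpr ht.1⟩
  by_cases h_top : G.comap f = ⊤
  · have h_card : #F = k + 1 := by
      simp only [hF_cliques, h_top, card_cliqueFinset_top, hW, Nat.choose_succ_self_right]
    exact .inr (.inr (.inr h_card))
  · have h_card : #F ≤ 2 := by
      simpa [hF_cliques, hW] using card_cliqueFinset_le_of_ne_top h_top k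
    omega
end

section
/- If a 3-uniform hypergraph H is induced D₂-free, then for every vertex v of H the link graph L(v) is a cograph, i.e., L(v) contains no induced path on 4 vertices. -/
open Finset

/-!
For a 3-uniform hypergraph, induced `D₂`-freeness says that any two edges `wxy` and `xyz` on four
vertices force a third one, `wxz` or `wyz`. If `a b c d` were an induced path in `L(v)`, then
`vabc` forces `abc` and `vbcd` forces `bcd`. These two edges force `abd` or `acd`; the former
together with `vab`, or the latter together with `vcd`, forces one of the non-edges `ac`, `ad`, `bd`
of the path to lie in `L(v)`.
-/

section Hypergraph

variable {α : Type*} [DecidableEq α] {𝒜 : Finset (Finset α)}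

lemma filter_subset_eq_image_erase {r : ℕ} {S : Finset α}
    (h𝒜 : (𝒜 : Set (Finset α)).Sized r) (hS : #S = r + 1) :
    𝒜.filter (· ⊆ S) = (S.filter (S.erase · ∈ 𝒜)).image S.erase := by
  ext e
  simp only [mem_filter, mem_image]
  constructor
  · rintro ⟨he, heS⟩
    have hcovBy : e ⋖ S := covBy_iff_card_sdiff_eq_one.2
      ⟨heS, by rw [card_sdiff_of_subset heS, hS, h𝒜 he, Nat.add_sub_cancel_left]⟩
    obtain ⟨x, hx, rfl⟩ := hcovBy.exists_finset_erase
    exact ⟨x, ⟨hx, he⟩, rfl⟩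
  · rintro ⟨x, ⟨-, hx⟩, rfl⟩
    exact ⟨hx, erase_subset x S⟩

lemma card_filter_subset_eq_card_filter_erase_mem {r : ℕ} {S : Finset α}
    (h𝒜 : (𝒜 : Set (Finset α)).Sized r) (hS : #S = r + 1) :
    #(𝒜.filter (· ⊆ S)) = #(S.filter (S.erase · ∈ 𝒜)) := by
  rw [filter_subset_eq_image_erase h𝒜 hS]
  exact card_image_of_injOn (S.erase_injOn.mono (filter_subset _ _))

/-- The link graph `L(v)` of a vertex `v` in the hypergraph with edge set `𝒜`. It is encoded on
the whole vertex type, `v` itself being isolated when the hypergraph is 3-uniform. -/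
def linkGraph (𝒜 : Finset (Finset α)) (v : α) : SimpleGraph α where
  Adj x y := x ≠ y ∧ {v, x, y} ∈ 𝒜
  symm := ⟨fun x y h => ⟨h.1.symm, pair_comm x y ▸ h.2⟩⟩
  loopless := ⟨fun _ h => h.1 rfl⟩

lemma linkGraph_adj {v x y : α} (h𝒜 : (𝒜 : Set (Finset α)).Sized 3) :
    (linkGraph 𝒜 v).Adj x y ↔ {v, x, y} ∈ 𝒜 :=
  and_iff_right_of_imp fun h => (card_triple_eq_three_iff.1 (h𝒜 h)).2.2

end Hypergraph

namespace InducedD2Free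

variable {V : Type} [Fintype V] [DecidableEq V] {E : Finset (Finset V)}

lemma mem_or_mem {w x y z : V} (hfree : InducedD2Free E) (hE : (E : Set (Finset V)).Sized 3)
    (hwz : w ≠ z) (hwxy : {w, x, y} ∈ E) (hxyz : {x, y, z} ∈ E) :
    {w, x, z} ∈ E ∨ {w, y, z} ∈ E := by
  obtain ⟨hwx, hwy, hxy⟩ := card_triple_eq_three_iff.1 (hE hwxy)
  obtain ⟨-, hxz, hyz⟩ := card_triple_eq_three_iff.1 (hE hxyz)
  by_contra! ⟨hwxz, hwyz⟩
  have hcard : #{w, x, y, z} = 4 := card_eq_four.2 ⟨w, x, y, z, hwx, hwy, hwz, hxy, hxz, hyz, rfl⟩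
  apply hfree _ hcard
  rw [card_filter_subset_eq_card_filter_erase_mem hE hcard, ← card_pair hwz]
  have erase_w : ({w, x, y, z} : Finset V).erase w = {x, y, z} := by grind
  have erase_x : ({w, x, y, z} : Finset V).erase x = {w, y, z} := by grind
  have erase_y : ({w, x, y, z} : Finset V).erase y = {w, x, z} := by grind
  have erase_z : ({w, x, y, z} : Finset V).erase z = {w, x, y} := by grind
  congr 1
  simp only [filter_insert, filter_singleton, erase_w, erase_x, erase_y, erase_z, hwxy, hxyz,
    hwxz, hwyz, if_true, if_false]

lemma mem_of_adj_of_adj_of_not_adj {v a b c : V} (hfree : InducedD2Free E)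
    (hE : (E : Set (Finset V)).Sized 3) (hac : a ≠ c) (hab : (linkGraph E v).Adj a b)
    (hbc : (linkGraph E v).Adj b c) (hnac : ¬(linkGraph E v).Adj a c) : {a, b, c} ∈ E := by
  rw [linkGraph_adj hE] at hab hbc hnac
  rw [insert_comm] at hab hnac
  exact (hfree.mem_or_mem hE hac hab hbc).resolve_left hnac

lemma adj_or_adj_of_mem {v a b d : V} (hfree : InducedD2Free E)
    (hE : (E : Set (Finset V)).Sized 3) (hdv : d ≠ v) (hab : (linkGraph E v).Adj a b)
    (habd : {a, b, d} ∈ E) : (linkGraph E v).Adj a d ∨ (linkGraph E v).Adj b d := by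
  simp only [linkGraph_adj hE] at hab ⊢
  exact hfree.mem_or_mem hE hdv.symm hab habd

end InducedD2Free

/-- If a 3-uniform hypergraph is induced `D₂`-free, then the link graph of every vertex `v`
(the graph on `V \ {v}` with edges `{x,y}` such that `{v,x,y}` is a hyperedge) contains no
induced path on 4 vertices, i.e. it is a cograph. -/
theorem link_graphs_are_cographs {V : Type} [Fintype V] [DecidableEq V]
    (E : Finset (Finset V)) (hE : ∀ e ∈ E, e.card = 3)
    (hfree : InducedD2Free E) (v : V) :
    ¬ ∃ a b c d : V, a ≠ v ∧ b ≠ v ∧ c ≠ v ∧ d ≠ v ∧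
      a ≠ b ∧ a ≠ c ∧ a ≠ d ∧ b ≠ c ∧ b ≠ d ∧ c ≠ d ∧
      ({v, a, b} : Finset V) ∈ E ∧ ({v, b, c} : Finset V) ∈ E ∧
      ({v, c, d} : Finset V) ∈ E ∧
      ({v, a, c} : Finset V) ∉ E ∧ ({v, a, d} : Finset V) ∉ E ∧
      ({v, b, d} : Finset V) ∉ E := by
  rintro ⟨a, b, c, d, hav, -, -, hdv, -, hac, had, -, hbd, -, hab, hbc, hcd, hnac, hnad, hnbd⟩
  have hsized : (E : Set (Finset V)).Sized 3 := fun e he => hE e he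
  rw [← linkGraph_adj hsized] at hab hbc hcd hnac hnad hnbd
  have habc : {a, b, c} ∈ E := hfree.mem_of_adj_of_adj_of_not_adj hsized hac hab hbc hnac
  have hbcd : {b, c, d} ∈ E := hfree.mem_of_adj_of_adj_of_not_adj hsized hbd hbc hcd hnbd
  obtain habd | hacd := hfree.mem_or_mem hsized had habc hbcd
  · exact (hfree.adj_or_adj_of_mem hsized hdv hab habd).elim hnad hnbd
  · rw [insert_comm, pair_comm a d] at hacd
    obtain hca | hda := hfree.adj_or_adj_of_mem hsized hav hcd hacd
    · exact hnac hca.symm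
    · exact hnad hda.symm
end

section
/- Let ε > 0, let H be a 3-uniform hypergraph, and let X, Y, Z be pairwise disjoint subsets of V(H) with |X| ≥ 2/ε. If d(X,X,Y) ≥ 1 − ε²/8 and d(X,X,Z) ≥ 1 − ε²/8, then either d(X,Y,Z) ≥ 1 − ε, or H contains at least (ε²/16)·|X|²·|Y|·|Z| induced copies of D₂. -/
open Finset

/-- `e(X,Y,Z)`: the number of edges with one vertex in each of `X`, `Y`, `Z`. -/
def eXYZ {V : Type} [DecidableEq V] (E : Finset (Finset V)) (X Y Z : Finset V) : ℕ :=
  (E.filter (fun e => (e ∩ X).card = 1 ∧ (e ∩ Y).card = 1 ∧ (e ∩ Z).card = 1)).card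

/-- `d(X,Y,Z) = e(X,Y,Z) / (|X||Y||Z|)`. -/
noncomputable def dXYZ {V : Type} [DecidableEq V] (E : Finset (Finset V))
    (X Y Z : Finset V) : ℝ :=
  (eXYZ E X Y Z : ℝ) / ((X.card : ℝ) * (Y.card : ℝ) * (Z.card : ℝ))

/-- `e(X,X,Y)`: the number of edges with two vertices in `X` and one vertex in `Y`. -/
def eXXY {V : Type} [DecidableEq V] (E : Finset (Finset V)) (X Y : Finset V) : ℕ :=
  (E.filter (fun e => (e ∩ X).card = 2 ∧ (e ∩ Y).card = 1)).card

/-- `d(X,X,Y) = e(X,X,Y) / (C(|X|,2)·|Y|)`. -/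
noncomputable def dXXY {V : Type} [DecidableEq V] (E : Finset (Finset V))
    (X Y : Finset V) : ℝ :=
  (eXXY E X Y : ℝ) / ((X.card.choose 2 : ℝ) * (Y.card : ℝ))

/-!
Call `x` a non-neighbour of `(y, z)` if `{x, y, z}` is not an edge. If `d(X,Y,Z) < 1 - ε`, then an
average `(y, z) ∈ Y × Z` has more than `ε|X|` non-neighbours in `X`, so by convexity there are at
least `(ε|X| choose 2)|Y||Z|` choices of `(y, z)` and a pair `p ⊆ X` of its non-neighbours. The
density of `(X,X,Y)` and `(X,X,Z)` makes `p ∪ {y}` and `p ∪ {z}` edges for most of these choices,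
and then `p ∪ {y, z}` spans exactly those two edges.
-/

theorem tangent_le_choose_two (a : ℕ) (t : ℝ) :
    t * (t - 1) / 2 + (a - t) * ((2 * t - 1) / 2) ≤ (a.choose 2 : ℝ) := by
  rw [Nat.cast_choose_two]
  linarith [sq_nonneg ((a : ℝ) - t)]

theorem card_mul_le_sum_choose_two {ι : Type*} {s : Finset ι} {f : ι → ℕ} {t : ℝ} (ht : 0 ≤ t)
    (h : #s * t ≤ ∑ i ∈ s, (f i : ℝ)) :
    #s * (t * (t - 1) / 2) ≤ ∑ i ∈ s, ((f i).choose 2 : ℝ) := by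
  have hs : (0 : ℝ) ≤ #s := Nat.cast_nonneg _
  rcases le_total t (1 / 2) with ht' | ht'
  · have hneg : t * (t - 1) / 2 ≤ 0 := by nlinarith
    exact (mul_nonpos_of_nonneg_of_nonpos hs hneg).trans (sum_nonneg fun _ _ ↦ Nat.cast_nonneg _)
  · calc (#s : ℝ) * (t * (t - 1) / 2)
        ≤ #s * (t * (t - 1) / 2) + (∑ i ∈ s, (f i : ℝ) - #s * t) * ((2 * t - 1) / 2) :=
          le_add_of_nonneg_right (mul_nonneg (by linarith) (by linarith))
      _ = ∑ i ∈ s, (t * (t - 1) / 2 + (f i - t) * ((2 * t - 1) / 2)) := by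
          simp only [sum_add_distrib, ← sum_mul, sum_sub_distrib, sum_const, nsmul_eq_mul]
      _ ≤ ∑ i ∈ s, ((f i).choose 2 : ℝ) := sum_le_sum fun i _ ↦ tangent_le_choose_two (f i) t

section Facets

variable {V : Type*} [DecidableEq V] {E : Finset (Finset V)}

theorem card_filter_subset_eq_card_filter_erase {k : ℕ} (hE : ∀ e ∈ E, #e = k) {S : Finset V}
    (hS : #S = k + 1) : #{e ∈ E | e ⊆ S} = #{v ∈ S | S.erase v ∈ E} := by
  have himage : {e ∈ E | e ⊆ S} = image S.erase {v ∈ S | S.erase v ∈ E} := by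
    ext e
    have hcovBy (he : e ∈ E) : e ⊆ S ↔ ∃ v ∈ S, S.erase v = e := by
      rw [← covBy_iff_exists_erase, covBy_iff_card_sdiff_eq_one, iff_self_and]
      intro heS
      rw [card_sdiff_of_subset heS, hS, hE e he, Nat.add_sub_cancel_left]
    simp only [mem_filter, mem_image]
    grind
  rw [himage, card_image_of_injOn]
  exact (erase_injOn S).mono (filter_subset _ _)

theorem card_union_pair {p : Finset V} {y z : V} (hy : y ∉ p) (hz : z ∉ p) (hyz : y ≠ z) :
    #(p ∪ {y, z}) = #p + 2 := by
  rw [card_union_of_disjoint (by simp [hy, hz]), card_pair hyz]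

theorem card_filter_subset_union_pair (hE : ∀ e ∈ E, #e = 3) {p : Finset V} (hp : #p = 2)
    {y z : V} (hy : y ∉ p) (hz : z ∉ p) (hyz : y ≠ z) (hpy : insert y p ∈ E)
    (hpz : insert z p ∈ E) (hxyz : ∀ x ∈ p, {x, y, z} ∉ E) :
    #{e ∈ E | e ⊆ p ∪ {y, z}} = 2 := by
  have hfacets : {v ∈ p ∪ {y, z} | (p ∪ {y, z}).erase v ∈ E} = {y, z} := by
    obtain ⟨a, b, hab, rfl⟩ := card_eq_two.mp hp
    have hface_y : ({a, b} ∪ {y, z} : Finset V).erase y = insert z {a, b} := by grind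
    have hface_z : ({a, b} ∪ {y, z} : Finset V).erase z = insert y {a, b} := by grind
    have hface_a : ({a, b} ∪ {y, z} : Finset V).erase a = {b, y, z} := by grind
    have hface_b : ({a, b} ∪ {y, z} : Finset V).erase b = {a, y, z} := by grind
    grind
  rw [card_filter_subset_eq_card_filter_erase hE (by rw [card_union_pair hy hz hyz, hp]),
    hfacets, card_pair hyz]

end Facets

section Transversals

variable {V : Type*} [DecidableEq V] {X Y Z p : Finset V} {y z : V}

theorem union_pair_inter_left (hXY : Disjoint X Y) (hXZ : Disjoint X Z) (hp : p ⊆ X) (hy : y ∈ Y)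
    (hz : z ∈ Z) : (p ∪ {y, z}) ∩ X = p := by
  grind [disjoint_left]

theorem union_pair_inter_middle (hXY : Disjoint X Y) (hYZ : Disjoint Y Z) (hp : p ⊆ X)
    (hy : y ∈ Y) (hz : z ∈ Z) : (p ∪ {y, z}) ∩ Y = {y} := by
  grind [disjoint_left]

theorem union_pair_inter_right (hXZ : Disjoint X Z) (hYZ : Disjoint Y Z) (hp : p ⊆ X)
    (hy : y ∈ Y) (hz : z ∈ Z) : (p ∪ {y, z}) ∩ Z = {z} := by
  grind [disjoint_left]

theorem sum_card_le_card_of_union_pair_mem (hXY : Disjoint X Y) (hXZ : Disjoint X Z)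
    (hYZ : Disjoint Y Z) {F : V × V → Finset (Finset V)} {T : Finset (Finset V)}
    (hFX : ∀ w ∈ Y ×ˢ Z, ∀ p ∈ F w, p ⊆ X)
    (hFT : ∀ w ∈ Y ×ˢ Z, ∀ p ∈ F w, p ∪ {w.1, w.2} ∈ T) :
    ∑ w ∈ Y ×ˢ Z, #(F w) ≤ #T := by
  rw [← card_sigma]
  apply card_le_card_of_injOn fun q ↦ q.2 ∪ {q.1.1, q.1.2}
  · rintro ⟨w, p⟩ hq
    obtain ⟨hw, hp⟩ := mem_sigma.mp hq
    exact hFT w hw p hp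
  · rintro ⟨⟨y, z⟩, p⟩ hq ⟨⟨y', z'⟩, p'⟩ hq' (heq : p ∪ {y, z} = p' ∪ {y', z'})
    obtain ⟨hw, hp⟩ := mem_sigma.mp hq
    obtain ⟨hw', hp'⟩ := mem_sigma.mp hq'
    obtain ⟨hy, hz⟩ := mem_product.mp hw
    obtain ⟨hy', hz'⟩ := mem_product.mp hw'
    have hpX := hFX _ hw p hp
    have hpX' := hFX _ hw' p' hp'
    have hpp : p = p' := by
      rw [← union_pair_inter_left hXY hXZ hpX hy hz, heq,
        union_pair_inter_left hXY hXZ hpX' hy' hz']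
    have hyy : y = y' := by
      rw [← singleton_inj, ← union_pair_inter_middle hXY hYZ hpX hy hz, heq,
        union_pair_inter_middle hXY hYZ hpX' hy' hz']
    have hzz : z = z' := by
      rw [← singleton_inj, ← union_pair_inter_right hXZ hYZ hpX hy hz, heq,
        union_pair_inter_right hXZ hYZ hpX' hy' hz']
    rw [hpp, hyy, hzz]

end Transversals

section Counting

variable {V : Type*} [DecidableEq V]

/-- The vertices of `X` that do not form an edge together with `y` and `z`: the complement in `X`
of the neighbourhood of the pair `{y, z}`. -/
def nonNeighbors (E : Finset (Finset V)) (X : Finset V) (y z : V) : Finset V :=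
  {x ∈ X | {x, y, z} ∉ E}

/-- The pairs in `X` that do not form an edge together with `y`: the complement in `X` of the link
graph of `y`, with its edges encoded as two-element sets. -/
def nonLinkPairs (E : Finset (Finset V)) (X : Finset V) (y : V) : Finset (Finset V) :=
  {p ∈ X.powersetCard 2 | insert y p ∉ E}

/-- The pairs `p` in `X` for which `p ∪ {y, z}` is an induced `D₂` whose edges are `p ∪ {y}` and
`p ∪ {z}` (when `p` avoids `y ≠ z` and all edges have size three). -/
def d2Pairs (E : Finset (Finset V)) (X : Finset V) (y z : V) : Finset (Finset V) :=
  {p ∈ (nonNeighbors E X y z).powersetCard 2 | insert y p ∈ E ∧ insert z p ∈ E}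

theorem choose_two_card_nonNeighbors_le (E : Finset (Finset V)) (X : Finset V) (y z : V) :
    (#(nonNeighbors E X y z)).choose 2 ≤
      #(d2Pairs E X y z) + #(nonLinkPairs E X y) + #(nonLinkPairs E X z) := by
  have hcover : (nonNeighbors E X y z).powersetCard 2 ⊆
      d2Pairs E X y z ∪ nonLinkPairs E X y ∪ nonLinkPairs E X z := by
    intro p hp
    have hpX : p ∈ X.powersetCard 2 := powersetCard_mono (filter_subset _ _) hp
    simp only [d2Pairs, nonLinkPairs, mem_union, mem_filter]
    tauto
  calc (#(nonNeighbors E X y z)).choose 2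
      = #((nonNeighbors E X y z).powersetCard 2) := (card_powersetCard _ _).symm
    _ ≤ #(d2Pairs E X y z ∪ nonLinkPairs E X y ∪ nonLinkPairs E X z) := card_le_card hcover
    _ ≤ #(d2Pairs E X y z ∪ nonLinkPairs E X y) + #(nonLinkPairs E X z) := card_union_le _ _
    _ ≤ _ := Nat.add_le_add_right (card_union_le _ _) _

end Counting

section Densities

variable {V : Type} [DecidableEq V] {E : Finset (Finset V)} {X Y Z : Finset V}

theorem sum_card_d2Pairs_le_inducedD2Count [Fintype V] (hE : ∀ e ∈ E, #e = 3)
    (hXY : Disjoint X Y) (hXZ : Disjoint X Z) (hYZ : Disjoint Y Z) :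
    ∑ w ∈ Y ×ˢ Z, #(d2Pairs E X w.1 w.2) ≤ inducedD2Count E := by
  have hsub : ∀ {y z p}, p ∈ d2Pairs E X y z → p ⊆ nonNeighbors E X y z := fun hp ↦
    (mem_powersetCard.mp (mem_filter.mp hp).1).1
  have hsubX : ∀ {y z p}, p ∈ d2Pairs E X y z → p ⊆ X := fun hp ↦
    (hsub hp).trans (filter_subset _ _)
  refine sum_card_le_card_of_union_pair_mem hXY hXZ hYZ (fun _ _ _ ↦ hsubX) ?_
  rintro ⟨y, z⟩ hw p hp
  obtain ⟨hy, hz⟩ := mem_product.mp hw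
  have hyp : y ∉ p := fun h ↦ disjoint_left.mp hXY (hsubX hp h) hy
  have hzp : z ∉ p := fun h ↦ disjoint_left.mp hXZ (hsubX hp h) hz
  have hyz : y ≠ z := disjoint_iff_ne.mp hYZ y hy z hz
  have hxyz : ∀ x ∈ p, {x, y, z} ∉ E := fun x hx ↦ (mem_filter.mp (hsub hp hx)).2
  obtain ⟨hp2, hpy, hpz⟩ := mem_filter.mp hp
  have hcard : #p = 2 := (mem_powersetCard.mp hp2).2
  refine mem_filter.mpr ⟨mem_powersetCard_univ.mpr ?_,
    card_filter_subset_union_pair hE hcard hyp hzp hyz hpy hpz hxyz⟩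
  rw [card_union_pair hyp hzp hyz, hcard]

theorem sum_choose_two_card_nonNeighbors_le [Fintype V] (hE : ∀ e ∈ E, #e = 3)
    (hXY : Disjoint X Y) (hXZ : Disjoint X Z) (hYZ : Disjoint Y Z) :
    ∑ w ∈ Y ×ˢ Z, (#(nonNeighbors E X w.1 w.2)).choose 2 ≤
      inducedD2Count E + #Z * ∑ y ∈ Y, #(nonLinkPairs E X y) +
        #Y * ∑ z ∈ Z, #(nonLinkPairs E X z) := by
  calc ∑ w ∈ Y ×ˢ Z, (#(nonNeighbors E X w.1 w.2)).choose 2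
      ≤ ∑ w ∈ Y ×ˢ Z, (#(d2Pairs E X w.1 w.2) + #(nonLinkPairs E X w.1) +
          #(nonLinkPairs E X w.2)) :=
        sum_le_sum fun w _ ↦ choose_two_card_nonNeighbors_le E X w.1 w.2
    _ = ∑ w ∈ Y ×ˢ Z, #(d2Pairs E X w.1 w.2) + #Z * ∑ y ∈ Y, #(nonLinkPairs E X y) +
          #Y * ∑ z ∈ Z, #(nonLinkPairs E X z) := by
        simp only [sum_add_distrib, sum_product, sum_const, smul_eq_mul, mul_sum]
    _ ≤ _ := by gcongr; exact sum_card_d2Pairs_le_inducedD2Count hE hXY hXZ hYZ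

theorem eXXY_le_sum_card_filter (hE : ∀ e ∈ E, #e = 3) (hXY : Disjoint X Y) :
    eXXY E X Y ≤ ∑ y ∈ Y, #{p ∈ X.powersetCard 2 | insert y p ∈ E} := by
  refine (card_le_card fun e he ↦ ?_).trans <| card_biUnion_le.trans <|
    sum_le_sum fun y _ ↦ card_image_le (f := insert y)
  obtain ⟨he, heX, heY⟩ := mem_filter.mp he
  obtain ⟨y, hy⟩ := card_eq_one.mp heY
  obtain ⟨hye, hyY⟩ := mem_inter.mp (hy ▸ mem_singleton_self y)
  have hyX : y ∉ e ∩ X := fun h ↦ disjoint_right.mp hXY hyY (mem_inter.mp h).2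
  have hins : insert y (e ∩ X) = e :=
    eq_of_subset_of_card_le (insert_subset hye inter_subset_left)
      (by rw [card_insert_of_notMem hyX, heX, hE e he])
  refine mem_biUnion.mpr ⟨y, hyY, mem_image.mpr ⟨e ∩ X, mem_filter.mpr ⟨?_, ?_⟩, hins⟩⟩
  · exact mem_powersetCard.mpr ⟨inter_subset_right, heX⟩
  · rwa [hins]

theorem sum_card_filter_le_eXYZ (hXY : Disjoint X Y) (hXZ : Disjoint X Z) (hYZ : Disjoint Y Z) :
    ∑ w ∈ Y ×ˢ Z, #{x ∈ X | {x, w.1, w.2} ∈ E} ≤ eXYZ E X Y Z := by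
  let F (w : V × V) : Finset (Finset V) := image singleton {x ∈ X | {x, w.1, w.2} ∈ E}
  have hcard (w : V × V) : #(F w) = #{x ∈ X | {x, w.1, w.2} ∈ E} :=
    card_image_of_injective _ singleton_injective
  simp only [← hcard]
  refine sum_card_le_card_of_union_pair_mem hXY hXZ hYZ ?_ ?_
  · intro w _ p hp
    obtain ⟨x, hx, rfl⟩ := mem_image.mp hp
    exact singleton_subset_iff.mpr (mem_filter.mp hx).1
  · rintro ⟨y, z⟩ hw p hp
    obtain ⟨hy, hz⟩ := mem_product.mp hw
    obtain ⟨x, hx, rfl⟩ := mem_image.mp hp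
    obtain ⟨hxX, hxyz⟩ := mem_filter.mp hx
    have hsub : {x} ⊆ X := singleton_subset_iff.mpr hxX
    refine mem_filter.mpr ⟨hxyz, ?_⟩
    rw [union_pair_inter_left hXY hXZ hsub hy hz, union_pair_inter_middle hXY hYZ hsub hy hz,
      union_pair_inter_right hXZ hYZ hsub hy hz]
    simp only [card_singleton, and_self]

theorem sum_card_nonLinkPairs_le {δ : ℝ} (hE : ∀ e ∈ E, #e = 3) (hXY : Disjoint X Y)
    (h : 1 - δ ≤ dXXY E X Y) :
    ∑ y ∈ Y, (#(nonLinkPairs E X y) : ℝ) ≤ δ * ((#X).choose 2 * #Y) := by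
  have hsplit : ∑ y ∈ Y, #{p ∈ X.powersetCard 2 | insert y p ∈ E} +
      ∑ y ∈ Y, #(nonLinkPairs E X y) = (#X).choose 2 * #Y := by
    simp only [nonLinkPairs, ← sum_add_distrib, card_filter_add_card_filter_not,
      card_powersetCard, sum_const, smul_eq_mul, mul_comm]
  have hcount : (eXXY E X Y : ℝ) + ∑ y ∈ Y, (#(nonLinkPairs E X y) : ℝ) ≤
      (#X).choose 2 * #Y := by
    exact_mod_cast hsplit ▸ Nat.add_le_add_right (eXXY_le_sum_card_filter hE hXY) _
  have hdense : (1 - δ) * ((#X).choose 2 * #Y) ≤ eXXY E X Y :=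
    mul_le_of_le_div₀ (by positivity) (by positivity) h
  linarith

theorem le_sum_card_nonNeighbors {ε : ℝ} (hXY : Disjoint X Y) (hXZ : Disjoint X Z)
    (hYZ : Disjoint Y Z) (h : dXYZ E X Y Z < 1 - ε) :
    ε * (#X * #Y * #Z) ≤ ∑ w ∈ Y ×ˢ Z, (#(nonNeighbors E X w.1 w.2) : ℝ) := by
  have hsplit : ∑ w ∈ Y ×ˢ Z, #{x ∈ X | {x, w.1, w.2} ∈ E} +
      ∑ w ∈ Y ×ˢ Z, #(nonNeighbors E X w.1 w.2) = #X * #Y * #Z := by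
    simp only [nonNeighbors, ← sum_add_distrib, card_filter_add_card_filter_not, sum_const,
      card_product, smul_eq_mul]
    ring
  have hcount : (#X * #Y * #Z : ℝ) ≤
      eXYZ E X Y Z + ∑ w ∈ Y ×ˢ Z, (#(nonNeighbors E X w.1 w.2) : ℝ) := by
    exact_mod_cast hsplit ▸ Nat.add_le_add_right (sum_card_filter_le_eXYZ hXY hXZ hYZ) _
  rcases (by positivity : (0 : ℝ) ≤ #X * #Y * #Z).eq_or_lt with hzero | hpos
  · rw [← hzero, mul_zero]
    positivity
  · have hsparse := (div_lt_iff₀ hpos).mp h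
    linarith

end Densities

theorem pairs_to_triple_dense_general {V : Type} [Fintype V] [DecidableEq V]
    (E : Finset (Finset V)) (hE : ∀ e ∈ E, #e = 3) {ε δ₁ δ₂ : ℝ} (hε : 0 ≤ ε)
    (X Y Z : Finset V) (hXY : Disjoint X Y) (hXZ : Disjoint X Z) (hYZ : Disjoint Y Z)
    (h1 : 1 - δ₁ ≤ dXXY E X Y) (h2 : 1 - δ₂ ≤ dXXY E X Z) :
    1 - ε ≤ dXYZ E X Y Z ∨
      (ε * #X * (ε * #X - 1) / 2 - (δ₁ + δ₂) * (#X).choose 2) * #Y * #Z ≤ inducedD2Count E := by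
  refine or_iff_not_imp_left.mpr fun hd ↦ ?_
  have hmean : #(Y ×ˢ Z) * (ε * #X) ≤ ∑ w ∈ Y ×ˢ Z, (#(nonNeighbors E X w.1 w.2) : ℝ) := by
    refine le_of_eq_of_le ?_ (le_sum_card_nonNeighbors hXY hXZ hYZ (not_le.mp hd))
    rw [card_product, Nat.cast_mul]
    ring
  have hconvex := card_mul_le_sum_choose_two (by positivity) hmean
  have hcount : ∑ w ∈ Y ×ˢ Z, ((#(nonNeighbors E X w.1 w.2)).choose 2 : ℝ) ≤
      inducedD2Count E + #Z * ∑ y ∈ Y, (#(nonLinkPairs E X y) : ℝ) +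
        #Y * ∑ z ∈ Z, (#(nonLinkPairs E X z) : ℝ) := by
    exact_mod_cast sum_choose_two_card_nonNeighbors_le hE hXY hXZ hYZ
  have hY := mul_le_mul_of_nonneg_left (sum_card_nonLinkPairs_le hE hXY h1) (Nat.cast_nonneg #Z)
  have hZ := mul_le_mul_of_nonneg_left (sum_card_nonLinkPairs_le hE hXZ h2) (Nat.cast_nonneg #Y)
  rw [card_product, Nat.cast_mul] at hconvex
  linarith

theorem sq_div_sixteen_mul_sq_le {ε : ℝ} {n : ℕ} (h : 2 ≤ ε * n) :
    ε ^ 2 / 16 * n ^ 2 ≤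
      ε * n * (ε * n - 1) / 2 - (ε ^ 2 / 8 + ε ^ 2 / 8) * (n.choose 2 : ℝ) := by
  have hmain : (ε * n) ^ 2 / 4 ≤ ε * n * (ε * n - 1) / 2 := by nlinarith
  have hchoose : (n.choose 2 : ℝ) ≤ n ^ 2 / 2 := Nat.choose_le_pow_div 2 n
  have herror := mul_le_mul_of_nonneg_left hchoose (sq_nonneg ε)
  linarith [sq_nonneg (ε * n)]

theorem pairs_to_triple_dense {V : Type} [Fintype V] [DecidableEq V]
    (E : Finset (Finset V)) (hE : ∀ e ∈ E, e.card = 3)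
    (ε : ℝ) (hε : 0 < ε) (X Y Z : Finset V)
    (hXY : Disjoint X Y) (hXZ : Disjoint X Z) (hYZ : Disjoint Y Z)
    (hX : (X.card : ℝ) ≥ 2 / ε)
    (h1 : dXXY E X Y ≥ 1 - ε ^ 2 / 8) (h2 : dXXY E X Z ≥ 1 - ε ^ 2 / 8) :
    dXYZ E X Y Z ≥ 1 - ε ∨
    (inducedD2Count E : ℝ) ≥
      ε ^ 2 / 16 * (X.card : ℝ) ^ 2 * (Y.card : ℝ) * (Z.card : ℝ) := by
  refine (pairs_to_triple_dense_general E hE hε.le X Y Z hXY hXZ hYZ h1 h2).imp_right (le_trans ?_)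
  gcongr
  exact sq_div_sixteen_mul_sq_le ((div_le_iff₀' hε).mp hX)
end
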